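/- arXiv:1411.0363 — 8 statements merged into one kernel-verified Lean document; each statement's English description precedes it below -/
import Mathlib

section
/- Let U ⊆ ℂⁿ be a domain and f a holomorphic function on U that is essentially unbounded on ∂U. Then U is a domain of holomorphy. -/
open Set Metric Filter Topology

/-- A function `f`, holomorphic on the open set `U ⊆ ℂⁿ`, extends holomorphically to a point
`a`: there is a connected open neighbourhood `V` of `a` and a holomorphic `g` on `V` agreeing
with `f` on a nonempty open subset of `U ∩ V`. -/
def ExtendsHolomorphicallyTo {n : ℕ} (U : Set (Fin n → ℂ)) (f : (Fin n → ℂ) → ℂ)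
    (a : Fin n → ℂ) : Prop :=
  ∃ V : Set (Fin n → ℂ), IsOpen V ∧ IsConnected V ∧ a ∈ V ∧
    ∃ g : (Fin n → ℂ) → ℂ, DifferentiableOn ℂ g V ∧
      ∃ W : Set (Fin n → ℂ), IsOpen W ∧ W.Nonempty ∧ W ⊆ U ∩ V ∧ Set.EqOn f g W

/-- `U ⊆ ℂⁿ` is a domain of holomorphy: it is a domain (connected open set) and there exists a
holomorphic function on `U` which does not extend holomorphically to any point of `Uᶜ`. -/
def IsDomainOfHolomorphy {n : ℕ} (U : Set (Fin n → ℂ)) : Prop :=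
  IsOpen U ∧ IsConnected U ∧
    ∃ f : (Fin n → ℂ) → ℂ, DifferentiableOn ℂ f U ∧
      ∀ a ∈ Uᶜ, ¬ ExtendsHolomorphicallyTo U f a

/-- Identity theorem on a convex open set, by restriction to complex lines. -/
lemma ball_identity {n : ℕ} (B : Set (Fin n → ℂ)) (hBo : IsOpen B) (hBc : Convex ℝ B)
    (h : (Fin n → ℂ) → ℂ) (hh : DifferentiableOn ℂ h B) (s : Fin n → ℂ) (hs : s ∈ B)
    (hz : ∀ᶠ y in 𝓝 s, h y = 0) : ∀ q ∈ B, h q = 0 := by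
  intro q hq
  let L : ℂ → (Fin n → ℂ) := fun t => s + t • (q - s)
  have hL : Differentiable ℂ L := by
    intro t
    exact ((differentiableAt_id).smul_const (q - s)).const_add s
  have hD : IsOpen (L ⁻¹' B) := hBo.preimage hL.continuous
  have hDc : Convex ℝ (L ⁻¹' B) := by
    intro x hx y hy a b ha hb hab
    have h1 := hBc hx hy ha hb hab
    have h2 : L (a • x + b • y) = a • L x + b • L y := by
      have hab' : (a : ℂ) + b = 1 := by exact_mod_cast hab
      ext i
      simp only [L, Pi.add_apply, Pi.smul_apply, Pi.sub_apply, smul_eq_mul, Complex.real_smul]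
      linear_combination (-s i) * hab'
    simpa only [mem_preimage, h2] using h1
  have hd : DifferentiableOn ℂ (h ∘ L) (L ⁻¹' B) :=
    hh.comp hL.differentiableOn (mapsTo_preimage _ _)
  have han : AnalyticOnNhd ℂ (h ∘ L) (L ⁻¹' B) := hd.analyticOnNhd hD
  have hL0 : L 0 = s := by simp [L]
  have hL1 : L 1 = q := by simp [L]
  have h0 : (0 : ℂ) ∈ L ⁻¹' B := by simpa [hL0] using hs
  have hev : (h ∘ L) =ᶠ[𝓝 0] 0 := by
    have : Tendsto L (𝓝 0) (𝓝 s) := by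
      have := hL.continuous.tendsto 0
      rwa [hL0] at this
    exact this.eventually hz
  have := han.eqOn_zero_of_preconnected_of_eventuallyEq_zero hDc.isPreconnected h0 hev
    (show (1 : ℂ) ∈ L ⁻¹' B by simpa [hL1] using hq)
  simpa [hL1] using this

/-- Identity theorem on a connected open subset of `ℂⁿ`. -/
lemma conn_identity {n : ℕ} (C : Set (Fin n → ℂ)) (hCo : IsOpen C) (hCc : IsPreconnected C)
    (h : (Fin n → ℂ) → ℂ) (hh : DifferentiableOn ℂ h C) (s : Fin n → ℂ) (hs : s ∈ C)
    (hz : ∀ᶠ y in 𝓝 s, h y = 0) : ∀ q ∈ C, h q = 0 := by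
  let S : Set (Fin n → ℂ) := {p | ∀ᶠ y in 𝓝 p, h y = 0}
  have hSo : IsOpen S := isOpen_setOf_eventually_nhds
  have hsub : C ⊆ S := by
    refine hCc.subset_of_closure_inter_subset hSo ⟨s, hs, hz⟩ ?_
    rintro p ⟨hp, hpC⟩
    obtain ⟨r, hr, hB⟩ := Metric.isOpen_iff.1 hCo p hpC
    obtain ⟨y, hy, hyS⟩ := mem_closure_iff.1 hp (ball p r) isOpen_ball (mem_ball_self hr)
    have := ball_identity (ball p r) isOpen_ball (convex_ball p r) h (hh.mono hB) y hy hyS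
    filter_upwards [ball_mem_nhds p hr] with z hz using this z hz
  intro q hq
  exact (hsub hq).self_of_nhds

/-- If `f` is holomorphic on the domain `U` and essentially unbounded on `∂U` (for every domain
`V` meeting `∂U` and every connected component `W` of `U ∩ V` there is a sequence in `W` on which
`|f| → ∞`), then `U` is a domain of holomorphy. -/
theorem essentially_unbounded_isDomainOfHolomorphy {n : ℕ} (U : Set (Fin n → ℂ))
    (hUo : IsOpen U) (hUc : IsConnected U)
    (f : (Fin n → ℂ) → ℂ) (hf : DifferentiableOn ℂ f U)
    (hess : ∀ V : Set (Fin n → ℂ), IsOpen V → IsConnected V → (V ∩ frontier U).Nonempty →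
      ∀ x ∈ U ∩ V, ∃ z : ℕ → (Fin n → ℂ),
        (∀ j, z j ∈ connectedComponentIn (U ∩ V) x) ∧
          Tendsto (fun j => ‖f (z j)‖) atTop atTop) :
    IsDomainOfHolomorphy U := by
  refine ⟨hUo, hUc, f, hf, ?_⟩
  rintro a ha ⟨V, hVo, hVc, haV, g, hg, W, hWo, ⟨w, hw⟩, hWs, hfg⟩
  have hUV : IsOpen (U ∩ V) := hUo.inter hVo
  set C := connectedComponentIn (U ∩ V) w with hC
  have hCo : IsOpen C := hUV.connectedComponentIn
  have hCs : C ⊆ U ∩ V := connectedComponentIn_subset _ _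
  have hwC : w ∈ C := mem_connectedComponentIn (hWs hw)
  have hid : ∀ q ∈ C, f q - g q = 0 := by
    refine conn_identity C hCo isPreconnected_connectedComponentIn (fun q => f q - g q)
      ((hf.mono fun x hx => (hCs hx).1).sub (hg.mono fun x hx => (hCs hx).2)) w hwC ?_
    filter_upwards [hWo.mem_nhds hw] with y hy
    rw [hfg hy, sub_self]
  obtain ⟨b, hbcl, hbV, hbC⟩ : ∃ b, b ∈ closure C ∧ b ∈ V ∧ b ∉ C := by
    by_contra! hcon
    have : V ⊆ C := hVc.isPreconnected.subset_of_closure_inter_subset hCo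
      ⟨w, (hWs hw).2, hwC⟩ (fun x hx => hcon x hx.1 hx.2)
    exact ha (hCs (this haV)).1
  have hbU : b ∉ U := by
    intro hbU
    have hbUV : b ∈ U ∩ V := ⟨hbU, hbV⟩
    obtain ⟨y, hy, hyC⟩ := mem_closure_iff.1 hbcl _ (hUV.connectedComponentIn (x := b))
      (mem_connectedComponentIn hbUV)
    have h1 := connectedComponentIn_eq hy
    have h2 := connectedComponentIn_eq hyC
    exact hbC (by rw [hC, h2, ← h1]; exact mem_connectedComponentIn hbUV)
  have hbF : b ∈ frontier U := by
    rw [hUo.frontier_eq]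
    exact ⟨closure_mono (fun x hx => (hCs hx).1) hbcl, hbU⟩
  have hgc : ContinuousAt g b := hg.continuousOn.continuousAt (hVo.mem_nhds hbV)
  have hbd : ∀ᶠ y in 𝓝 b, ‖g y‖ < ‖g b‖ + 1 :=
    hgc.norm.eventually_lt continuousAt_const (by simp)
  obtain ⟨r, hr, hB⟩ := Metric.mem_nhds_iff.1 (inter_mem hbd (hVo.mem_nhds hbV))
  obtain ⟨x, hxB, hxC⟩ := mem_closure_iff.1 hbcl (ball b r) isOpen_ball (mem_ball_self hr)
  obtain ⟨z, hz, hzt⟩ := hess (ball b r) isOpen_ball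
    ((convex_ball b r).isConnected ⟨b, mem_ball_self hr⟩) ⟨b, mem_ball_self hr, hbF⟩ x
    ⟨(hCs hxC).1, hxB⟩
  obtain ⟨j, hj⟩ := (hzt.eventually (eventually_gt_atTop (‖g b‖ + 1))).exists
  have hzB : z j ∈ ball b r := (connectedComponentIn_subset _ _ (hz j)).2
  have hzC : z j ∈ C := by
    rw [hC, connectedComponentIn_eq hxC]
    exact connectedComponentIn_mono x (inter_subset_inter_right U fun y hy => (hB hy).2) (hz j)
  have h3 : f (z j) = g (z j) := sub_eq_zero.1 (hid _ hzC)
  have h4 : ‖g (z j)‖ < ‖g b‖ + 1 := (hB hzB).1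
  rw [h3] at hj
  exact lt_asymm hj h4
end

section
/- Let U ⊆ ℂⁿ be a domain and suppose that for each boundary point a ∈ ∂U there is a holomorphic function f_a on U tending to ∞ at a, i.e. for every sequence {z_j} ⊆ U with z_j → a one has |f_a(z_j)| → ∞. Then U is a domain of holomorphy. -/
open Set Metric Filter Topology

theorem boundary_aux {n : ℕ} {U V : Set (Fin n → ℂ)} (hU : IsOpen U) (hV : IsOpen V)
    (hVc : IsPreconnected V) {q a : Fin n → ℂ} (hq : q ∈ U ∩ V) (ha : a ∈ V) (haU : a ∉ U) :
    ∃ b ∈ V, b ∈ frontier U ∧ b ∈ closure (connectedComponentIn (U ∩ V) q) := by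
  by_contra hcon
  push Not at hcon
  have hsub : connectedComponentIn (U ∩ V) q ⊆ U ∩ V := connectedComponentIn_subset _ _
  have hVW : V ⊆ connectedComponentIn (U ∩ V) q := by
    refine hVc.subset_of_closure_inter_subset (hU.inter hV).connectedComponentIn
      ⟨q, hq.2, mem_connectedComponentIn hq⟩ ?_
    rintro x ⟨hx, hxV⟩
    by_cases hxU : x ∈ U
    · have hmem := mem_connectedComponentIn (x := x) (F := U ∩ V) ⟨hxU, hxV⟩
      have hop : IsOpen (connectedComponentIn (U ∩ V) x) := (hU.inter hV).connectedComponentIn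
      obtain ⟨y, hy1, hy2⟩ := mem_closure_iff.1 hx _ hop hmem
      rw [connectedComponentIn_eq hy2, ← connectedComponentIn_eq hy1]
      exact hmem
    · exfalso
      refine hcon x hxV ?_ hx
      rw [hU.frontier_eq]
      exact ⟨closure_mono (hsub.trans inter_subset_left) hx, hxU⟩
  exact haU (hsub (hVW ha)).1

theorem identity_aux {n : ℕ} {W : Set (Fin n → ℂ)} (hW : IsOpen W) (hWc : IsPreconnected W)
    {f : (Fin n → ℂ) → ℂ} (hf : DifferentiableOn ℂ f W) {z₀ : Fin n → ℂ} (h₀ : z₀ ∈ W)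
    (hz : f =ᶠ[𝓝 z₀] 0) : EqOn f 0 W := by
  let u := {x | f =ᶠ[𝓝 x] 0}
  suffices main : closure u ∩ W ⊆ u by
    have Uu : W ⊆ u :=
      hWc.subset_of_closure_inter_subset isOpen_setOfPred_eventually_nhds ⟨z₀, h₀, hz⟩ main
    intro z hz
    simpa using mem_of_mem_nhds (Uu hz)
  rintro x ⟨xu, xW⟩
  obtain ⟨r, hr, hrW⟩ := Metric.isOpen_iff.1 hW x xW
  obtain ⟨y, yu, hxy⟩ := Metric.mem_closure_iff.1 xu r hr
  have hyb : y ∈ ball x r := by rwa [mem_ball, dist_comm]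
  change f =ᶠ[𝓝 x] 0
  filter_upwards [ball_mem_nhds x hr] with z hzb
  let L : ℂ → (Fin n → ℂ) := fun t => y + t • (z - y)
  have hLd : Differentiable ℂ L := by fun_prop
  have hTo : IsOpen (L ⁻¹' ball x r) := isOpen_ball.preimage hLd.continuous
  have hTc : Convex ℝ (L ⁻¹' ball x r) := by
    intro s hs t ht a b ha hb hab
    have : L (a • s + b • t) = a • L s + b • L t := by
      have h1 : (a : ℂ) + b = 1 := by exact_mod_cast hab
      ext i
      simp only [L, Pi.add_apply, Pi.smul_apply, Pi.sub_apply, smul_eq_mul, Complex.real_smul]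
      linear_combination (-(y i)) * h1
    change L _ ∈ ball x r
    rw [this]
    exact convex_ball x r hs ht ha hb hab
  have hd : DifferentiableOn ℂ (f ∘ L) (L ⁻¹' ball x r) :=
    (hf.mono hrW).comp hLd.differentiableOn (fun t ht => ht)
  have hL0 : L 0 = y := by simp [L]
  have hL1 : L 1 = z := by simp [L]
  have hev : (f ∘ L) =ᶠ[𝓝 0] 0 := by
    have ht : Tendsto L (𝓝 0) (𝓝 y) := by
      have := hLd.continuous.tendsto 0
      rwa [hL0] at this
    exact ht.eventually yu
  have := (hd.analyticOnNhd hTo).eqOn_zero_of_preconnected_of_eventuallyEq_zero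
    hTc.isPreconnected (z₀ := 0) (by simpa [hL0] using hyb) hev
  have h1 := this (x := 1) (by simpa [hL1] using hzb)
  simpa [hL1] using h1

theorem tsum_aux {n : ℕ} {U : Set (Fin n → ℂ)} (hU : IsOpen U)
    (h : ℕ → (Fin n → ℂ) → ℂ) (hd : ∀ k, DifferentiableOn ℂ (h k) U)
    (hb : ∀ C ⊆ U, IsCompact C → ∃ u : ℕ → ℝ, Summable u ∧ ∀ k, ∀ z ∈ C, ‖h k z‖ ≤ u k) :
    DifferentiableOn ℂ (fun z => ∑' k, h k z) U := by
  intro x hx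
  obtain ⟨ε, hε, hεU⟩ := Metric.nhds_basis_closedBall.mem_iff.1 (hU.mem_nhds hx)
  obtain ⟨u, hu, hbu⟩ := hb _ hεU (isCompact_closedBall x ε)
  have hr : 0 < ε / 2 := by positivity
  have hsub : ball x (ε / 2) ⊆ U := fun y hy => hεU (by
    rw [mem_ball] at hy; rw [mem_closedBall]; linarith)
  have hx0 : x ∈ ball x (ε / 2) := mem_ball_self hr
  refine (hasFDerivAt_tsum_of_isPreconnected (𝕜 := ℂ) (u := fun k => 2 * u k / (ε / 2))
    (f := h) (f' := fun k y => fderiv ℂ (h k) y) (x₀ := x)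
    ((hu.mul_left 2).div_const _) isOpen_ball (convex_ball x (ε / 2)).isPreconnected ?_ ?_ hx0 ?_
    hx0).differentiableAt.differentiableWithinAt
  · intro k y hy
    exact ((hd k).differentiableAt (hU.mem_nhds (hsub hy))).hasFDerivAt
  · intro k y hy
    have hyb : ball y (ε / 2) ⊆ closedBall x ε := by
      intro w hw
      rw [mem_ball] at hw hy
      rw [mem_closedBall]
      linarith [dist_triangle w y x]
    refine Complex.norm_fderiv_le_div_of_mapsTo_ball ((hd k).mono (hyb.trans hεU)) ?_ hr
    intro w hw
    rw [mem_closedBall, dist_eq_norm]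
    have h1 := hbu k w (hyb hw)
    have h2 := hbu k y (hyb (mem_ball_self hr))
    linarith [norm_sub_le (h k w) (h k y)]
  · exact Summable.of_norm_bounded hu (fun k => hbu k x (mem_closedBall_self hε.le))

theorem exhaust_aux {n : ℕ} {U : Set (Fin n → ℂ)} (hU : IsOpen U) :
    ∃ K : ℕ → Set (Fin n → ℂ), (∀ k, IsCompact (K k)) ∧ (∀ k, K k ⊆ U) ∧
      ∀ C ⊆ U, IsCompact C → ∃ N, ∀ k ≥ N, C ⊆ K k := by
  have : LocallyCompactSpace U := hU.locallyCompactSpace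
  let K := CompactExhaustion.choice U
  refine ⟨fun k => Subtype.val '' K k, fun k => (K.isCompact k).image continuous_subtype_val,
    fun k => by rintro _ ⟨x, -, rfl⟩; exact x.2, fun C hC hCc => ?_⟩
  have : IsCompact (Subtype.val ⁻¹' C : Set U) := by
    rw [Subtype.isCompact_iff, Subtype.image_preimage_coe, inter_eq_right.2 hC]
    exact hCc
  obtain ⟨N, hN⟩ := K.exists_superset_of_isCompact this
  exact ⟨N, fun k hk x hx => ⟨⟨x, hC hx⟩, K.subset hk (hN hx), rfl⟩⟩

theorem scale_aux {n : ℕ} {U : Set (Fin n → ℂ)} (hU : IsOpen U)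
    (f : ℕ → (Fin n → ℂ) → ℂ) (hd : ∀ k, DifferentiableOn ℂ (f k) U) :
    ∃ c : ℕ → ℝ, (∀ k, 0 < c k) ∧
      ∀ C ⊆ U, IsCompact C → ∃ u : ℕ → ℝ, Summable u ∧ ∀ k, ∀ z ∈ C, ‖(c k : ℂ) * f k z‖ ≤ u k := by
  obtain ⟨K, hKc, hKU, hK⟩ := exhaust_aux hU
  have hbd : ∀ k, ∀ C ⊆ U, IsCompact C → ∃ M : ℝ, ∀ z ∈ C, ‖f k z‖ ≤ M := fun k C hC hCc =>
    hCc.exists_bound_of_continuousOn ((hd k).continuousOn.mono hC)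
  choose M hM using fun k => hbd k (K k) (hKU k) (hKc k)
  have hc0 : ∀ k, 0 < (1 / 2 : ℝ) ^ k / (|M k| + 1) := fun k => by positivity
  refine ⟨fun k => (1 / 2 : ℝ) ^ k / (|M k| + 1), hc0, fun C hC hCc => ?_⟩
  obtain ⟨N, hN⟩ := hK C hC hCc
  choose B hB using fun k => hbd k C hC hCc
  refine ⟨fun k => if k < N then ((1 / 2 : ℝ) ^ k / (|M k| + 1)) * B k else (1 / 2) ^ k, ?_, ?_⟩
  · rw [← summable_nat_add_iff N]
    have : Summable fun k : ℕ => (1 / 2 : ℝ) ^ (k + N) :=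
      (summable_nat_add_iff N).2 summable_geometric_two
    simpa using this
  · intro k z hz
    rw [norm_mul, Complex.norm_real, Real.norm_of_nonneg (hc0 k).le]
    beta_reduce
    split_ifs with hk
    · exact mul_le_mul_of_nonneg_left (hB k z hz) (hc0 k).le
    · have h1 := hM k z (hN k (not_lt.1 hk) hz)
      have h2 : ‖f k z‖ ≤ |M k| + 1 := by linarith [le_abs_self (M k)]
      rw [div_mul_eq_mul_div, div_le_iff₀ (by positivity)]
      exact mul_le_mul_of_nonneg_left h2 (by positivity)

theorem baire_aux {n : ℕ} {U : Set (Fin n → ℂ)} (hU : IsOpen U)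
    (S : ℕ → Set (Fin n → ℂ)) (hS : ∀ k, S k ⊆ U) :
    ∃ F : (Fin n → ℂ) → ℂ, DifferentiableOn ℂ F U ∧ ∀ k,
      (∃ f : (Fin n → ℂ) → ℂ, DifferentiableOn ℂ f U ∧ ¬ ∃ M : ℝ, ∀ z ∈ S k, ‖f z‖ ≤ M) →
      ¬ ∃ M : ℝ, ∀ z ∈ S k, ‖F z‖ ≤ M := by
  have hex : ∀ k, ∃ f : (Fin n → ℂ) → ℂ, DifferentiableOn ℂ f U ∧
      ((∃ f : (Fin n → ℂ) → ℂ, DifferentiableOn ℂ f U ∧ ¬ ∃ M : ℝ, ∀ z ∈ S k, ‖f z‖ ≤ M) →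
        ¬ ∃ M : ℝ, ∀ z ∈ S k, ‖f z‖ ≤ M) := by
    intro k
    by_cases hk : ∃ f : (Fin n → ℂ) → ℂ, DifferentiableOn ℂ f U ∧ ¬ ∃ M : ℝ, ∀ z ∈ S k, ‖f z‖ ≤ M
    · obtain ⟨f, h1, h2⟩ := hk
      exact ⟨f, h1, fun _ => h2⟩
    · exact ⟨0, differentiableOn_const 0, fun h => absurd h hk⟩
  choose f hfd hfu using hex
  obtain ⟨c, hc, hcb⟩ := scale_aux hU f hfd
  let T : (ℕ → ℝ) → ℕ → (Fin n → ℂ) → ℂ := fun t k z => (Real.arctan (t k) : ℂ) * ((c k : ℂ) * f k z)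
  have hT : ∀ t k z, ‖T t k z‖ ≤ 2 * ‖(c k : ℂ) * f k z‖ := by
    intro t k z
    simp only [T]
    rw [norm_mul]
    refine mul_le_mul_of_nonneg_right ?_ (norm_nonneg _)
    rw [Complex.norm_real, Real.norm_eq_abs, abs_le]
    constructor <;> linarith [Real.neg_pi_div_two_lt_arctan (t k), Real.arctan_lt_pi_div_two (t k),
      Real.pi_le_four]
  have hTb : ∀ C ⊆ U, IsCompact C → ∃ u : ℕ → ℝ, Summable u ∧
      ∀ t k, ∀ z ∈ C, ‖T t k z‖ ≤ u k := by
    intro C hC hCc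
    obtain ⟨u, hu, hub⟩ := hcb C hC hCc
    exact ⟨fun k => 2 * u k, hu.mul_left 2, fun t k z hz =>
      (hT t k z).trans (by linarith [hub k z hz])⟩
  have hpt : ∀ z ∈ U, ∃ u : ℕ → ℝ, Summable u ∧ ∀ t k, ‖T t k z‖ ≤ u k := by
    intro z hz
    obtain ⟨u, hu, hub⟩ := hTb {z} (by simpa using hz) isCompact_singleton
    exact ⟨u, hu, fun t k => hub t k z rfl⟩
  let F : (ℕ → ℝ) → (Fin n → ℂ) → ℂ := fun t z => ∑' k, T t k z
  have hFd : ∀ t, DifferentiableOn ℂ (F t) U := by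
    intro t
    refine tsum_aux hU (T t) (fun k => ?_) ?_
    · exact ((hfd k).const_mul _).const_mul _
    · intro C hC hCc
      obtain ⟨u, hu, hub⟩ := hTb C hC hCc
      exact ⟨u, hu, hub t⟩
  have hFc : ∀ z ∈ U, Continuous fun t => F t z := by
    intro z hz
    obtain ⟨u, hu, hub⟩ := hpt z hz
    refine continuous_tsum (fun k => ?_) hu (fun k t => hub t k)
    simp only [T]
    have : Continuous fun t : ℕ → ℝ => Real.arctan (t k) :=
      Real.continuous_arctan.comp (continuous_apply k)
    exact (Complex.continuous_ofReal.comp this).mul continuous_const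
  by_contra hcon
  push Not at hcon
  let P : Set ℕ := {k | ∃ f : (Fin n → ℂ) → ℂ, DifferentiableOn ℂ f U ∧
    ¬ ∃ M : ℝ, ∀ z ∈ S k, ‖f z‖ ≤ M}
  let A : P × ℕ → Set (ℕ → ℝ) := fun p => {t | ∀ z ∈ S p.1, ‖F t z‖ ≤ p.2}
  have hAc : ∀ p, IsClosed (A p) := by
    intro p
    have : A p = ⋂ z ∈ S p.1, {t | ‖F t z‖ ≤ p.2} := by
      ext t; simp [A]
    rw [this]
    exact isClosed_biInter fun z hz =>
      isClosed_le (hFc z (hS _ hz)).norm continuous_const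
  have hAu : ⋃ p, A p = univ := by
    rw [eq_univ_iff_forall]
    intro t
    obtain ⟨k, ⟨g, hg1, hg2⟩, M, hM⟩ := hcon (F t) (hFd t)
    obtain ⟨N, hN⟩ := exists_nat_ge M
    refine mem_iUnion.2 ⟨(⟨k, g, hg1, ?_⟩, N), fun z hz => (hM z hz).trans hN⟩
    rintro ⟨M, hM⟩
    obtain ⟨z, hz, h⟩ := hg2 M
    exact absurd (hM z hz) (not_le.2 h)
  obtain ⟨⟨⟨k, hk⟩, N⟩, t, ht⟩ := nonempty_interior_of_iUnion_of_closed hAc hAu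
  have htend : Tendsto (fun s : ℝ => Function.update t k s) (𝓝 (t k)) (𝓝 t) := by
    have : Continuous fun s : ℝ => Function.update t k s := continuous_const.update k continuous_id
    simpa using this.tendsto (t k)
  have hev := htend.eventually (isOpen_interior.mem_nhds ht)
  obtain ⟨s, hs, hst⟩ := ((hev.filter_mono nhdsWithin_le_nhds).and
    (self_mem_nhdsWithin (a := t k) (s := {t k}ᶜ))).exists
  have h1 := interior_subset ht
  have h2 := interior_subset hs
  simp only [A] at h1 h2
  refine hfu k hk ⟨(2 * N) / (|Real.arctan s - Real.arctan (t k)| * c k), fun z hz => ?_⟩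
  have hne : 0 < |Real.arctan s - Real.arctan (t k)| :=
    abs_pos.2 (sub_ne_zero.2 fun h => hst (Real.arctan_injective h))
  rw [le_div_iff₀ (mul_pos hne (hc k))]
  have hzU := hS k hz
  obtain ⟨u, hu, hub⟩ := hpt z hzU
  have hsum : ∀ t, Summable fun k => T t k z := fun t => Summable.of_norm_bounded hu (hub t)
  have hdiff : F (Function.update t k s) z - F t z
      = ((Real.arctan s - Real.arctan (t k) : ℝ) : ℂ) * ((c k : ℂ) * f k z) := by
    simp only [F]
    rw [← (hsum _).tsum_sub (hsum t), tsum_eq_single k]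
    · simp [T]; ring
    · intro j hj
      simp [T, Function.update_of_ne hj]
  have h3 : ‖F (Function.update t k s) z - F t z‖ ≤ 2 * N := by
    have a1 := h1 z hz
    have a2 := h2 z hz
    linarith [norm_sub_le (F (Function.update t k s) z) (F t z)]
  rw [hdiff, norm_mul, norm_mul, Complex.norm_real, Complex.norm_real, Real.norm_eq_abs,
    Real.norm_of_nonneg (hc k).le] at h3
  linarith

/-- If for every boundary point `a` of the domain `U` there is a holomorphic function on `U`
tending to `∞` at `a`, then `U` is a domain of holomorphy. -/
theorem isDomainOfHolomorphy_of_boundary_blowup {n : ℕ} (U : Set (Fin n → ℂ))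
    (hUo : IsOpen U) (hUc : IsConnected U)
    (h : ∀ a ∈ frontier U, ∃ f : (Fin n → ℂ) → ℂ, DifferentiableOn ℂ f U ∧
      ∀ z : ℕ → (Fin n → ℂ), (∀ j, z j ∈ U) → Tendsto z atTop (𝓝 a) →
        Tendsto (fun j => ‖f (z j)‖) atTop atTop) :
    IsDomainOfHolomorphy U := by
  refine ⟨hUo, hUc, ?_⟩
  obtain ⟨e, he⟩ := exists_surjective_nat (ℕ × ℕ × ℕ)
  let D : ℕ → (Fin n → ℂ) := TopologicalSpace.denseSeq _
  have hD : DenseRange D := TopologicalSpace.denseRange_denseSeq _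
  let B : ℕ × ℕ × ℕ → Set (Fin n → ℂ) := fun i => ball (D i.1) (1 / ((i.2.1 : ℝ) + 1))
  let S : ℕ × ℕ × ℕ → Set (Fin n → ℂ) := fun i => connectedComponentIn (U ∩ B i) (D i.2.2)
  have hSU : ∀ i, S i ⊆ U := fun i => (connectedComponentIn_subset _ _).trans inter_subset_left
  obtain ⟨F, hFd, hF⟩ := baire_aux hUo (fun k => S (e k)) (fun k => hSU _)
  refine ⟨F, hFd, ?_⟩
  rintro a ha ⟨V, hVo, hVc, haV, g, hg, W, hWo, ⟨w, hw⟩, hWsub, hWeq⟩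
  -- the component of `U ∩ V` through `w`
  have hw' : w ∈ U ∩ V := hWsub hw
  have hUV := hUo.inter hVo
  have hcs : connectedComponentIn (U ∩ V) w ⊆ U ∩ V := connectedComponentIn_subset _ _
  have hco : IsOpen (connectedComponentIn (U ∩ V) w) := hUV.connectedComponentIn
  have hFg : EqOn F g (connectedComponentIn (U ∩ V) w) := by
    have := identity_aux (f := fun z => F z - g z) hco isPreconnected_connectedComponentIn
      ((hFd.mono (hcs.trans inter_subset_left)).sub (hg.mono (hcs.trans inter_subset_right)))
      (mem_connectedComponentIn hw')
      (by filter_upwards [hWo.mem_nhds hw] with z hz; simp [hWeq hz])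
    intro z hz
    exact sub_eq_zero.1 (this hz)
  obtain ⟨b, hbV, hbU, hbc⟩ := boundary_aux hUo hVo hVc.isPreconnected hw' haV ha
  have hgc : ContinuousAt g b := (hg.differentiableAt (hVo.mem_nhds hbV)).continuousAt
  have hnh : V ∩ {z | ‖g z‖ < ‖g b‖ + 1} ∈ 𝓝 b :=
    inter_mem (hVo.mem_nhds hbV) (hgc.norm.eventually (gt_mem_nhds (by linarith)))
  obtain ⟨ε, hε, hεs⟩ := Metric.mem_nhds_iff.1 hnh
  obtain ⟨m, hm⟩ := exists_nat_one_div_lt (half_pos hε)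
  have hm0 : (0 : ℝ) < 1 / ((m : ℝ) + 1) := by positivity
  obtain ⟨p, hp⟩ := hD.exists_dist_lt b hm0
  have hBs : ball (D p) (1 / ((m : ℝ) + 1)) ⊆ V ∩ {z | ‖g z‖ < ‖g b‖ + 1} := by
    intro z hz
    apply hεs
    rw [mem_ball] at hz ⊢
    rw [dist_comm] at hp
    linarith [dist_triangle z (D p) b]
  have hbB : b ∈ ball (D p) (1 / ((m : ℝ) + 1)) := hp
  have hne : (connectedComponentIn (U ∩ V) w ∩ ball (D p) (1 / ((m : ℝ) + 1))).Nonempty := by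
    rw [inter_comm]
    exact mem_closure_iff.1 hbc _ isOpen_ball hbB
  obtain ⟨q, hqc, hqB⟩ := hD.exists_mem_open (hco.inter isOpen_ball) hne
  obtain ⟨k, hk⟩ := he (p, m, q)
  have hqU : D q ∈ U ∩ ball (D p) (1 / ((m : ℝ) + 1)) := ⟨(hcs hqc).1, hqB⟩
  have hS1 : S (e k) = connectedComponentIn (U ∩ ball (D p) (1 / ((m : ℝ) + 1))) (D q) := by
    rw [hk]
  have hSW : S (e k) ⊆ connectedComponentIn (U ∩ V) w := by
    rw [hS1, connectedComponentIn_eq hqc]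
    exact connectedComponentIn_mono _ (inter_subset_inter_right _ (hBs.trans inter_subset_left))
  have hbnU : b ∉ U := by
    rw [hUo.frontier_eq] at hbU
    exact hbU.2
  obtain ⟨b1, -, hb1U, hb1c⟩ := boundary_aux hUo isOpen_ball
    (convex_ball (D p) (1 / ((m : ℝ) + 1))).isPreconnected hqU hbB hbnU
  rw [← hS1] at hb1c
  obtain ⟨z, hzS, hzt⟩ := mem_closure_iff_seq_limit.1 hb1c
  obtain ⟨f, hfd, hft⟩ := h b1 hb1U
  have hft' := hft z (fun j => hSU _ (hzS j)) hzt
  refine hF k ⟨f, hfd, ?_⟩ ⟨‖g b‖ + 1, fun x hx => ?_⟩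
  · rintro ⟨M, hM⟩
    obtain ⟨j, hj⟩ := (hft'.eventually_gt_atTop M).exists
    exact absurd (hM _ (hzS j)) (not_le.2 hj)
  · rw [hFg (hSW hx)]
    rw [hS1] at hx
    exact (hBs ((connectedComponentIn_subset _ _) hx).2).2.le
end

section
/- Let U ⊆ ℂⁿ be a domain and suppose that for each boundary point a ∈ ∂U there is a nowhere-vanishing holomorphic function g_a on U which tends to zero at a, i.e. for every sequence {z_j} ⊆ U with z_j → a one has g_a(z_j) → 0. Then U is a domain of holomorphy. -/
open Set Metric Filter Topology

theorem aux_identity {n : ℕ} {C : Set (Fin n → ℂ)} (hC : IsOpen C) (hCc : IsPreconnected C)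
    {f g : (Fin n → ℂ) → ℂ} (hf : DifferentiableOn ℂ f C) (hg : DifferentiableOn ℂ g C)
    {w : Fin n → ℂ} (hw : w ∈ C) (hfg : f =ᶠ[𝓝 w] g) : EqOn f g C := by
  have key : C ⊆ {z | ∀ᶠ y in 𝓝 z, f y = g y} := by
    refine hCc.subset_of_closure_inter_subset isOpen_setOfPred_eventually_nhds ⟨w, hw, hfg⟩ ?_
    rintro p ⟨hp, hpC⟩
    obtain ⟨r, hr, hball⟩ := Metric.isOpen_iff.1 hC p hpC
    obtain ⟨q, hq, hqu⟩ := mem_closure_iff.1 hp (ball p r) isOpen_ball (mem_ball_self hr)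
    refine Filter.mem_of_superset (ball_mem_nhds p hr) ?_
    intro z hz
    let φ : ℂ → (Fin n → ℂ) := fun t => q + t • (z - q)
    have hφd : Differentiable ℂ φ := by fun_prop
    have hSo : IsOpen (φ ⁻¹' ball p r) := isOpen_ball.preimage hφd.continuous
    have hSc : Convex ℝ (φ ⁻¹' ball p r) := by
      intro s hs t ht a b ha hb hab
      have := convex_ball p r hs ht ha hb hab
      have e : a • φ s + b • φ t = φ (a • s + b • t) := by
        simp only [φ]
        have hab' : (a : ℂ) + b = 1 := by exact_mod_cast hab
        ext i
        simp
        linear_combination (q i) * hab'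
      rw [e] at this
      exact this
    have hA : ∀ {F : (Fin n → ℂ) → ℂ}, DifferentiableOn ℂ F C →
        AnalyticOnNhd ℂ (F ∘ φ) (φ ⁻¹' ball p r) := by
      intro F hF
      refine DifferentiableOn.analyticOnNhd ?_ hSo
      exact hF.comp hφd.differentiableOn (fun t ht => hball ht)
    have h0 : φ 0 = q := by simp [φ]
    have h1 : φ 1 = z := by simp [φ]
    have hev : (f ∘ φ) =ᶠ[𝓝 0] (g ∘ φ) := by
      have : Tendsto φ (𝓝 0) (𝓝 q) := by
        have := hφd.continuous.tendsto 0
        rwa [h0] at this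
      exact this.eventually hqu
    have := (hA hf).eqOn_of_preconnected_of_eventuallyEq (hA hg) hSc.isPreconnected
      (z₀ := 0) (by simpa [h0] using hq) hev (x := 1) (by simpa [h1] using hz)
    simpa [h1] using this
  intro z hz
  exact (key hz).self_of_nhds

theorem aux_boundary {n : ℕ} {U V : Set (Fin n → ℂ)} (hU : IsOpen U) (hV : IsOpen V)
    (hVc : IsPreconnected V) {w : Fin n → ℂ} (hw : w ∈ U ∩ V) (hVU : ¬ V ⊆ U) :
    ∃ b ∈ V, b ∈ frontier U ∧ b ∈ closure (connectedComponentIn (U ∩ V) w) := by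
  by_contra! hcon
  apply hVU
  have hCo : ∀ x, IsOpen (connectedComponentIn (U ∩ V) x) := fun x =>
    (hU.inter hV).connectedComponentIn
  have hsub := connectedComponentIn_subset (U ∩ V) w
  have : V ⊆ connectedComponentIn (U ∩ V) w := by
    refine hVc.subset_of_closure_inter_subset (hCo w)
      ⟨w, hw.2, mem_connectedComponentIn hw⟩ ?_
    rintro b ⟨hb, hbV⟩
    by_cases hbU : b ∈ U
    · have hbm : b ∈ connectedComponentIn (U ∩ V) b := mem_connectedComponentIn ⟨hbU, hbV⟩
      obtain ⟨y, hy1, hy2⟩ := mem_closure_iff.1 hb _ (hCo b) hbm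
      rw [connectedComponentIn_eq hy2, ← connectedComponentIn_eq hy1]
      exact hbm
    · exfalso
      refine hcon b hbV ?_ hb
      rw [hU.frontier_eq]
      exact ⟨closure_mono (hsub.trans inter_subset_left) hb, hbU⟩
  exact this.trans (hsub.trans inter_subset_left)

theorem aux_weights {n : ℕ} {U : Set (Fin n → ℂ)} (hU : IsOpen U)
    (h : ℕ → (Fin n → ℂ) → ℂ) (hd : ∀ k, DifferentiableOn ℂ (h k) U) :
    ∃ w : ℕ → ℝ, (∀ k, 0 < w k) ∧ ∀ x ∈ U, ∃ r > 0, ball x r ⊆ U ∧ ∃ B : ℕ → ℝ, Summable B ∧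
      ∀ k, ∀ z ∈ ball x r, ‖(w k : ℂ) * h k z‖ ≤ B k := by
  have : LocallyCompactSpace U := hU.locallyCompactSpace
  let K : CompactExhaustion U := default
  have hM : ∀ k m, ∃ M : ℝ, ∀ z ∈ K m, ‖h k (z : Fin n → ℂ)‖ ≤ M := by
    intro k m
    refine (K.isCompact m).exists_bound_of_continuousOn (f := fun z : U => h k z) ?_
    exact ((hd k).continuousOn.domRestrict).continuousOn
  choose M hM using hM
  refine ⟨fun k => (1 / 2) ^ k / (|M k k| + 1), fun k => by positivity, ?_⟩
  intro x hx
  obtain ⟨m, hm⟩ := K.exists_mem_nhds ⟨x, hx⟩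
  have hm' : ((↑) : U → Fin n → ℂ) '' (K m) ∈ 𝓝 x :=
    hU.isOpenEmbedding_subtypeVal.isOpenMap.image_mem_nhds hm
  obtain ⟨r, hr, hrb⟩ := Metric.mem_nhds_iff.1 hm'
  refine ⟨r, hr, fun z hz => ?_, fun k => (1 / 2) ^ k +
    if k < m then (1 / 2) ^ k / (|M k k| + 1) * |M k m| else 0, ?_, ?_⟩
  · obtain ⟨y, _, rfl⟩ := hrb hz
    exact y.2
  · refine summable_geometric_two.add ?_
    refine summable_of_ne_finset_zero (s := Finset.range m) ?_
    intro k hk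
    rw [if_neg (by simpa using hk)]
  · intro k z hz
    obtain ⟨y, hy, rfl⟩ := hrb hz
    have hwp : (0 : ℝ) < (1 / 2) ^ k / (|M k k| + 1) := by positivity
    rw [norm_mul, Complex.norm_real, Real.norm_of_nonneg hwp.le]
    beta_reduce
    by_cases hk : k < m
    · rw [if_pos hk]
      have h1 := (hM k m y hy).trans (le_abs_self _)
      have h2 := mul_le_mul_of_nonneg_left h1 hwp.le
      have h3 : (0 : ℝ) < (1 / 2) ^ k := by positivity
      linarith
    · rw [if_neg hk, add_zero]
      have h1 := (hM k k y (K.subset (not_lt.1 hk) hy)).trans (le_abs_self _)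
      rw [div_mul_eq_mul_div, div_le_iff₀ (by positivity)]
      gcongr
      linarith

theorem aux_tsum {n : ℕ} {U : Set (Fin n → ℂ)}
    (F : ℕ → (Fin n → ℂ) → ℂ) (hd : ∀ k, DifferentiableOn ℂ (F k) U)
    (hB : ∀ x ∈ U, ∃ r > 0, ball x r ⊆ U ∧ ∃ B : ℕ → ℝ, Summable B ∧
      ∀ k, ∀ z ∈ ball x r, ‖F k z‖ ≤ B k) :
    DifferentiableOn ℂ (fun z => ∑' k, F k z) U := by
  intro x hx
  obtain ⟨r, hr, hrU, B, hBs, hB⟩ := hB x hx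
  have hr2 : 0 < r / 2 := by positivity
  have hsub : ∀ y ∈ ball x (r / 2), ball y (r / 2) ⊆ ball x r := by
    intro y hy
    refine ball_subset_ball' ?_
    have := mem_ball.1 hy
    linarith
  have hxx := mem_ball_self (x := x) hr2
  have := hasFDerivAt_tsum_of_isPreconnected (𝕜 := ℂ) (f := F) (f' := fun k y => fderiv ℂ (F k) y)
    (u := fun k => (2 * B k) / (r / 2)) (s := ball x (r / 2)) (x₀ := x) (x := x)
    ((hBs.mul_left 2).div_const _) isOpen_ball (convex_ball x _).isPreconnected
    (fun k y hy => by
      refine DifferentiableAt.hasFDerivAt ?_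
      refine (((hd k).mono hrU).mono (hsub y hy)).differentiableAt (ball_mem_nhds y hr2))
    (fun k y hy => by
      refine Complex.norm_fderiv_le_div_of_mapsTo_ball
        (((hd k).mono hrU).mono (hsub y hy)) (fun z hz => ?_) hr2
      rw [mem_closedBall, dist_eq_norm]
      have h1 := hB k z (hsub y hy hz)
      have h2 := hB k y (hsub y hy (mem_ball_self hr2))
      have := norm_sub_le (F k z) (F k y)
      linarith)
    hxx (Summable.of_norm_bounded hBs (fun k => hB k x (mem_ball_self hr))) hxx
  exact this.differentiableAt.differentiableWithinAt

/-- Baire argument: a single holomorphic function unbounded on countably many sets. -/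
theorem aux_baire {n : ℕ} {U : Set (Fin n → ℂ)} (hU : IsOpen U)
    (h : ℕ → (Fin n → ℂ) → ℂ) (hd : ∀ k, DifferentiableOn ℂ (h k) U)
    (C : ℕ → Set (Fin n → ℂ)) (hCU : ∀ k, C k ⊆ U) (P : ℕ → Prop)
    (hunb : ∀ k, P k → ∀ M : ℝ, ∃ z ∈ C k, M < ‖h k z‖) :
    ∃ f : (Fin n → ℂ) → ℂ, DifferentiableOn ℂ f U ∧
      ∀ k, P k → ∀ M : ℝ, ∃ z ∈ C k, M < ‖f z‖ := by
  obtain ⟨w, hw, hB⟩ := aux_weights hU h hd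
  let F : (BoundedContinuousFunction ℕ ℂ) → (Fin n → ℂ) → ℂ :=
    fun c z => ∑' k, c k * ((w k : ℂ) * h k z)
  have hbd : ∀ (c : BoundedContinuousFunction ℕ ℂ) k z (b : ℝ), ‖(w k : ℂ) * h k z‖ ≤ b →
      ‖c k * ((w k : ℂ) * h k z)‖ ≤ ‖c‖ * b := by
    intro c k z b hb
    rw [norm_mul]
    exact mul_le_mul (c.norm_coe_le_norm k) hb (norm_nonneg _) (norm_nonneg _)
  have hsumn : ∀ z ∈ U, Summable fun k => ‖(w k : ℂ) * h k z‖ := by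
    intro z hz
    obtain ⟨r, hr, _, B, hBs, hB⟩ := hB z hz
    exact Summable.of_nonneg_of_le (fun _ => norm_nonneg _) (fun k => hB k z (mem_ball_self hr)) hBs
  have hsum : ∀ (c : BoundedContinuousFunction ℕ ℂ), ∀ z ∈ U,
      Summable fun k => c k * ((w k : ℂ) * h k z) := fun c z hz =>
    Summable.of_norm_bounded ((hsumn z hz).mul_left ‖c‖) (fun k => hbd c k z _ le_rfl)
  have hFd : ∀ c, DifferentiableOn ℂ (F c) U := by
    intro c
    refine aux_tsum _ (fun k => ((hd k).const_mul _).const_mul _) ?_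
    intro x hx
    obtain ⟨r, hr, hrU, B, hBs, hB⟩ := hB x hx
    exact ⟨r, hr, hrU, fun k => ‖c‖ * B k, hBs.mul_left _, fun k z hz => hbd c k z _ (hB k z hz)⟩
  have hFc : ∀ z ∈ U, Continuous fun c => F c z := by
    intro z hz
    refine continuous_iff_continuousAt.2 fun c₀ => ?_
    refine ContinuousOn.continuousAt (s := ball c₀ 1) ?_ (ball_mem_nhds _ one_pos)
    refine continuousOn_tsum (u := fun k => (‖c₀‖ + 1) * ‖(w k : ℂ) * h k z‖) ?_
      ((hsumn z hz).mul_left _) ?_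
    · intro k
      have : Continuous fun c : BoundedContinuousFunction ℕ ℂ => c k :=
        continuous_eval_const k
      exact (this.mul continuous_const).continuousOn
    · intro k c hc
      refine (hbd c k z _ le_rfl).trans ?_
      gcongr
      have h1 := mem_ball.1 hc
      rw [dist_eq_norm] at h1
      have h2 := norm_le_norm_add_norm_sub' c c₀
      linarith
  by_contra! hcon
  let A : ℕ × ℕ → Set (BoundedContinuousFunction ℕ ℂ) := fun p =>
    {c | P p.1 ∧ ∀ z ∈ C p.1, ‖F c z‖ ≤ p.2}
  have hAc : ∀ p, IsClosed (A p) := by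
    intro p
    refine IsClosed.and isClosed_const ?_
    simp only [ofPred_forall]
    refine isClosed_iInter fun z => isClosed_iInter fun hz => ?_
    exact isClosed_le (hFc z (hCU _ hz)).norm continuous_const
  have hAu : ⋃ p, A p = univ := by
    refine eq_univ_of_forall fun c => ?_
    obtain ⟨k, hk, M, hM⟩ := hcon (F c) (hFd c)
    obtain ⟨N, hN⟩ := exists_nat_ge M
    exact mem_iUnion.2 ⟨(k, N), hk, fun z hz => (hM z hz).trans hN⟩
  obtain ⟨⟨k, N⟩, c₀, hc₀⟩ := nonempty_interior_of_iUnion_of_closed hAc hAu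
  obtain ⟨ε, hε, hεA⟩ := Metric.mem_nhds_iff.1 (mem_interior_iff_mem_nhds.1 hc₀)
  have hc₀A := interior_subset hc₀
  let e : BoundedContinuousFunction ℕ ℂ :=
    BoundedContinuousFunction.ofNormedAddCommGroup (fun j => if j = k then ((ε / 2 : ℝ) : ℂ) else 0)
      continuous_of_discreteTopology (ε / 2) (by
        intro j
        by_cases hj : j = k
        · rw [if_pos hj, Complex.norm_real, Real.norm_of_nonneg (by positivity)]
        · rw [if_neg hj, norm_zero]; positivity)
  have he : ‖e‖ ≤ ε / 2 :=
    BoundedContinuousFunction.norm_ofNormedAddCommGroup_le _ (by positivity) _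
  have hceA : c₀ + e ∈ A (k, N) := by
    apply hεA
    rw [mem_ball, dist_eq_norm, add_sub_cancel_left]
    linarith
  have hFe : ∀ z ∈ U, F (c₀ + e) z = F c₀ z + ((ε / 2 : ℝ) : ℂ) * ((w k : ℂ) * h k z) := by
    intro z hz
    have h1 : F e z = ((ε / 2 : ℝ) : ℂ) * ((w k : ℂ) * h k z) := by
      refine (tsum_eq_single k ?_).trans ?_
      · intro j hj
        simp [e, hj]
      · simp [e]
    rw [← h1]
    simp only [F]
    rw [← (hsum c₀ z hz).tsum_add (hsum e z hz)]
    refine tsum_congr fun j => ?_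
    simp [add_mul]
  obtain ⟨z, hz, hzM⟩ := hunb k hc₀A.1 ((2 * N) / (ε / 2 * w k))
  have h1 := hc₀A.2 z hz
  have h2 := hceA.2 z hz
  rw [hFe z (hCU k hz)] at h2
  have hpos : 0 < ε / 2 * w k := mul_pos (by positivity) (hw k)
  rw [div_lt_iff₀ hpos] at hzM
  have h3 : ‖((ε / 2 : ℝ) : ℂ) * ((w k : ℂ) * h k z)‖ = ‖h k z‖ * (ε / 2 * w k) := by
    rw [norm_mul, norm_mul, Complex.norm_real, Complex.norm_real,
      Real.norm_of_nonneg (by positivity), Real.norm_of_nonneg (hw k).le]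
    ring
  have h4 := norm_sub_le (F c₀ z + ((ε / 2 : ℝ) : ℂ) * ((w k : ℂ) * h k z)) (F c₀ z)
  rw [add_sub_cancel_left, h3] at h4
  simp only at h1 h2
  linarith

/-- If for every boundary point `a` of the domain `U` there is a nowhere-vanishing holomorphic
function on `U` tending to `0` at `a`, then `U` is a domain of holomorphy. -/
theorem isDomainOfHolomorphy_of_boundary_vanishing {n : ℕ} (U : Set (Fin n → ℂ))
    (hUo : IsOpen U) (hUc : IsConnected U)
    (h : ∀ a ∈ frontier U, ∃ g : (Fin n → ℂ) → ℂ, DifferentiableOn ℂ g U ∧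
      (∀ z ∈ U, g z ≠ 0) ∧
      ∀ z : ℕ → (Fin n → ℂ), (∀ j, z j ∈ U) → Tendsto z atTop (𝓝 a) →
        Tendsto (fun j => g (z j)) atTop (𝓝 0)) :
    IsDomainOfHolomorphy U := by
  classical
  let q : ℕ → (Fin n → ℂ) := TopologicalSpace.denseSeq (Fin n → ℂ)
  let D : ℕ → Set (Fin n → ℂ) := fun k => ball (q k.unpair.1) (1 / ((k.unpair.2 : ℝ) + 1))
  let C : ℕ → Set (Fin n → ℂ) := fun k => connectedComponentIn (U ∩ D k) (q k.unpair.1)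
  let P : ℕ → Prop := fun k => q k.unpair.1 ∈ U ∧ ¬ D k ⊆ U
  have hCU : ∀ k, C k ⊆ U := fun k =>
    (connectedComponentIn_subset _ _).trans inter_subset_left
  have hk : ∀ k, ∃ u : (Fin n → ℂ) → ℂ, DifferentiableOn ℂ u U ∧
      (P k → ∀ M : ℝ, ∃ z ∈ C k, M < ‖u z‖) := by
    intro k
    by_cases hP : P k
    · have hq : q k.unpair.1 ∈ D k := mem_ball_self (by positivity)
      obtain ⟨b, _, hbU, hbC⟩ := aux_boundary hUo isOpen_ball
        (convex_ball (q k.unpair.1) (1 / ((k.unpair.2 : ℝ) + 1))).isPreconnected ⟨hP.1, hq⟩ hP.2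
      obtain ⟨g, hg, hg0, hgt⟩ := h b hbU
      refine ⟨fun z => (g z)⁻¹, hg.inv hg0, fun _ M => ?_⟩
      by_contra! hM
      obtain ⟨z, hz, hzb⟩ := mem_closure_iff_seq_limit.1 hbC
      have ht := ((hgt z (fun j => hCU k (hz j)) hzb).norm).const_mul M
      have h1 : (1 : ℝ) ≤ M * ‖(0 : ℂ)‖ := by
        refine ge_of_tendsto' ht fun j => ?_
        have h2 := hM (z j) (hz j)
        have h3 : 0 < ‖g (z j)‖ := norm_pos_iff.2 (hg0 _ (hCU k (hz j)))
        rw [norm_inv] at h2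
        calc (1 : ℝ) = ‖g (z j)‖⁻¹ * ‖g (z j)‖ := (inv_mul_cancel₀ h3.ne').symm
          _ ≤ M * ‖g (z j)‖ := by gcongr
      norm_num at h1
    · exact ⟨fun _ => 0, differentiableOn_const _, fun hP' => absurd hP' hP⟩
  choose u hud huP using hk
  obtain ⟨f, hf, hfP⟩ := aux_baire hUo u hud C hCU P huP
  refine ⟨hUo, hUc, f, hf, ?_⟩
  rintro a ha ⟨V, hVo, hVc, haV, g, hg, W, hWo, ⟨w, hwW⟩, hWUV, hfg⟩
  have hw := hWUV hwW
  obtain ⟨b, hbV, hbU, hbC⟩ := aux_boundary hUo hVo hVc.isPreconnected hw (fun hs => ha (hs haV))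
  have hCo : IsOpen (connectedComponentIn (U ∩ V) w) := (hUo.inter hVo).connectedComponentIn
  have hCsub := connectedComponentIn_subset (U ∩ V) w
  have hEq : EqOn f g (connectedComponentIn (U ∩ V) w) :=
    aux_identity hCo isPreconnected_connectedComponentIn (hf.mono fun z hz => (hCsub hz).1)
      (hg.mono fun z hz => (hCsub hz).2) (mem_connectedComponentIn hw)
      (Filter.mem_of_superset (hWo.mem_nhds hwW) hfg)
  -- a ball around `b` on which `g` is bounded
  have hgb : ContinuousAt g b := (hg.differentiableAt (hVo.mem_nhds hbV)).continuousAt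
  have hev : ∀ᶠ z in 𝓝 b, z ∈ V ∧ ‖g z‖ < ‖g b‖ + 1 :=
    (hVo.eventually_mem hbV).and (hgb.norm.eventually_lt continuousAt_const (by simp))
  obtain ⟨ε, hε, hεb⟩ := Metric.mem_nhds_iff.1 hev
  obtain ⟨m, hm⟩ := exists_nat_one_div_lt (half_pos hε)
  have hr : (0 : ℝ) < 1 / ((m : ℝ) + 1) := by positivity
  obtain ⟨y, hyb, hyC⟩ := mem_closure_iff.1 hbC _ isOpen_ball (mem_ball_self (x := b) hr)
  obtain ⟨i, hpb, hpC⟩ := (TopologicalSpace.denseRange_denseSeq (Fin n → ℂ)).exists_mem_open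
    (isOpen_ball.inter hCo) ⟨y, hyb, hyC⟩
  have hDk : D (Nat.pair i m) = ball (q i) (1 / ((m : ℝ) + 1)) := by simp [D]
  have hCk : C (Nat.pair i m) = connectedComponentIn (U ∩ ball (q i) (1 / ((m : ℝ) + 1))) (q i) := by
    simp [C, D]
  have hbD : b ∈ ball (q i) (1 / ((m : ℝ) + 1)) := mem_ball_comm.1 hpb
  have hbnU : b ∉ U := by
    rw [hUo.frontier_eq] at hbU
    exact hbU.2
  have hPk : P (Nat.pair i m) := by
    refine ⟨?_, ?_⟩
    · simpa using (hCsub hpC).1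
    · rw [hDk]
      exact fun hs => hbnU (hs hbD)
  have hsubε : ball (q i) (1 / ((m : ℝ) + 1)) ⊆ ball b ε := by
    refine ball_subset_ball' ?_
    have := mem_ball.1 hpb
    simp only [q] at *
    linarith
  obtain ⟨z, hz, hzM⟩ := hfP _ hPk (‖g b‖ + 1)
  rw [hCk] at hz
  have hzD := connectedComponentIn_subset _ _ hz
  have hzC : z ∈ connectedComponentIn (U ∩ V) w := by
    rw [connectedComponentIn_eq hpC]
    exact connectedComponentIn_mono _
      (inter_subset_inter_right U fun x hx => (hεb (hsubε hx)).1) hz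
  rw [hEq hzC] at hzM
  exact absurd hzM (not_lt.2 (hεb (hsubε hzD.2)).2.le)
end

section
/- Every convex domain U ⊆ ℂⁿ (convex when regarded as a subset of ℝ^{2n}) is a domain of holomorphy. -/
open Set Metric Filter Topology

/-- Identity theorem on a convex open set, by restriction to complex lines. -/
lemma eq_on_convex_aux {n : ℕ} {B : Set (Fin n → ℂ)} (hBo : IsOpen B) (hB : Convex ℝ B)
    {f g : (Fin n → ℂ) → ℂ} (hf : DifferentiableOn ℂ f B) (hg : DifferentiableOn ℂ g B)
    {y : Fin n → ℂ} (hy : y ∈ B) (hfg : f =ᶠ[𝓝 y] g) : EqOn f g B := by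
  intro z hz
  let L : ℂ → (Fin n → ℂ) := fun t => y + t • (z - y)
  have hL : Differentiable ℂ L := by intro t; fun_prop
  have hS : IsOpen (L ⁻¹' B) := hBo.preimage hL.continuous
  have hSc : Convex ℝ (L ⁻¹' B) := by
    intro s hs t ht a b ha hb hab
    have := hB hs ht ha hb hab
    have e : L (a • s + b • t) = a • L s + b • L t := by
      have hab' : (a : ℂ) + b = 1 := by exact_mod_cast hab
      ext i
      simp [L]
      linear_combination (-(y i)) * hab'
    rw [mem_preimage, e]
    exact this
  have h0 : (0 : ℂ) ∈ L ⁻¹' B := by simpa [L] using hy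
  have h1 : (1 : ℂ) ∈ L ⁻¹' B := by simpa [L] using hz
  have hF : AnalyticOnNhd ℂ (f ∘ L) (L ⁻¹' B) :=
    (hf.comp hL.differentiableOn (mapsTo_preimage _ _)).analyticOnNhd hS
  have hG : AnalyticOnNhd ℂ (g ∘ L) (L ⁻¹' B) :=
    (hg.comp hL.differentiableOn (mapsTo_preimage _ _)).analyticOnNhd hS
  have hev : f ∘ L =ᶠ[𝓝 0] g ∘ L := by
    have : Tendsto L (𝓝 0) (𝓝 y) := by
      have := hL.continuous.tendsto 0
      simpa [L] using this
    exact this.eventually hfg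
  have := hF.eqOn_of_preconnected_of_eventuallyEq hG hSc.isPreconnected h0 hev h1
  simpa [L] using this

/-- If `f` extends to a point outside `U`, it extends across a frontier point. -/
lemma exists_frontier_aux {n : ℕ} {U : Set (Fin n → ℂ)} (hUo : IsOpen U) (hU : Convex ℝ U)
    {f : (Fin n → ℂ) → ℂ} (hf : DifferentiableOn ℂ f U) {a : Fin n → ℂ} (ha : a ∈ Uᶜ)
    (h : ExtendsHolomorphicallyTo U f a) :
    ∃ b ∈ frontier U, ∃ ε > 0, ∃ g : (Fin n → ℂ) → ℂ, DifferentiableOn ℂ g (ball b ε) ∧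
      EqOn f g (U ∩ ball b ε) := by
  obtain ⟨V, hVo, hVc, haV, g, hg, W, hWo, ⟨w, hw⟩, hWUV, hfg⟩ := h
  let A : Set (Fin n → ℂ) := {x | x ∈ U ∩ V ∧ f =ᶠ[𝓝 x] g}
  have hAo : IsOpen A := by
    have h1 : IsOpen {x | f =ᶠ[𝓝 x] g} := isOpen_setOf_eventually_nhds
    exact (hUo.inter hVo).inter h1
  have hwA : w ∈ A := ⟨hWUV hw, hfg.eventuallyEq_of_mem (hWo.mem_nhds hw)⟩
  have hex : ∃ b ∈ V, b ∈ closure A ∧ b ∉ A := by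
    by_contra! hc
    have : V ⊆ A := hVc.isPreconnected.subset_of_closure_inter_subset hAo
      ⟨w, (hWUV hw).2, hwA⟩ (fun x hx => hc x hx.2 hx.1)
    exact ha (this haV).1.1
  obtain ⟨b, hbV, hbA, hbnA⟩ := hex
  obtain ⟨ε, hε, hball⟩ := Metric.isOpen_iff.1 hVo b hbV
  obtain ⟨y, hyA, hy⟩ := Metric.mem_closure_iff.1 hbA ε hε
  have hyB : y ∈ U ∩ ball b ε := ⟨hyA.1.1, by rwa [mem_ball, dist_comm]⟩
  have hopen : IsOpen (U ∩ ball b ε) := hUo.inter isOpen_ball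
  have heq : EqOn f g (U ∩ ball b ε) :=
    eq_on_convex_aux hopen (hU.inter (convex_ball b ε))
      (hf.mono inter_subset_left) (hg.mono (inter_subset_right.trans hball)) hyB hyA.2
  have hbU : b ∉ U := fun hbU => hbnA ⟨⟨hbU, hbV⟩,
    heq.eventuallyEq_of_mem (hopen.mem_nhds ⟨hbU, mem_ball_self hε⟩)⟩
  refine ⟨b, ⟨closure_mono (fun x hx => hx.1.1) hbA, by rwa [hUo.interior_eq]⟩, ε, hε, g,
    hg.mono hball, heq⟩

/-- Norm bound for a supporting functional. -/
lemma norm_bound_aux {n : ℕ} {U : Set (Fin n → ℂ)} {b z : Fin n → ℂ} {r : ℝ} (hr : 0 < r)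
    (hz : closedBall z r ⊆ U) (l : StrongDual ℂ (Fin n → ℂ))
    (hl : ∀ x ∈ U, (l x).re < (l b).re) : r * ‖l‖ ≤ (l (b - z)).re := by
  have key : ‖l‖ ≤ (l (b - z)).re / r := by
    apply ContinuousLinearMap.opNorm_bound_of_ball_bound hr
    intro v hv
    obtain ⟨c, hc, hcv⟩ : ∃ c : ℂ, ‖c‖ = 1 ∧ c * l v = ‖l v‖ := by
      obtain ⟨c, hc, h⟩ := RCLike.exists_norm_eq_mul_self (l v)
      exact ⟨c, hc, h.symm⟩
    have hm : z + c • v ∈ U := by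
      apply hz
      rw [mem_closedBall, dist_eq_norm, add_sub_cancel_left, norm_smul, hc, one_mul]
      simpa using hv
    have h2 := hl _ hm
    rw [map_add, map_smul, smul_eq_mul, hcv, Complex.add_re, Complex.ofReal_re] at h2
    rw [map_sub, Complex.sub_re]
    linarith
  rw [le_div_iff₀ hr] at key
  linarith

theorem convex_isDomainOfHolomorphy {n : ℕ} (U : Set (Fin n → ℂ))
    (hUo : IsOpen U) (hUc : IsConnected U) (hconv : Convex ℝ U) :
    IsDomainOfHolomorphy U := by
  refine ⟨hUo, hUc, ?_⟩
  obtain ⟨p, hp⟩ := hUc.nonempty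
  obtain ⟨s, hs, hsd⟩ := TopologicalSpace.exists_countable_dense (frontier U)
  haveI : Encodable s := hs.toEncodable
  have hsup : ∀ i : s, ∃ l : StrongDual ℂ (Fin n → ℂ),
      ∀ x ∈ U, (l x).re < (l (i : frontier U)).re := by
    intro i
    have hi : ((i : frontier U) : Fin n → ℂ) ∉ U := by
      have := (i : frontier U).2.2
      rwa [hUo.interior_eq] at this
    exact RCLike.geometric_hahn_banach_open_point (𝕜 := ℂ) hconv hUo hi
  choose l hl using hsup
  let b : s → (Fin n → ℂ) := fun i => ((i : frontier U) : Fin n → ℂ)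
  have hpos : ∀ i, ∀ x ∈ U, 0 < (l i (b i - x)).re := by
    intro i x hx
    rw [map_sub, Complex.sub_re]
    exact sub_pos.2 (hl i x hx)
  have hlpos : ∀ i, 0 < ‖l i‖ := by
    intro i
    rw [norm_pos_iff]
    intro h
    have := hpos i p hp
    simp [h] at this
  let u : s → ℝ := fun i => (1 / 2 : ℝ) ^ Encodable.encode i
  have hu : Summable u := summable_geometric_two_encode
  have hu0 : ∀ i, 0 < u i := fun i => by positivity
  let F : s → (Fin n → ℂ) → ℂ := fun i z => ((u i * ‖l i‖ : ℝ) : ℂ) * (l i (b i - z))⁻¹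
  let F' : s → (Fin n → ℂ) → ((Fin n → ℂ) →L[ℂ] ℂ) := fun i z =>
    (((u i * ‖l i‖ : ℝ) : ℂ) * ((l i (b i - z)) ^ 2)⁻¹) • l i
  have hne : ∀ i, ∀ x ∈ U, l i (b i - x) ≠ 0 := by
    intro i x hx h
    have := hpos i x hx
    simp [h] at this
  have hFd : ∀ i, ∀ x ∈ U, HasFDerivAt (F i) (F' i x) x := by
    intro i x hx
    have h1 : HasFDerivAt (fun z => l i (b i - z)) (-(l i)) x := by
      have := (l i).hasFDerivAt.comp x ((hasFDerivAt_id x).const_sub (b i))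
      refine this.congr_fderiv ?_
      ext v; simp
    have h2 := (hasDerivAt_inv (hne i x hx)).comp_hasFDerivAt x h1
    have h3 := h2.const_mul ((u i * ‖l i‖ : ℝ) : ℂ)
    refine h3.congr_fderiv ?_
    ext v; simp [F', mul_assoc]
  have hlow : ∀ i x, (∀ r > 0, closedBall x r ⊆ U → r * ‖l i‖ ≤ ‖l i (b i - x)‖) := by
    intro i x r hr hx
    exact (norm_bound_aux hr hx (l i) (hl i)).trans (Complex.re_le_norm _)
  have hFs : ∀ x ∈ U, Summable (fun i => F i x) := by
    intro x hx
    obtain ⟨r, hr, hrU⟩ := Metric.nhds_basis_closedBall.mem_iff.1 (hUo.mem_nhds hx)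
    refine Summable.of_norm_bounded (hu.mul_right r⁻¹) ?_
    intro i
    have h1 := hlow i x r hr hrU
    have h2 := hlpos i
    have h3 := hu0 i
    have h4 : 0 < r * ‖l i‖ := by positivity
    simp only [F, norm_mul, norm_inv, Complex.norm_real, Real.norm_eq_abs]
    rw [abs_of_pos h3, abs_of_pos (by simpa using h2)]
    calc u i * ‖l i‖ * ‖l i (b i - x)‖⁻¹ ≤ u i * ‖l i‖ * (r * ‖l i‖)⁻¹ := by gcongr
      _ = u i * r⁻¹ := by field_simp
  let f : (Fin n → ℂ) → ℂ := fun z => ∑' i, F i z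
  have hfd : DifferentiableOn ℂ f U := by
    intro x hx
    obtain ⟨r, hr, hrU⟩ := Metric.nhds_basis_closedBall.mem_iff.1 (hUo.mem_nhds hx)
    have hr2 : 0 < r / 2 := by positivity
    have hsub : ∀ y ∈ ball x (r / 2), closedBall y (r / 2) ⊆ U := by
      intro y hy
      refine (closedBall_subset_closedBall' ?_).trans hrU
      have := mem_ball.1 hy
      linarith
    have hyU : ∀ y ∈ ball x (r / 2), y ∈ U := fun y hy =>
      hsub y hy (mem_closedBall_self hr2.le)
    have hxb : x ∈ ball x (r / 2) := mem_ball_self hr2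
    have hb' : ∀ i, ∀ y ∈ ball x (r / 2), ‖F' i y‖ ≤ u i * ((r / 2) ^ 2)⁻¹ := by
      intro i y hy
      have h1 := hlow i y (r / 2) hr2 (hsub y hy)
      have h2 := hlpos i
      have h3 := hu0 i
      have h4 : 0 < r / 2 * ‖l i‖ := by positivity
      simp only [F', norm_smul, norm_mul, norm_inv, norm_pow, Complex.norm_real, Real.norm_eq_abs]
      rw [abs_of_pos h3, abs_of_pos (by simpa using h2)]
      calc u i * ‖l i‖ * (‖l i (b i - y)‖ ^ 2)⁻¹ * ‖l i‖
          ≤ u i * ‖l i‖ * ((r / 2 * ‖l i‖) ^ 2)⁻¹ * ‖l i‖ := by gcongr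
        _ = u i * ((r / 2) ^ 2)⁻¹ := by field_simp
    exact (hasFDerivAt_tsum_of_isPreconnected (hu.mul_right _) isOpen_ball
      (convex_ball x (r / 2)).isPreconnected (fun i y hy => hFd i y (hyU y hy)) hb' hxb
      (hFs x hx) hxb).differentiableAt.differentiableWithinAt
  refine ⟨f, hfd, ?_⟩
  intro a ha hext
  obtain ⟨c, hc, ε, hε, g, hg, hfg⟩ := exists_frontier_aux hUo hconv hfd ha hext
  -- a point of the dense set inside the ball
  obtain ⟨i, hi⟩ : ∃ i : s, b i ∈ ball c ε := by
    obtain ⟨q, hq, hqs⟩ := hsd.exists_dist_lt (⟨c, hc⟩ : frontier U) hε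
    exact ⟨⟨q, hq⟩, by rw [mem_ball, dist_comm]; exact hqs⟩
  have hbi : b i ∈ closure U := (i : frontier U).2.1
  let z : ℝ → (Fin n → ℂ) := fun t => b i + t • (p - b i)
  have hzc : Continuous z := by fun_prop
  have hz0 : Tendsto z (𝓝[>] 0) (𝓝 (b i)) := by
    have := hzc.tendsto 0
    simp only [z, zero_smul, add_zero] at this
    exact this.mono_left nhdsWithin_le_nhds
  have hzU : ∀ t : ℝ, 0 < t → t ≤ 1 → z t ∈ U := by
    intro t h0 h1
    have := hconv.add_smul_sub_mem_interior' hbi (by rwa [hUo.interior_eq]) ⟨h0, h1⟩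
    rwa [hUo.interior_eq] at this
  have hgc : Tendsto (fun t => t * (g (z t)).re) (𝓝[>] 0) (𝓝 0) := by
    have h1 : ContinuousAt g (b i) := (hg.differentiableAt (isOpen_ball.mem_nhds hi)).continuousAt
    have h2 : Tendsto (fun t => (g (z t)).re) (𝓝[>] 0) (𝓝 (g (b i)).re) :=
      (Complex.continuous_re.tendsto _).comp (h1.tendsto.comp hz0)
    have h3 : Tendsto (fun t : ℝ => t) (𝓝[>] 0) (𝓝 0) := nhdsWithin_le_nhds
    simpa using h3.mul h2
  have hFre : ∀ j, ∀ x ∈ U, 0 ≤ (F j x).re := by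
    intro j x hx
    have h1 := hpos j x hx
    have h2 := hlpos j
    have h3 := hu0 j
    simp only [F]
    rw [Complex.re_ofReal_mul, Complex.inv_re]
    have := Complex.normSq_nonneg (l j (b j - x))
    positivity
  have hfre : ∀ x ∈ U, (F i x).re ≤ (f x).re := by
    intro x hx
    have h1 : HasSum (fun j => (F j x).re) (f x).re := Complex.hasSum_re (hFs x hx).hasSum
    exact le_hasSum h1 i (fun j _ => hFre j x hx)
  have hCpos : 0 < (F i p).re := by
    have h1 := hpos i p hp
    have h2 := hlpos i
    have h3 := hu0 i
    simp only [F]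
    rw [Complex.re_ofReal_mul, Complex.inv_re]
    have := Complex.normSq_pos.2 (hne i p hp)
    positivity
  have hFz : ∀ t : ℝ, 0 < t → t * (F i (z t)).re = (F i p).re := by
    intro t ht
    have h1 : l i (b i - z t) = (t : ℂ) * l i (b i - p) := by
      have : b i - z t = (t : ℂ) • (b i - p) := by
        ext k
        simp [z]
        ring
      rw [this, map_smul, smul_eq_mul]
    have ht' : (t : ℂ) ≠ 0 := by exact_mod_cast ht.ne'
    have h2 : (t : ℂ) * F i (z t) = F i p := by
      simp only [F]
      rw [h1, mul_inv]
      field_simp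
    rw [← h2]
    exact (Complex.re_ofReal_mul t (F i (z t))).symm
  have hev : ∀ᶠ t in 𝓝[>] (0 : ℝ), (F i p).re ≤ t * (g (z t)).re := by
    have e1 : ∀ᶠ t in 𝓝[>] (0 : ℝ), t ∈ Ioc (0 : ℝ) 1 := Ioc_mem_nhdsGT one_pos
    have e2 : ∀ᶠ t in 𝓝[>] (0 : ℝ), z t ∈ ball c ε := hz0.eventually (isOpen_ball.mem_nhds hi)
    filter_upwards [e1, e2] with t ht1 ht2
    have hm := hzU t ht1.1 ht1.2
    rw [← hFz t ht1.1, ← hfg ⟨hm, ht2⟩]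
    exact mul_le_mul_of_nonneg_left (hfre _ hm) ht1.1.le
  exact absurd (ge_of_tendsto hgc hev) (not_le.2 hCpos)
end

section
/- If a domain U ⊆ ℂⁿ is holomorphically convex then U is a domain of holomorphy. -/
open Set Metric Filter Topology

/-- The holomorphically convex hull of `K` in `U`:
`K̂ = {z ∈ U : ‖f z‖ ≤ sup_{w ∈ K} ‖f w‖ for every f holomorphic on U}`. -/
def holConvexHull {n : ℕ} (U K : Set (Fin n → ℂ)) : Set (Fin n → ℂ) :=
  {z ∈ U | ∀ f : (Fin n → ℂ) → ℂ, DifferentiableOn ℂ f U → ‖f z‖ ≤ ⨆ w : K, ‖f w‖}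

/-- `U` is holomorphically convex: the holomorphically convex hull of every compact subset of `U`
is compact. -/
def HolomorphicallyConvex {n : ℕ} (U : Set (Fin n → ℂ)) : Prop :=
  ∀ K : Set (Fin n → ℂ), K ⊆ U → IsCompact K → IsCompact (holConvexHull U K)

section HolHelpers

variable {E : Type*} [NormedAddCommGroup E] [NormedSpace ℂ E]

/-- Identity principle on balls for complex differentiable functions of several variables. -/
lemma hol_eqOn_ball {f g : E → ℂ} {c : E} {r : ℝ}
    (hf : DifferentiableOn ℂ f (ball c r)) (hg : DifferentiableOn ℂ g (ball c r))
    {z : E} (hz : z ∈ ball c r) (hfg : f =ᶠ[𝓝 z] g) : EqOn f g (ball c r) := by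
  intro w hw
  let L : ℂ → E := fun t => z + t • (w - z)
  have hLd : Differentiable ℂ L := by
    intro t
    simp only [L]
    fun_prop
  have hLc : Continuous L := hLd.continuous
  let T : Set ℂ := L ⁻¹' ball c r
  have hTo : IsOpen T := isOpen_ball.preimage hLc
  have hTc : Convex ℝ T := by
    intro s hs t ht a b ha hb hab
    have := convex_ball c r hs ht ha hb hab
    simp only [T, mem_preimage]
    convert this using 1
    have h2 : ((a : ℂ) + (b : ℂ)) = 1 := by exact_mod_cast hab
    have h3 : z = a • z + b • z := by rw [← add_smul, hab, one_smul]
    simp only [L, smul_add, add_smul, smul_assoc]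
    nth_rewrite 1 [h3]
    abel
  have hmaps : MapsTo L T (ball c r) := fun t ht => ht
  have hfa : AnalyticOnNhd ℂ (f ∘ L) T :=
    (hf.comp hLd.differentiableOn hmaps).analyticOnNhd hTo
  have hga : AnalyticOnNhd ℂ (g ∘ L) T :=
    (hg.comp hLd.differentiableOn hmaps).analyticOnNhd hTo
  have h0 : L 0 = z := by simp [L]
  have h1 : L 1 = w := by simp [L]
  have h0T : (0 : ℂ) ∈ T := by simpa [T, h0] using hz
  have h1T : (1 : ℂ) ∈ T := by simpa [T, h1] using hw
  have hev : f ∘ L =ᶠ[𝓝 0] g ∘ L := by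
    have ht : Tendsto L (𝓝 0) (𝓝 z) := by
      have := hLc.tendsto 0
      rwa [h0] at this
    exact ht.eventually hfg
  have := hfa.eqOn_of_preconnected_of_eventuallyEq hga hTc.isPreconnected h0T hev h1T
  simpa [h1] using this

/-- Limits of holomorphic functions converging fast on an increasing exhaustion. -/
lemma hol_limit {U : Set E} (hU : IsOpen U) (F : ℕ → E → ℂ)
    (hF : ∀ k, DifferentiableOn ℂ (F k) U) (K : ℕ → Set E) (hK : Monotone K)
    (hex : ∀ x ∈ U, ∃ r > 0, ∃ j, ball x r ⊆ K j)
    (hb : ∀ k, ∀ w ∈ K k, ‖F (k + 1) w - F k w‖ ≤ (1 / 2) ^ k) :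
    ∃ f : E → ℂ, DifferentiableOn ℂ f U ∧ ∀ k, ∀ w ∈ K k, ‖f w - F k w‖ ≤ 2 := by
  let G : ℕ → E → ℂ := fun k w => F (k + 1) w - F k w
  have hbd : ∀ j, ∀ w ∈ K j, ∀ k, ‖G (k + j) w‖ ≤ (1 / 2) ^ k := by
    intro j w hw k
    refine (hb (k + j) w (hK (Nat.le_add_left j k) hw)).trans ?_
    exact pow_le_pow_of_le_one (by norm_num) (by norm_num) (Nat.le_add_right k j)
  have hsum : ∀ j, ∀ w ∈ K j, Summable fun k => G (k + j) w := fun j w hw =>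
    Summable.of_norm_bounded summable_geometric_two (hbd j w hw)
  have hform : ∀ j, ∀ w ∈ K j, F 0 w + ∑' k, G k w = F j w + ∑' k, G (k + j) w := by
    intro j w hw
    have hs : Summable fun k => G k w := (summable_nat_add_iff j).1 (hsum j w hw)
    rw [← hs.sum_add_tsum_nat_add j, Finset.sum_range_sub (fun k => F k w) j]
    ring
  refine ⟨fun w => F 0 w + ∑' k, G k w, ?_, ?_⟩
  · intro x hx
    obtain ⟨r₁, hr₁, j, hj⟩ := hex x hx
    obtain ⟨r₂, hr₂, hrU⟩ := Metric.isOpen_iff.1 hU x hx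
    obtain ⟨r, hr, hrr1, hrr2⟩ : ∃ r > 0, r + r ≤ r₁ ∧ r + r ≤ r₂ :=
      ⟨min r₁ r₂ / 2, by positivity, by linarith [min_le_left r₁ r₂],
        by linarith [min_le_right r₁ r₂]⟩
    have hsub : ∀ y ∈ ball x r, ball y r ⊆ K j ∩ U := by
      intro y hy w hw
      have : dist w x < r + r := by
        have := dist_triangle w y x
        rw [mem_ball] at hy hw
        linarith
      exact ⟨hj (mem_ball.2 (by linarith)), hrU (mem_ball.2 (by linarith))⟩
    have hGd : ∀ k, DifferentiableOn ℂ (G k) U := fun k => (hF (k + 1)).sub (hF k)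
    have hmem : ∀ y ∈ ball x r, y ∈ K j ∩ U := fun y hy => hsub y hy (mem_ball_self hr)
    have hD : HasFDerivAt (fun y => ∑' k, G (k + j) y)
        (∑' k, fderiv ℂ (G (k + j)) x) x := by
      refine hasFDerivAt_tsum_of_isPreconnected (f' := fun k y => fderiv ℂ (G (k + j)) y)
        (u := fun k => (2 / r) * (1 / 2) ^ k)
        (summable_geometric_two.mul_left _) isOpen_ball
        (convex_ball x r).isPreconnected ?_ ?_ (mem_ball_self hr)
        (hsum j x (hmem x (mem_ball_self hr)).1) (mem_ball_self hr)
      · intro k y hy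
        exact ((hGd (k + j)).differentiableAt (hU.mem_nhds (hmem y hy).2)).hasFDerivAt
      · intro k y hy
        have := Complex.norm_fderiv_le_div_of_mapsTo_ball (f := G (k + j)) (c := y) (R₁ := r)
          (R₂ := 2 * (1 / 2) ^ k) ((hGd _).mono fun w hw => (hsub y hy hw).2) ?_ hr
        · refine this.trans (le_of_eq ?_)
          ring
        · intro w hw
          rw [mem_closedBall, dist_eq_norm]
          have h1 := hbd j w (hsub y hy hw).1 k
          have h2 := hbd j y (hmem y hy).1 k
          linarith [norm_sub_le (G (k + j) w) (G (k + j) y)]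
    have hdiff : DifferentiableAt ℂ (fun y => F j y + ∑' k, G (k + j) y) x :=
      ((hF j).differentiableAt (hU.mem_nhds hx)).add hD.differentiableAt
    refine (hdiff.congr_of_eventuallyEq ?_).differentiableWithinAt
    filter_upwards [ball_mem_nhds x hr] with y hy using hform j y (hmem y hy).1
  · intro j w hw
    simp only [hform j w hw, add_sub_cancel_left]
    exact tsum_of_norm_bounded hasSum_geometric_two (hbd j w hw)

end HolHelpers

/-- Peak-type functions off the hull. -/
lemma exists_peak {n : ℕ} {U K : Set (Fin n → ℂ)} (hKU : K ⊆ U) (hK : IsCompact K)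
    {z : Fin n → ℂ} (hzU : z ∈ U) (hz : z ∉ holConvexHull U K) {A ε : ℝ} (hA : 0 < A)
    (hε : 0 < ε) :
    ∃ p : (Fin n → ℂ) → ℂ, DifferentiableOn ℂ p U ∧ (∀ w ∈ K, ‖p w‖ ≤ ε) ∧ ‖p z‖ = A := by
  have : ∃ f : (Fin n → ℂ) → ℂ, DifferentiableOn ℂ f U ∧ (⨆ w : K, ‖f w‖) < ‖f z‖ := by
    by_contra hcon
    push Not at hcon
    exact hz ⟨hzU, hcon⟩
  obtain ⟨f, hf, hlt⟩ := this
  set s := ⨆ w : K, ‖f w‖ with hs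
  have hs0 : 0 ≤ s := Real.iSup_nonneg fun _ => norm_nonneg _
  have hle : ∀ w ∈ K, ‖f w‖ ≤ s := by
    intro w hw
    have hbdd : BddAbove (range fun w : K => ‖f w‖) := by
      have := (hK.image_of_continuousOn (hf.continuousOn.mono hKU).norm).bddAbove
      rwa [image_eq_range] at this
    exact le_ciSup hbdd ⟨w, hw⟩
  have hpos : 0 < ‖f z‖ := hs0.trans_lt hlt
  have hfz : f z ≠ 0 := norm_pos_iff.1 hpos
  obtain ⟨m, hm⟩ := exists_pow_lt_of_lt_one (div_pos hε hA) ((div_lt_one hpos).2 hlt)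
  refine ⟨fun w => (A : ℂ) * (f w / f z) ^ m, ?_, ?_, ?_⟩
  · have hq : DifferentiableOn ℂ (fun w => f w / f z) U := by
      simp only [div_eq_mul_inv]
      exact hf.mul_const _
    exact (hq.pow m).const_mul _
  · intro w hw
    rw [norm_mul, norm_pow, norm_div, Complex.norm_real, Real.norm_of_nonneg hA.le]
    have h1 : (‖f w‖ / ‖f z‖) ^ m ≤ (s / ‖f z‖) ^ m := by
      gcongr
      exact hle w hw
    calc A * (‖f w‖ / ‖f z‖) ^ m ≤ A * (ε / A) := by
          gcongr
          exact h1.trans hm.le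
      _ = ε := by field_simp
  · simp [div_self hfz, abs_of_pos hA]

/-- The maximal ball around a point of `U` is not contained in any compact subset of `U`. -/
lemma exists_not_mem_compact {n : ℕ} {U H : Set (Fin n → ℂ)} (hU : IsOpen U)
    (hne : (Uᶜ).Nonempty) (hH : IsCompact H) (hHU : H ⊆ U) {c : Fin n → ℂ} (hc : c ∈ U) :
    ∃ z ∈ ball c (infDist c Uᶜ), z ∉ H := by
  by_contra hcon
  push Not at hcon
  have hpos : 0 < infDist c Uᶜ :=
    (hU.isClosed_compl.notMem_iff_infDist_pos hne).1 (fun h => h hc)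
  obtain ⟨p, hp, hd⟩ := hU.isClosed_compl.exists_infDist_eq_dist hne c
  have h1 : p ∈ closure (ball c (infDist c Uᶜ)) := by
    rw [closure_ball c hpos.ne', mem_closedBall, hd, dist_comm]
  exact hp (hHU (closure_minimal hcon hH.isClosed h1))

/-- A holomorphic function unbounded on every maximal ball around a given sequence. -/
lemma exists_unbounded {n : ℕ} {U : Set (Fin n → ℂ)} (hU : IsOpen U)
    (hne : (Uᶜ).Nonempty) (h : HolomorphicallyConvex U) (d : ℕ → Fin n → ℂ)
    (hd : ∀ i, d i ∈ U) :
    ∃ f : (Fin n → ℂ) → ℂ, DifferentiableOn ℂ f U ∧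
      ∀ i (M : ℕ), ∃ z ∈ ball (d i) (infDist (d i) Uᶜ), (M : ℝ) < ‖f z‖ := by
  let X : ℕ → Set (Fin n → ℂ) := fun j =>
    closedBall 0 (j : ℝ) ∩ {z | 1 / ((j : ℝ) + 1) ≤ infDist z Uᶜ}
  have hXc : ∀ j, IsCompact (X j) := fun j =>
    (isCompact_closedBall _ _).inter_right
      (isClosed_le continuous_const (continuous_infDist_pt _))
  have hXU : ∀ j, X j ⊆ U := by
    intro j z hz
    by_contra hzU
    have h0 : infDist z Uᶜ = 0 := infDist_zero_of_mem hzU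
    have h1 : 1 / ((j : ℝ) + 1) ≤ infDist z Uᶜ := hz.2
    have h2 : 0 < 1 / ((j : ℝ) + 1) := by positivity
    linarith
  have hXe : ∀ x ∈ U, ∃ r > 0, ∃ j, ball x r ⊆ X j := by
    intro x hx
    have hpos : 0 < infDist x Uᶜ :=
      (hU.isClosed_compl.notMem_iff_infDist_pos hne).1 (fun h => h hx)
    set δ := infDist x Uᶜ with hδ
    obtain ⟨j₁, hj₁⟩ := exists_nat_gt (‖x‖ + δ)
    obtain ⟨j₂, hj₂⟩ := exists_nat_one_div_lt (half_pos hpos)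
    refine ⟨δ / 2, half_pos hpos, max j₁ j₂, fun y hy => ?_⟩
    rw [mem_ball] at hy
    have hm1 : (j₁ : ℝ) ≤ ((max j₁ j₂ : ℕ) : ℝ) := by exact_mod_cast le_max_left _ _
    have hm2 : (j₂ : ℝ) ≤ ((max j₁ j₂ : ℕ) : ℝ) := by exact_mod_cast le_max_right _ _
    constructor
    · rw [mem_closedBall]
      have := dist_triangle y x 0
      rw [dist_zero_right x] at this
      linarith
    · have h1 : infDist x Uᶜ ≤ infDist y Uᶜ + dist x y := infDist_le_infDist_add_dist
      rw [dist_comm] at h1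
      have h2 : 1 / (((max j₁ j₂ : ℕ) : ℝ) + 1) ≤ 1 / ((j₂ : ℝ) + 1) := by gcongr
      show 1 / (((max j₁ j₂ : ℕ) : ℝ) + 1) ≤ infDist y Uᶜ
      linarith
  let q : ℕ → Fin n → ℂ := fun j => d (Nat.unpair j).1
  let S := {p : Set (Fin n → ℂ) × ((Fin n → ℂ) → ℂ) //
    p.1 ⊆ U ∧ IsCompact p.1 ∧ DifferentiableOn ℂ p.2 U}
  have step : ∀ (j : ℕ) (s : S), ∃ s' : S, s.1.1 ⊆ s'.1.1 ∧ X j ⊆ s'.1.1 ∧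
      (∀ w ∈ s.1.1, ‖s'.1.2 w - s.1.2 w‖ ≤ (1 / 2) ^ j) ∧
      ∃ z ∈ ball (q j) (infDist (q j) Uᶜ), z ∈ s'.1.1 ∧ (j : ℝ) + 3 ≤ ‖s'.1.2 z‖ := by
    rintro j ⟨⟨K, F⟩, hKU, hK, hF⟩
    obtain ⟨z, hzb, hzH⟩ := exists_not_mem_compact hU hne (h K hKU hK)
      (fun _ hw => hw.1) (hd (Nat.unpair j).1)
    have hzU : z ∈ U := ball_infDist_compl_subset hzb
    obtain ⟨p, hp, hpK, hpz⟩ := exists_peak hKU hK hzU hzH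
      (A := (j : ℝ) + 3 + ‖F z‖) (ε := (1 / 2) ^ j) (by positivity) (by positivity)
    refine ⟨⟨⟨K ∪ X j ∪ {z}, fun w => F w + p w⟩, ?_, ?_, hF.add hp⟩, ?_, ?_, ?_, z, hzb, ?_, ?_⟩
    · exact union_subset (union_subset hKU (hXU j)) (singleton_subset_iff.2 hzU)
    · exact (hK.union (hXc j)).union isCompact_singleton
    · intro w hw
      exact Or.inl (Or.inl hw)
    · intro w hw
      exact Or.inl (Or.inr hw)
    · intro w hw
      simpa using hpK w hw
    · exact Or.inr rfl
    · have h1 := norm_sub_le (F z + p z) (F z)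
      rw [add_sub_cancel_left, hpz] at h1
      show (j : ℝ) + 3 ≤ ‖F z + p z‖
      linarith
  choose nxt h1 h2 h3 h4 using step
  let s : ℕ → S := fun j =>
    Nat.rec (⟨⟨∅, fun _ => 0⟩, empty_subset _, isCompact_empty, differentiableOn_const _⟩ : S)
      (fun k t => nxt k t) j
  have hs : ∀ j, s (j + 1) = nxt j (s j) := fun j => rfl
  obtain ⟨f, hf, hfb⟩ := hol_limit hU (fun j => (s j).1.2) (fun j => (s j).2.2.2)
    (fun j => (s j).1.1) (monotone_nat_of_le_succ fun j => h1 j (s j))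
    (fun x hx => by
      obtain ⟨r, hr, j, hj⟩ := hXe x hx
      exact ⟨r, hr, j + 1, hj.trans (h2 j (s j))⟩)
    (fun j => h3 j (s j))
  refine ⟨f, hf, fun i M => ?_⟩
  obtain ⟨z, hzb, hzK, hz⟩ := h4 (Nat.pair i M) (s (Nat.pair i M))
  have hq : q (Nat.pair i M) = d i := by simp [q]
  rw [hq] at hzb
  refine ⟨z, hzb, ?_⟩
  have hclose := hfb (Nat.pair i M + 1) z hzK
  have hM : (M : ℝ) ≤ (Nat.pair i M : ℝ) := by exact_mod_cast Nat.right_le_pair i M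
  rw [← hs] at hz
  have h5 := norm_sub_norm_le ((s (Nat.pair i M + 1)).1.2 z) (f z)
  rw [norm_sub_rev] at h5
  linarith

/-- A holomorphically convex domain is a domain of holomorphy. -/
theorem holomorphicallyConvex_isDomainOfHolomorphy {n : ℕ} (U : Set (Fin n → ℂ))
    (hUo : IsOpen U) (hUc : IsConnected U) (h : HolomorphicallyConvex U) :
    IsDomainOfHolomorphy U := by
  refine ⟨hUo, hUc, ?_⟩
  rcases (Uᶜ).eq_empty_or_nonempty with he | hne
  · exact ⟨fun _ => 0, differentiableOn_const _, fun a ha => by simp [he] at ha⟩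
  haveI : Nonempty U := hUc.nonempty.to_subtype
  let d : ℕ → Fin n → ℂ := fun i => (TopologicalSpace.denseSeq U i : Fin n → ℂ)
  have hd : ∀ i, d i ∈ U := fun i => (TopologicalSpace.denseSeq U i).2
  obtain ⟨f, hf, hunb⟩ := exists_unbounded hUo hne h d hd
  refine ⟨f, hf, ?_⟩
  rintro a ha ⟨V, hVo, hVc, haV, g, hg, W, hWo, ⟨w₀, hw₀⟩, hWUV, hfg⟩
  let Z : Set (Fin n → ℂ) := {w | w ∈ U ∩ V ∧ f =ᶠ[𝓝 w] g}
  have hZo : IsOpen Z := (hUo.inter hVo).inter isOpen_setOfPred_eventually_nhds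
  have hw₀Z : w₀ ∈ Z := ⟨hWUV hw₀, hfg.eventuallyEq_of_mem (hWo.mem_nhds hw₀)⟩
  have hex : ∃ p, p ∈ closure Z ∩ V ∧ p ∉ Z := by
    by_contra hcon
    push Not at hcon
    have := hVc.isPreconnected.subset_of_closure_inter_subset hZo
      ⟨w₀, (hWUV hw₀).2, hw₀Z⟩ hcon
    exact ha (this haV).1.1
  obtain ⟨p, ⟨hpc, hpV⟩, hpZ⟩ := hex
  by_cases hpU : p ∈ U
  · obtain ⟨r, hr, hrs⟩ := Metric.isOpen_iff.1 (hUo.inter hVo) p ⟨hpU, hpV⟩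
    obtain ⟨y, hyb, hyZ⟩ := mem_closure_iff.1 hpc (ball p r) isOpen_ball (mem_ball_self hr)
    have := hol_eqOn_ball (hf.mono fun w hw => (hrs hw).1) (hg.mono fun w hw => (hrs hw).2)
      hyb hyZ.2
    exact hpZ ⟨⟨hpU, hpV⟩, this.eventuallyEq_of_mem (ball_mem_nhds p hr)⟩
  · have hgc : ContinuousAt g p := (hg.differentiableAt (hVo.mem_nhds hpV)).continuousAt
    have hev : ∀ᶠ w in 𝓝 p, w ∈ V ∧ ‖g w‖ < ‖g p‖ + 1 :=
      (hVo.eventually_mem hpV).and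
        (hgc.norm.eventually_lt continuousAt_const (by linarith))
    obtain ⟨ε, hε, hball⟩ := Metric.eventually_nhds_iff_ball.1 hev
    obtain ⟨y, hyb, hyZ⟩ := mem_closure_iff.1 hpc (ball p (ε / 2)) isOpen_ball
      (mem_ball_self (half_pos hε))
    have hO : IsOpen ((↑) ⁻¹' (ball p (ε / 2) ∩ Z) : Set U) :=
      (isOpen_ball.inter hZo).preimage continuous_subtype_val
    obtain ⟨i, hi⟩ := (TopologicalSpace.denseRange_denseSeq U).exists_mem_open hO
      ⟨⟨y, hyZ.1.1⟩, hyb, hyZ⟩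
    have hib : d i ∈ ball p (ε / 2) := hi.1
    have hiZ : d i ∈ Z := hi.2
    have hle : infDist (d i) Uᶜ ≤ dist (d i) p := infDist_le_dist_of_mem hpU
    have hsub : ball (d i) (infDist (d i) Uᶜ) ⊆ ball p ε := by
      intro w hw
      rw [mem_ball] at *
      linarith [dist_triangle w (d i) p]
    have hpos : 0 < infDist (d i) Uᶜ :=
      (hUo.isClosed_compl.notMem_iff_infDist_pos hne).1 (fun h => h (hd i))
    have heq := hol_eqOn_ball (hf.mono ball_infDist_compl_subset)
      (hg.mono fun w hw => (hball w (hsub hw)).1) (mem_ball_self hpos) hiZ.2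
    obtain ⟨M, hM⟩ := exists_nat_gt (‖g p‖ + 1)
    obtain ⟨z, hz, hzM⟩ := hunb i M
    rw [heq hz] at hzM
    linarith [(hball z (hsub hz)).2]
end

section
/- (Cartan–Thullen) If U ⊆ ℂⁿ is a domain of holomorphy then U is holomorphically convex. -/
open Set Metric Filter Topology

open scoped ContDiff

/-- Cauchy estimate for the Fréchet derivative. -/
lemma ct_norm_fderiv_le {E F : Type} [NormedAddCommGroup E] [NormedSpace ℂ E]
    [NormedAddCommGroup F] [NormedSpace ℂ F]
    {U : Set E} (hU : IsOpen U) {f : E → F} (hf : DifferentiableOn ℂ f U)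
    {x : E} {s M : ℝ} (hs : 0 < s) (hsub : closedBall x s ⊆ U)
    (hM : ∀ y ∈ closedBall x s, ‖f y‖ ≤ M) : ‖fderiv ℂ f x‖ ≤ M / s := by
  have hM0 : 0 ≤ M := (norm_nonneg _).trans (hM x (mem_closedBall_self hs.le))
  refine ContinuousLinearMap.opNorm_le_bound _ (by positivity) fun v => ?_
  by_cases hv : v = 0
  · simp [hv]
  have hv' : 0 < ‖v‖ := norm_pos_iff.mpr hv
  have hmem : ∀ t ∈ closedBall (0 : ℂ) (s / ‖v‖), x + t • v ∈ closedBall x s := by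
    intro t ht
    rw [mem_closedBall_zero_iff, le_div_iff₀ hv'] at ht
    simpa [mem_closedBall_iff_norm, norm_smul] using ht
  have hx : x ∈ U := hsub (mem_closedBall_self hs.le)
  have hline : ∀ t : ℂ, HasDerivAt (fun t : ℂ => x + t • v) v t := fun t => by
    simpa using ((hasDerivAt_id t).smul_const v).const_add x
  have hder : HasDerivAt (fun t : ℂ => f (x + t • v)) (fderiv ℂ f x v) 0 := by
    have h1 : HasFDerivAt f (fderiv ℂ f x) (x + (0 : ℂ) • v) := by
      simpa using (hf.differentiableAt (hU.mem_nhds hx)).hasFDerivAt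
    exact h1.comp_hasDerivAt (0 : ℂ) (hline 0)
  have hd : DifferentiableOn ℂ (fun t : ℂ => f (x + t • v)) (closedBall 0 (s / ‖v‖)) := by
    intro t ht
    have h1 := hf.differentiableAt (hU.mem_nhds (hsub (hmem t ht)))
    exact (h1.comp t (hline t).differentiableAt).differentiableWithinAt
  have hR : 0 < s / ‖v‖ := by positivity
  have hdc : DiffContOnCl ℂ (fun t : ℂ => f (x + t • v)) (ball 0 (s / ‖v‖)) :=
    DifferentiableOn.diffContOnCl (by rwa [closure_ball _ hR.ne'])
  have := Complex.norm_deriv_le_of_forall_mem_sphere_norm_le hR hdc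
    (fun t ht => hM _ (hmem t (sphere_subset_closedBall ht)))
  rw [hder.deriv] at this
  calc _ ≤ M / (s / ‖v‖) := this
    _ = M / s * ‖v‖ := by field_simp

/-- Differentiation under the integral sign. -/
lemma ct_differentiableAt_integral {n : ℕ} {U : Set (Fin n → ℂ)} (hU : IsOpen U)
    {f : (Fin n → ℂ) → ℂ} (hf : DifferentiableOn ℂ f U) {z : Fin n → ℂ} {ε : ℝ} (hε : 0 < ε)
    (hsub : closedBall z (3 * ε) ⊆ U) {c : ℝ → ℂ} (hc : Continuous c) {m : ℝ → (Fin n → ℂ)}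
    (hm : Continuous m) (hmε : ∀ θ, ‖m θ‖ ≤ ε) (a b : ℝ) :
    DifferentiableAt ℂ (fun x => ∫ θ in a..b, c θ • f (x + m θ)) z := by
  obtain ⟨M, hM⟩ := (isCompact_closedBall z (3 * ε)).exists_bound_of_continuousOn
    (hf.continuousOn.mono hsub)
  have hin : ∀ x ∈ ball z ε, ∀ θ, closedBall (x + m θ) ε ⊆ closedBall z (3 * ε) := by
    intro x hx θ
    apply closedBall_subset_closedBall'
    have h1 : dist (x + m θ) z ≤ ‖m θ‖ + dist x z := by
      rw [dist_eq_norm, dist_eq_norm, show x + m θ - z = m θ + (x - z) by abel]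
      exact norm_add_le _ _
    have := hmε θ
    have := mem_ball.mp hx
    linarith
  have hin' : ∀ x ∈ ball z ε, ∀ θ, x + m θ ∈ U := fun x hx θ =>
    hsub (hin x hx θ (mem_closedBall_self hε.le))
  have hcont : ∀ x ∈ ball z ε, Continuous (fun θ => c θ • f (x + m θ)) := by
    intro x hx
    refine hc.smul ?_
    exact hf.continuousOn.comp_continuous (by fun_prop) (hin' x hx)
  have hz : z ∈ ball z ε := mem_ball_self hε
  have : ProperSpace ((Fin n → ℂ) →L[ℂ] ℂ) := FiniteDimensional.proper ℂ _
  have hmeas : Measurable (fun θ => c θ • fderiv ℂ f (z + m θ)) := by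
    refine hc.measurable.smul ((measurable_fderiv ℂ f).comp ?_)
    exact (by fun_prop : Continuous fun θ => z + m θ).measurable
  have := intervalIntegral.hasFDerivAt_integral_of_dominated_of_fderiv_le
    (𝕜 := ℂ) (μ := MeasureTheory.volume) (a := a) (b := b)
    (F := fun x θ => c θ • f (x + m θ)) (F' := fun x θ => c θ • fderiv ℂ f (x + m θ))
    (x₀ := z) (bound := fun θ => ‖c θ‖ * (M / ε)) (s := ball z ε) (ball_mem_nhds z hε)
    (by
      filter_upwards [ball_mem_nhds z hε] with x hx
      exact (hcont x hx).aestronglyMeasurable)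
    ((hcont z hz).intervalIntegrable _ _)
    hmeas.aestronglyMeasurable
    (by
      refine Eventually.of_forall fun θ _ x hx => ?_
      rw [norm_smul]
      gcongr
      exact ct_norm_fderiv_le hU hf hε ((hin x hx θ).trans hsub)
        fun y hy => hM y (hin x hx θ hy))
    ((by fun_prop : Continuous fun θ => ‖c θ‖ * (M / ε)).intervalIntegrable _ _)
    (by
      refine Eventually.of_forall fun θ _ x hx => ?_
      have h1 := (hf.differentiableAt (hU.mem_nhds (hin' x hx θ))).hasFDerivAt
      have h2 : HasFDerivAt (fun x => f (x + m θ)) (fderiv ℂ f (x + m θ)) x := by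
        simpa using! h1.comp x ((hasFDerivAt_id x).add_const (m θ))
      exact h2.const_smul (c θ))
  exact this.differentiableAt

/-- Directional derivatives of holomorphic functions are holomorphic. -/
lemma ct_differentiableOn_fderiv_apply {n : ℕ} {U : Set (Fin n → ℂ)} (hU : IsOpen U)
    {f : (Fin n → ℂ) → ℂ} (hf : DifferentiableOn ℂ f U) (v : Fin n → ℂ) :
    DifferentiableOn ℂ (fun x => fderiv ℂ f x v) U := by
  intro z hz
  refine DifferentiableAt.differentiableWithinAt ?_
  obtain ⟨δ, hδ, hsub⟩ := Metric.nhds_basis_closedBall.mem_iff.mp (hU.mem_nhds hz)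
  obtain ⟨ε, hε, rfl⟩ : ∃ ε, 0 < ε ∧ 3 * ε = δ := ⟨δ / 3, by positivity, by ring⟩
  set r : ℝ := ε / (‖v‖ + 1) with hr
  have hr0 : 0 < r := by positivity
  have hrv : r * ‖v‖ ≤ ε := by
    rw [hr, div_mul_eq_mul_div, div_le_iff₀ (by positivity)]
    nlinarith [norm_nonneg v]
  have hcm : ∀ θ, circleMap 0 r θ ≠ 0 := fun θ => circleMap_ne_center hr0.ne'
  have key := ct_differentiableAt_integral hU hf hε hsub
    (c := fun θ => deriv (circleMap 0 r) θ * ((circleMap 0 r θ) ^ 2)⁻¹)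
    (by
      simp only [deriv_circleMap]
      refine Continuous.mul (by fun_prop) (Continuous.inv₀ (by fun_prop) ?_)
      intro θ
      exact pow_ne_zero _ (hcm θ))
    (m := fun θ => circleMap 0 r θ • v) (by fun_prop)
    (by
      intro θ
      rw [norm_smul]
      simpa [abs_of_pos hr0] using hrv) 0 (2 * Real.pi)
  refine (key.const_smul ((2 * Real.pi * Complex.I : ℂ)⁻¹)).congr_of_eventuallyEq ?_
  filter_upwards [ball_mem_nhds z hε] with x hx
  set V : Set ℂ := (fun t : ℂ => x + t • v) ⁻¹' U with hV
  have hVo : IsOpen V := hU.preimage (by fun_prop)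
  have hline : ∀ t : ℂ, HasDerivAt (fun t : ℂ => x + t • v) v t := fun t => by
    simpa using ((hasDerivAt_id t).smul_const v).const_add x
  have hVs : closedBall (0 : ℂ) r ⊆ V := by
    intro t ht
    apply hsub
    rw [mem_closedBall_zero_iff] at ht
    have h1 : dist (x + t • v) z ≤ ‖t • v‖ + dist x z := by
      rw [dist_eq_norm, dist_eq_norm, show x + t • v - z = t • v + (x - z) by abel]
      exact norm_add_le _ _
    rw [norm_smul] at h1
    have := mem_ball.mp hx
    have : ‖t‖ * ‖v‖ ≤ r * ‖v‖ := by gcongr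
    rw [mem_closedBall]
    linarith
  have hd : DifferentiableOn ℂ (fun t : ℂ => f (x + t • v)) V := by
    intro t ht
    have h1 := hf.differentiableAt (hU.mem_nhds ht)
    exact (h1.comp t (hline t).differentiableAt).differentiableWithinAt
  have hx0 : x + (0 : ℂ) • v ∈ U := hVs (mem_closedBall_self hr0.le)
  have hder : HasDerivAt (fun t : ℂ => f (x + t • v)) (fderiv ℂ f x v) 0 := by
    have h1 := (hf.differentiableAt (hU.mem_nhds hx0)).hasFDerivAt
    have h2 := h1.comp_hasDerivAt (0 : ℂ) (hline 0)
    simpa using! h2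
  have h3 := Complex.cderiv_eq_deriv hVo hd hr0 hVs
  rw [hder.deriv] at h3
  rw [← h3, Complex.cderiv, circleIntegral]
  simp [mul_assoc]

lemma ct_contDiffOn {n : ℕ} {U : Set (Fin n → ℂ)} (hU : IsOpen U)
    {f : (Fin n → ℂ) → ℂ} (hf : DifferentiableOn ℂ f U) : ContDiffOn ℂ ∞ f U := by
  rw [contDiffOn_infty]
  intro k
  induction k generalizing f with
  | zero => exact contDiffOn_zero.mpr hf.continuousOn
  | succ k ih =>
    push_cast
    rw [contDiffOn_succ_iff_fderiv_apply hU.uniqueDiffOn]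
    refine ⟨hf, fun h => by simp at h, fun v => ?_⟩
    refine (ih (ct_differentiableOn_fderiv_apply hU hf v)).congr fun x hx => ?_
    rw [fderivWithin_of_isOpen hU hx]

/-- Iterated Cauchy estimates. -/
lemma ct_norm_iteratedFDeriv_le {E : Type} [NormedAddCommGroup E] [NormedSpace ℂ E]
    {U : Set E} (hU : IsOpen U) {x : E} {s : ℝ} (hs : 0 < s) (k : ℕ) :
    ∀ {F : Type} [NormedAddCommGroup F] [NormedSpace ℂ F] {f : E → F} {M : ℝ},
      ContDiffOn ℂ ∞ f U → closedBall x (k * s) ⊆ U →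
      (∀ y ∈ closedBall x (k * s), ‖f y‖ ≤ M) → ‖iteratedFDeriv ℂ k f x‖ ≤ M / s ^ k := by
  induction k with
  | zero =>
    intro F _ _ f M hf hsub hM
    simpa using hM x (by simp)
  | succ k ih =>
    intro F _ _ f M hf hsub hM
    have h := (contDiffOn_infty_iff_fderiv_of_isOpen hU).mp hf
    have hb : ∀ y ∈ closedBall x (k * s), closedBall y s ⊆ closedBall x ((k + 1 : ℕ) * s) := by
      intro y hy
      apply closedBall_subset_closedBall'
      have := mem_closedBall.mp hy
      push_cast
      linarith
    rw [← norm_iteratedFDeriv_fderiv]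
    have := ih (M := M / s) h.2
      ((closedBall_subset_closedBall (by push_cast; nlinarith)).trans hsub)
      (fun y hy => ct_norm_fderiv_le hU h.1 hs ((hb y hy).trans hsub)
        fun w hw => hM w (hb y hy hw))
    rwa [div_div, ← pow_succ'] at this

lemma ct_differentiableOn_iteratedFDeriv {n : ℕ} {U : Set (Fin n → ℂ)} (hU : IsOpen U)
    {f : (Fin n → ℂ) → ℂ} (hf : DifferentiableOn ℂ f U) (k : ℕ) :
    DifferentiableOn ℂ (iteratedFDeriv ℂ k f) U := by
  refine ((ct_contDiffOn hU hf).differentiableOn_iteratedFDerivWithin (m := k) ?_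
    hU.uniqueDiffOn).congr fun x hx => (iteratedFDerivWithin_of_isOpen k hU hx).symm
  exact_mod_cast ENat.natCast_lt_top k

/-- Taylor expansion of a holomorphic function of several variables. -/
lemma ct_hasSum {n : ℕ} {U : Set (Fin n → ℂ)} (hU : IsOpen U)
    {f : (Fin n → ℂ) → ℂ} (hf : DifferentiableOn ℂ f U) {z y : Fin n → ℂ} {δ : ℝ}
    (hsub : ball z δ ⊆ U) (hy : ‖y‖ < δ) :
    HasSum (fun k : ℕ => (k.factorial : ℂ)⁻¹ • iteratedFDeriv ℂ k f z (fun _ => y))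
      (f (z + y)) := by
  have hline : ∀ t : ℂ, HasDerivAt (fun t : ℂ => z + t • y) y t := fun t => by
    simpa using ((hasDerivAt_id t).smul_const y).const_add z
  have hVo : IsOpen ((fun t : ℂ => z + t • y) ⁻¹' U) := hU.preimage (by fun_prop)
  obtain ⟨R, hR1, hR⟩ : ∃ R : ℝ, 1 < R ∧ ∀ t ∈ ball (0 : ℂ) R, z + t • y ∈ U := by
    have hδ : 0 < δ := (norm_nonneg y).trans_lt hy
    obtain ⟨q, hq1, hq2⟩ := exists_between hy
    have hq0 : 0 < q := (norm_nonneg y).trans_lt hq1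
    refine ⟨δ / q, (one_lt_div hq0).mpr hq2, fun t ht => hsub ?_⟩
    rw [mem_ball_zero_iff, lt_div_iff₀ hq0] at ht
    rw [mem_ball_iff_norm, add_sub_cancel_left, norm_smul]
    exact lt_of_le_of_lt (by gcongr) ht
  have hiter : ∀ k : ℕ, ∀ t : ℂ, z + t • y ∈ U →
      iteratedDeriv k (fun t : ℂ => f (z + t • y)) t
        = iteratedFDeriv ℂ k f (z + t • y) (fun _ => y) := by
    intro k
    induction k with
    | zero => intro t ht; simp
    | succ k ih =>
      intro t ht
      have hev : iteratedDeriv k (fun t : ℂ => f (z + t • y)) =ᶠ[𝓝 t]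
          fun t => iteratedFDeriv ℂ k f (z + t • y) (fun _ => y) := by
        filter_upwards [hVo.mem_nhds ht] with u hu using ih u hu
      rw [iteratedDeriv_succ, hev.deriv_eq, iteratedFDeriv_succ_apply_left]
      have h1 := ((ct_differentiableOn_iteratedFDeriv hU hf k).differentiableAt
        (hU.mem_nhds ht)).hasFDerivAt
      have h2 := h1.comp_hasDerivAt t (hline t)
      have h3 := (ContinuousMultilinearMap.apply ℂ (fun _ : Fin k => Fin n → ℂ) ℂ
        (fun _ => y)).hasFDerivAt.comp_hasDerivAt t h2
      exact h3.deriv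
  have hd : DifferentiableOn ℂ (fun t : ℂ => f (z + t • y)) (ball 0 R) := by
    intro t ht
    have h1 := hf.differentiableAt (hU.mem_nhds (hR t ht))
    exact (h1.comp t (hline t).differentiableAt).differentiableWithinAt
  have := Complex.hasSum_taylorSeries_on_ball (c := 0) (r := R) (z := 1) hd (by simpa using hR1)
  have h0 : z + (0 : ℂ) • y ∈ U := hR 0 (by simpa using zero_lt_one.trans hR1)
  simpa [hiter _ 0 h0] using this

/-- Key step: a uniform ball around every point of the hull is contained in `U`. -/
lemma ct_exists_ball {n : ℕ} {U : Set (Fin n → ℂ)} (hU : IsOpen U)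
    {f : (Fin n → ℂ) → ℂ} (hf : DifferentiableOn ℂ f U)
    (hext : ∀ a ∈ Uᶜ, ¬ ExtendsHolomorphicallyTo U f a)
    {K : Set (Fin n → ℂ)} (hKU : K ⊆ U) (hK : IsCompact K) :
    ∃ ρ > 0, ∀ z ∈ holConvexHull U K, ball z ρ ⊆ U := by
  obtain ⟨r, hr, hrU⟩ := hK.exists_cthickening_subset_open hU hKU
  obtain ⟨M, hM⟩ := (hK.cthickening (r := r)).exists_bound_of_continuousOn
    (hf.continuousOn.mono hrU)
  set M' := max M 0
  have hM' : 0 ≤ M' := le_max_right _ _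
  have hest : ∀ k : ℕ, ∀ w ∈ K,
      ‖iteratedFDeriv ℂ k f w‖ ≤ M' * (k.factorial * (Real.exp 1 / r) ^ k) := by
    intro k w hw
    have hcb : closedBall w r ⊆ cthickening r K := closedBall_subset_cthickening hw r
    rcases Nat.eq_zero_or_pos k with rfl | hk
    · have h0 : ‖f w‖ ≤ M' := (hM w (hcb (mem_closedBall_self hr.le))).trans (le_max_left M 0)
      simpa using h0
    have hk' : (0 : ℝ) < k := by exact_mod_cast hk
    have hkr : (k : ℝ) * (r / k) = r := by field_simp
    have h1 := ct_norm_iteratedFDeriv_le hU (x := w) (s := r / k) (by positivity) k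
      (M := M') (ct_contDiffOn hU hf) (by rw [hkr]; exact hcb.trans hrU)
      (by rw [hkr]; exact fun y hy => (hM y (hcb hy)).trans (le_max_left _ _))
    refine h1.trans ?_
    rw [div_eq_mul_inv]
    gcongr
    have h2 := Real.pow_div_factorial_le_exp (x := k) hk'.le k
    rw [div_le_iff₀ (by positivity), ← Real.exp_one_pow] at h2
    rw [← inv_pow, inv_div, div_pow, div_pow, ← mul_div_assoc]
    gcongr
    linarith
  refine ⟨r / Real.exp 1, by positivity, fun z hz => ?_⟩
  have hzU : z ∈ U := hz.1
  have hKne : Nonempty K := by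
    by_contra hne
    rw [not_nonempty_iff] at hne
    have := hz.2 (fun _ => 1) (differentiableOn_const _)
    simp at this
    linarith
  have hestz : ∀ k : ℕ,
      ‖iteratedFDeriv ℂ k f z‖ ≤ M' * (k.factorial * (Real.exp 1 / r) ^ k) := by
    intro k
    refine ContinuousMultilinearMap.opNorm_le_bound (by positivity) fun v => ?_
    have hdv : DifferentiableOn ℂ (fun x => iteratedFDeriv ℂ k f x v) U :=
      (ContinuousMultilinearMap.apply ℂ (fun _ : Fin k => Fin n → ℂ) ℂ
        v).differentiable.comp_differentiableOn (ct_differentiableOn_iteratedFDeriv hU hf k)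
    refine (hz.2 _ hdv).trans (ciSup_le fun w => ?_)
    exact (ContinuousMultilinearMap.le_opNorm _ v).trans
      (mul_le_mul_of_nonneg_right (hest k w w.2) (by positivity))
  let p : FormalMultilinearSeries ℂ (Fin n → ℂ) ℂ :=
    fun k => (k.factorial : ℂ)⁻¹ • iteratedFDeriv ℂ k f z
  set ρ : NNReal := ⟨r / Real.exp 1, by positivity⟩ with hρ
  have hρv : (ρ : ℝ) = r / Real.exp 1 := rfl
  have hρ0 : 0 < ρ := by
    rw [← NNReal.coe_pos, hρv]; positivity
  have hrad : (ρ : ENNReal) ≤ p.radius := by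
    refine p.le_radius_of_bound M' fun k => ?_
    have : ‖p k‖ = (k.factorial : ℝ)⁻¹ * ‖iteratedFDeriv ℂ k f z‖ := by
      simp [p, norm_smul]
    rw [this, hρv]
    calc _ ≤ (k.factorial : ℝ)⁻¹ * (M' * (k.factorial * (Real.exp 1 / r) ^ k))
          * (r / Real.exp 1) ^ k := by
            gcongr
            exact hestz k
      _ = M' * ((Real.exp 1 / r) * (r / Real.exp 1)) ^ k := by
            rw [mul_pow]; field_simp
      _ = M' := by
            rw [show Real.exp 1 / r * (r / Real.exp 1) = 1 by field_simp]; simp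
  have hps := (p.hasFPowerSeriesOnBall
    (lt_of_lt_of_le (by exact_mod_cast hρ0) hrad)).mono (by exact_mod_cast hρ0) hrad
  have hpd : DifferentiableOn ℂ p.sum (ball 0 (r / Real.exp 1)) := by
    have := hps.differentiableOn
    rwa [Metric.eball_coe, hρv] at this
  intro a ha
  by_contra haU
  refine hext a haU ⟨ball z (r / Real.exp 1), isOpen_ball, ?_, ha, fun x => p.sum (x - z), ?_, ?_⟩
  · exact ((convex_ball z _).isConnected ⟨z, mem_ball_self (by positivity)⟩)
  · refine hpd.comp (by fun_prop) fun x hx => ?_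
    rw [mem_ball_zero_iff, ← mem_ball_iff_norm]
    exact hx
  · obtain ⟨δ, hδ, hsub⟩ := Metric.isOpen_iff.mp hU z hzU
    refine ⟨ball z (min δ (r / Real.exp 1)), isOpen_ball,
      ⟨z, mem_ball_self (lt_min hδ (by positivity))⟩, ?_, ?_⟩
    · exact subset_inter ((ball_subset_ball (min_le_left _ _)).trans hsub)
        (ball_subset_ball (min_le_right _ _))
    · intro x hx
      have hx' : ‖x - z‖ < δ := by
        rw [← mem_ball_iff_norm]; exact ball_subset_ball (min_le_left _ _) hx
      have := (ct_hasSum hU hf hsub hx').tsum_eq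
      rw [add_sub_cancel] at this
      rw [← this]
      simp [FormalMultilinearSeries.sum, p]

/-- (Cartan–Thullen) Every domain of holomorphy is holomorphically convex. -/
theorem isDomainOfHolomorphy_holomorphicallyConvex {n : ℕ} (U : Set (Fin n → ℂ))
    (h : IsDomainOfHolomorphy U) : HolomorphicallyConvex U := by
  obtain ⟨hU, -, f, hf, hext⟩ := h
  intro K hKU hK
  obtain ⟨ρ, hρ, hball⟩ := ct_exists_ball hU hf hext hKU hK
  refine Metric.isCompact_of_isClosed_isBounded ?_ ?_
  · refine isClosed_of_closure_subset fun z hz => ?_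
    have hzU : z ∈ U := by
      obtain ⟨w, hw, hzw⟩ := Metric.mem_closure_iff.mp hz ρ hρ
      exact hball w hw hzw
    refine ⟨hzU, fun g hg => ?_⟩
    have hc : ContinuousWithinAt (fun x => ‖g x‖) (holConvexHull U K) z :=
      ((hg.continuousOn.norm) z hzU).mono fun x hx => hx.1
    exact (isClosed_Iic (a := ⨆ w : K, ‖g w‖)).closure_subset_iff.mpr
      (by rintro _ ⟨x, hx, rfl⟩; exact hx.2 g hg) (hc.mem_closure_image hz)
  · obtain ⟨C, hC⟩ := hK.isBounded.exists_norm_le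
    rw [isBounded_iff_forall_norm_le]
    refine ⟨max C 0, fun z hz => ?_⟩
    rw [pi_norm_le_iff_of_nonneg (le_max_right _ _)]
    intro i
    refine (hz.2 (fun x => x i) (by fun_prop)).trans (Real.iSup_le (fun w => ?_) (le_max_right _ _))
    exact (norm_le_pi_norm _ i).trans ((hC w w.2).trans (le_max_left _ _))
end

section
/- Let {U_λ}_{λ∈Λ} be a family of domains of holomorphy in ℂⁿ, and let U be a connected component of the interior of ⋂_{λ∈Λ} U_λ. Then U is a domain of holomorphy. -/
open Set Metric Filter Topology

lemma line_diff {n : ℕ} {f : (Fin n → ℂ) → ℂ} {S : Set (Fin n → ℂ)} (hf : DifferentiableOn ℂ f S)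
    (p w : Fin n → ℂ) {T : Set ℂ} (hT : ∀ ζ ∈ T, p + ζ • w ∈ S) :
    DifferentiableOn ℂ (fun ζ : ℂ => f (p + ζ • w)) T := by
  apply hf.comp (g := f) (f := fun ζ : ℂ => p + ζ • w)
  · fun_prop
  · exact hT

lemma norm_fderiv_le {n : ℕ} {f : (Fin n → ℂ) → ℂ} {z w : Fin n → ℂ} {ρ C : ℝ} (hρ : 0 < ρ)
    (hf : DifferentiableOn ℂ f (ball z (2 * ρ))) (hC : ∀ y ∈ ball z (2 * ρ), ‖f y‖ ≤ C)
    (hw : w ∈ ball z ρ) : ‖fderiv ℂ f w‖ ≤ C / ρ := by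
  have hw2 : w ∈ ball z (2 * ρ) := ball_subset_ball (by linarith) hw
  have hC0 : 0 ≤ C := (norm_nonneg _).trans (hC w hw2)
  refine ContinuousLinearMap.opNorm_le_bound _ (by positivity) fun v => ?_
  rcases eq_or_ne v 0 with rfl | hv
  · simp
  have hv' : 0 < ‖v‖ := norm_pos_iff.2 hv
  have hmem : ∀ ζ ∈ closedBall (0 : ℂ) (ρ / ‖v‖), w + ζ • v ∈ ball z (2 * ρ) := by
    intro ζ hζ
    rw [mem_closedBall_zero_iff, le_div_iff₀ hv'] at hζ
    rw [mem_ball, dist_eq_norm] at hw ⊢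
    calc ‖w + ζ • v - z‖ = ‖(w - z) + ζ • v‖ := by congr 1; abel
      _ ≤ ‖w - z‖ + ‖ζ • v‖ := norm_add_le _ _
      _ < 2 * ρ := by rw [norm_smul]; linarith
  have hd := line_diff hf w v hmem
  have hR : 0 < ρ / ‖v‖ := by positivity
  have h1 := Complex.norm_deriv_le_of_forall_mem_sphere_norm_le (c := 0) (C := C) hR
    (DifferentiableOn.diffContOnCl (by rwa [closure_ball _ hR.ne']))
    (fun ζ hζ => hC _ (hmem ζ (sphere_subset_closedBall hζ)))
  have h2 : HasDerivAt (fun ζ : ℂ => f (w + ζ • v)) (fderiv ℂ f w v) 0 := by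
    have hfa : HasFDerivAt f (fderiv ℂ f w) (w + (0 : ℂ) • v) := by
      simpa using (hf.differentiableAt (isOpen_ball.mem_nhds hw2)).hasFDerivAt
    have hl : HasDerivAt (fun ζ : ℂ => w + ζ • v) v 0 := by
      simpa using ((hasDerivAt_id (0 : ℂ)).smul_const v).const_add w
    exact hfa.comp_hasDerivAt (0 : ℂ) hl
  rw [h2.deriv] at h1
  calc _ ≤ _ := h1
    _ = _ := by field_simp

lemma tsum_diffAt {n : ℕ} {ι : Type*} {u : ι → (Fin n → ℂ) → ℂ} {b : ι → ℝ} (hb : Summable b)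
    {z : Fin n → ℂ} {r : ℝ} (hr : 0 < r) (hu : ∀ j, DifferentiableOn ℂ (u j) (ball z r))
    (hub : ∀ j, ∀ y ∈ ball z r, ‖u j y‖ ≤ b j) :
    DifferentiableAt ℂ (fun y => ∑' j, u j y) z := by
  have hρ : 0 < r / 2 := by positivity
  have e : 2 * (r / 2) = r := by ring
  have hz : z ∈ ball z (r / 2) := mem_ball_self hρ
  refine (hasFDerivAt_tsum_of_isPreconnected (f := u) (f' := fun j => fderiv ℂ (u j))
    (hb.div_const (r / 2)) isOpen_ball
    (convex_ball z (r / 2)).isPreconnected (fun j y hy => ?_) (fun j y hy => ?_) hz ?_ hz).differentiableAt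
  · exact ((hu j).differentiableAt (isOpen_ball.mem_nhds
      (ball_subset_ball (by linarith) hy))).hasFDerivAt
  · exact norm_fderiv_le hρ (by rw [e]; exact hu j) (by rw [e]; exact hub j) hy
  · exact Summable.of_norm_bounded hb fun j => hub j z (mem_ball_self hr)

/-- Taylor coefficient along a line. -/
noncomputable def tc {n : ℕ} (f : (Fin n → ℂ) → ℂ) (p : Fin n → ℂ) (k : ℕ) (w : Fin n → ℂ) : ℂ :=
  (k.factorial : ℂ)⁻¹ * iteratedDeriv k (fun ζ : ℂ => f (p + ζ • w)) 0

lemma line_mem {n : ℕ} {p w : Fin n → ℂ} {r : ℝ} (hw : ‖w‖ < 1) {ζ : ℂ}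
    (hr : 0 < r) (hζ : ζ ∈ closedBall (0 : ℂ) r) : p + ζ • w ∈ ball p r := by
  rw [mem_closedBall_zero_iff] at hζ
  rw [mem_ball, dist_eq_norm, add_sub_cancel_left, norm_smul]
  calc ‖ζ‖ * ‖w‖ ≤ r * ‖w‖ := by gcongr
    _ < r * 1 := by gcongr
    _ = r := mul_one r

lemma tc_bound {n : ℕ} {f : (Fin n → ℂ) → ℂ} {p w : Fin n → ℂ} {r C : ℝ} (hr : 0 < r)
    (hf : DifferentiableOn ℂ f (ball p r)) (hC : ∀ y ∈ ball p r, ‖f y‖ ≤ C) (k : ℕ)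
    (hw : ‖w‖ < 1) : ‖tc f p k w‖ * r ^ k ≤ C := by
  have hd := line_diff hf p w (T := closedBall 0 r) (fun ζ hζ => line_mem hw hr hζ)
  have h1 := Complex.norm_iteratedDeriv_le_of_forall_mem_sphere_norm_le (c := 0) (C := C) k hr
    (DifferentiableOn.diffContOnCl (by rwa [closure_ball _ hr.ne']))
    (fun ζ hζ => hC _ (line_mem hw hr (sphere_subset_closedBall hζ)))
  have hk : (0 : ℝ) < k.factorial := by exact_mod_cast k.factorial_pos
  unfold tc
  rw [norm_mul, norm_inv, Complex.norm_natCast]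
  calc _ ≤ (k.factorial : ℝ)⁻¹ * (k.factorial * C / r ^ k) * r ^ k := by gcongr
    _ = C := by field_simp

lemma tc_congr {n : ℕ} {f g : (Fin n → ℂ) → ℂ} {p w : Fin n → ℂ} (h : f =ᶠ[𝓝 p] g) (k : ℕ) :
    tc f p k w = tc g p k w := by
  unfold tc
  congr 1
  apply Filter.EventuallyEq.iteratedDeriv_eq
  have hc : Tendsto (fun ζ : ℂ => p + ζ • w) (𝓝 0) (𝓝 p) := by
    have : Continuous (fun ζ : ℂ => p + ζ • w) := by fun_prop
    simpa using this.tendsto 0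
  exact hc.eventually h

lemma tc_contDiff {n : ℕ} {f : (Fin n → ℂ) → ℂ} {p w : Fin n → ℂ} {S : Set (Fin n → ℂ)}
    (hS : S ∈ 𝓝 p) (hf : DifferentiableOn ℂ f S) (k : ℕ) :
    ContDiffAt ℂ k (fun ζ : ℂ => f (p + ζ • w)) 0 := by
  have hc : Tendsto (fun ζ : ℂ => p + ζ • w) (𝓝 0) (𝓝 p) := by
    have : Continuous (fun ζ : ℂ => p + ζ • w) := by fun_prop
    simpa using this.tendsto 0
  have := line_diff hf p w (T := (fun ζ : ℂ => p + ζ • w) ⁻¹' S) (fun ζ hζ => hζ)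
  exact (this.analyticAt (hc hS)).contDiffAt

lemma tc_add {n : ℕ} {f g : (Fin n → ℂ) → ℂ} {p w : Fin n → ℂ} {S : Set (Fin n → ℂ)}
    (hS : S ∈ 𝓝 p) (hf : DifferentiableOn ℂ f S) (hg : DifferentiableOn ℂ g S) (k : ℕ) :
    tc (fun z => f z + g z) p k w = tc f p k w + tc g p k w := by
  unfold tc
  rw [iteratedDeriv_fun_add (tc_contDiff hS hf k) (tc_contDiff hS hg k), mul_add]

lemma tc_smul {n : ℕ} {f : (Fin n → ℂ) → ℂ} {p w : Fin n → ℂ} (c : ℂ) (k : ℕ) :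
    tc (fun z => c * f z) p k w = c * tc f p k w := by
  unfold tc
  rw [iteratedDeriv_const_mul_field]
  ring

lemma tc_eq_integral {n : ℕ} {f : (Fin n → ℂ) → ℂ} {p w : Fin n → ℂ} {r : ℝ} (hr : 0 < r)
    (hf : DifferentiableOn ℂ f (ball p r)) (k : ℕ) (hw : ‖w‖ < 1) :
    tc f p k w = (2 * Real.pi * Complex.I)⁻¹ *
      ∮ ζ in C(0, r), ζ⁻¹ ^ (k + 1) * f (p + ζ • w) := by
  have hd := line_diff hf p w (T := closedBall 0 r) (fun ζ hζ => line_mem hw hr hζ)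
  have h := DiffContOnCl.circleIntegral_one_div_sub_center_pow_smul hr k
    (DifferentiableOn.diffContOnCl (by rwa [closure_ball _ hr.ne']))
  simp only [sub_zero, one_div, smul_eq_mul, ← inv_pow] at h
  rw [h, tc]
  have : (2 * Real.pi * Complex.I) ≠ 0 := by simp [Real.pi_ne_zero]
  have hk : (k.factorial : ℂ) ≠ 0 := by exact_mod_cast k.factorial_ne_zero
  field_simp

lemma tc_diff {n : ℕ} {f : (Fin n → ℂ) → ℂ} {p : Fin n → ℂ} {r C : ℝ} (hr : 0 < r)
    (hf : DifferentiableOn ℂ f (ball p (2 * r))) (hC : ∀ y ∈ ball p (2 * r), ‖f y‖ ≤ C) (k : ℕ) :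
    DifferentiableOn ℂ (tc f p k) (ball 0 1) := by
  have hsub : ball p r ⊆ ball p (2 * r) := ball_subset_ball (by linarith)
  have hfr : DifferentiableOn ℂ f (ball p r) := hf.mono hsub
  have hz : ∀ θ : ℝ, circleMap 0 r θ ∈ closedBall (0 : ℂ) r := fun θ =>
    circleMap_mem_closedBall 0 hr.le θ
  have hz0 : ∀ θ : ℝ, circleMap 0 r θ ≠ 0 := fun θ => circleMap_ne_center hr.ne'
  have hm : ∀ w : Fin n → ℂ, ‖w‖ < 1 → ∀ θ : ℝ, p + circleMap 0 r θ • w ∈ ball p r :=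
    fun w hw θ => line_mem hw hr (hz θ)
  have hcm : Continuous (circleMap 0 r) := continuous_circleMap 0 r
  have hcF : ∀ w : Fin n → ℂ, ‖w‖ < 1 → Continuous (fun θ : ℝ => deriv (circleMap 0 r) θ •
      ((circleMap 0 r θ)⁻¹ ^ (k + 1) * f (p + circleMap 0 r θ • w))) := by
    intro w hw
    have h1 : Continuous (fun θ : ℝ => f (p + circleMap 0 r θ • w)) :=
      hfr.continuousOn.comp_continuous (by fun_prop) (hm w hw)
    have h2 : Continuous (fun θ : ℝ => (circleMap 0 r θ)⁻¹) := hcm.inv₀ hz0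
    simp only [deriv_circleMap]
    exact (hcm.mul continuous_const).smul ((h2.pow _).mul h1)
  intro w₀ hw₀
  rw [mem_ball_zero_iff] at hw₀
  have hnb : ball (0 : Fin n → ℂ) 1 ∈ 𝓝 w₀ := isOpen_ball.mem_nhds (by simpa using hw₀)
  have key := intervalIntegral.hasFDerivAt_integral_of_dominated_of_fderiv_le
    (𝕜 := ℂ) (μ := MeasureTheory.volume) (a := 0) (b := 2 * Real.pi)
    (F := fun (w : Fin n → ℂ) (θ : ℝ) => deriv (circleMap 0 r) θ •
      ((circleMap 0 r θ)⁻¹ ^ (k + 1) * f (p + circleMap 0 r θ • w)))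
    (F' := fun (w : Fin n → ℂ) (θ : ℝ) => (deriv (circleMap 0 r) θ *
      ((circleMap 0 r θ)⁻¹ ^ (k + 1) * circleMap 0 r θ)) • fderiv ℂ f (p + circleMap 0 r θ • w))
    (bound := fun _ => (r * (r⁻¹ ^ (k + 1) * r)) * (C / r)) (x₀ := w₀) hnb ?_ ?_ ?_ ?_ ?_ ?_
  · have h3 : DifferentiableAt ℂ (fun w => (2 * Real.pi * Complex.I)⁻¹ *
        ∮ ζ in C(0, r), ζ⁻¹ ^ (k + 1) * f (p + ζ • w)) w₀ := by
      exact (key.differentiableAt).const_mul _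
    refine (h3.congr_of_eventuallyEq ?_).differentiableWithinAt
    filter_upwards [hnb] with w hw
    exact tc_eq_integral hr hfr k (by simpa using hw)
  · filter_upwards [hnb] with w hw
    exact (hcF w (by simpa using hw)).aestronglyMeasurable
  · exact (hcF w₀ hw₀).intervalIntegrable _ _
  · apply Measurable.aestronglyMeasurable
    have h2 : Continuous (fun θ : ℝ => (circleMap 0 r θ)⁻¹) := hcm.inv₀ hz0
    simp only [deriv_circleMap]
    have h3 : Continuous (fun θ : ℝ => circleMap 0 r θ * Complex.I *
        ((circleMap 0 r θ)⁻¹ ^ (k + 1) * circleMap 0 r θ)) :=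
      (hcm.mul continuous_const).mul ((h2.pow _).mul hcm)
    have h4 : Measurable (fun θ : ℝ => fderiv ℂ f (p + circleMap 0 r θ • w₀)) :=
      (measurable_fderiv ℂ f).comp (Continuous.measurable (by fun_prop))
    exact h3.measurable.smul h4
  · refine Eventually.of_forall fun θ _ w hw => ?_
    rw [norm_smul]
    have h4 := norm_fderiv_le hr hf hC (hm w (by simpa using hw) θ)
    simp only [norm_mul, norm_pow, norm_inv, deriv_circleMap, norm_circleMap_zero,
      Complex.norm_I, mul_one, abs_of_pos hr]
    gcongr
  · exact intervalIntegrable_const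
  · refine Eventually.of_forall fun θ _ w hw => ?_
    have h5 : HasFDerivAt f (fderiv ℂ f (p + circleMap 0 r θ • w)) (p + circleMap 0 r θ • w) :=
      (hfr.differentiableAt (isOpen_ball.mem_nhds (hm w (by simpa using hw) θ))).hasFDerivAt
    have h6 : HasFDerivAt (fun w : Fin n → ℂ => p + circleMap 0 r θ • w)
        (circleMap 0 r θ • ContinuousLinearMap.id ℂ (Fin n → ℂ)) w :=
      ((hasFDerivAt_id w).const_smul (circleMap 0 r θ)).const_add p
    have h7 := ((h5.comp w h6).const_mul ((circleMap 0 r θ)⁻¹ ^ (k + 1))).const_smul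
      (deriv (circleMap 0 r) θ)
    refine h7.congr_fderiv ?_
    apply ContinuousLinearMap.ext
    intro v
    simp only [ContinuousLinearMap.smul_apply, ContinuousLinearMap.comp_apply,
      ContinuousLinearMap.id_apply, map_smul, smul_eq_mul]
    ring

/-- Cauchy bounds on the line coefficients produce an extension. -/
lemma extend_of_bound {n : ℕ} {f : (Fin n → ℂ) → ℂ} {p : Fin n → ℂ} {δ C R M R' : ℝ} (hδ : 0 < δ)
    (hf : DifferentiableOn ℂ f (ball p (2 * δ))) (hC : ∀ y ∈ ball p (2 * δ), ‖f y‖ ≤ C)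
    (hR' : 0 < R') (hR : R' < R) (hM : ∀ k w, ‖w‖ < 1 → ‖tc f p k w‖ * R ^ k ≤ M) :
    ∃ g : (Fin n → ℂ) → ℂ, DifferentiableOn ℂ g (ball p R') ∧ f =ᶠ[𝓝 p] g := by
  have hRp : 0 < R := hR'.trans hR
  have hR'0 : (R' : ℂ) ≠ 0 := by exact_mod_cast hR'.ne'
  let u : ℕ → (Fin n → ℂ) → ℂ := fun k y => tc f p k ((R' : ℂ)⁻¹ • (y - p)) * (R' : ℂ) ^ k
  have hmaps : ∀ y ∈ ball p R', (R' : ℂ)⁻¹ • (y - p) ∈ ball (0 : Fin n → ℂ) 1 := by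
    intro y hy
    rw [mem_ball, dist_eq_norm] at hy
    rw [mem_ball_zero_iff, norm_smul, norm_inv, Complex.norm_real, Real.norm_of_nonneg hR'.le,
      inv_mul_lt_iff₀ hR']
    linarith
  have hu : ∀ k, DifferentiableOn ℂ (u k) (ball p R') := by
    intro k
    refine DifferentiableOn.mul_const ?_ _
    refine (tc_diff hδ hf hC k).comp (f := fun y => (R' : ℂ)⁻¹ • (y - p)) ?_ hmaps
    fun_prop
  have hub : ∀ k, ∀ y ∈ ball p R', ‖u k y‖ ≤ M * (R' / R) ^ k := by
    intro k y hy
    have := hM k _ (mem_ball_zero_iff.1 (hmaps y hy))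
    rw [norm_mul, norm_pow, Complex.norm_real, Real.norm_of_nonneg hR'.le, div_pow,
      ← mul_div_assoc, le_div_iff₀ (by positivity)]
    calc _ = (‖tc f p k ((R' : ℂ)⁻¹ • (y - p))‖ * R ^ k) * R' ^ k := by ring
      _ ≤ _ := by gcongr
  have hsum : Summable (fun k : ℕ => M * (R' / R) ^ k) :=
    (summable_geometric_of_lt_one (by positivity) ((div_lt_one hRp).2 hR)).mul_left M
  refine ⟨fun y => ∑' k, u k y, ?_, ?_⟩
  · intro y hy
    obtain ⟨r, hr, hrs⟩ := Metric.isOpen_iff.1 isOpen_ball y hy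
    exact (tsum_diffAt hsum hr (fun k => (hu k).mono hrs)
      (fun k x hx => hub k x (hrs hx))).differentiableWithinAt
  · filter_upwards [ball_mem_nhds p hδ] with y hy
    rw [mem_ball, dist_eq_norm] at hy
    set w : Fin n → ℂ := (R' : ℂ)⁻¹ • (y - p) with hw
    have hwn : R' * ‖w‖ = ‖y - p‖ := by
      rw [hw, norm_smul, norm_inv, Complex.norm_real, Real.norm_of_nonneg hR'.le]
      field_simp
    have hd := line_diff hf p w (T := ball 0 (R' * 2)) (by
      intro ζ hζ
      rw [mem_ball_zero_iff] at hζ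
      rw [mem_ball, dist_eq_norm, add_sub_cancel_left, norm_smul]
      calc ‖ζ‖ * ‖w‖ ≤ (R' * 2) * ‖w‖ := by gcongr
        _ < 2 * δ := by linarith)
    have h := Complex.hasSum_taylorSeries_on_ball hd (z := (R' : ℂ)) (by
      rw [mem_ball_zero_iff, Complex.norm_real, Real.norm_of_nonneg hR'.le]; linarith)
    have e : p + (R' : ℂ) • w = y := by
      rw [hw, smul_smul, mul_inv_cancel₀ hR'0, one_smul]; abel
    rw [← e, ← h.tsum_eq]
    refine tsum_congr fun k => ?_
    simp only [u, tc]
    rw [e, ← hw]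
    simp only [sub_zero, smul_eq_mul]
    ring

lemma ident {n : ℕ} {f g : (Fin n → ℂ) → ℂ} {z y : Fin n → ℂ} {r : ℝ}
    (hf : DifferentiableOn ℂ f (ball z r)) (hg : DifferentiableOn ℂ g (ball z r))
    (hy : y ∈ ball z r) (h : f =ᶠ[𝓝 y] g) : EqOn f g (ball z r) := by
  intro x hx
  let T : Set ℂ := {ζ | y + ζ • (x - y) ∈ ball z r}
  have hTc : Convex ℝ T := by
    intro a ha b hb s t hs ht hst
    have := convex_ball z r ha hb hs ht hst
    have e : s • (y + a • (x - y)) + t • (y + b • (x - y)) = y + (s • a + t • b) • (x - y) := by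
      obtain rfl : t = 1 - s := by linarith
      ext i
      simp only [Pi.add_apply, Pi.smul_apply, Pi.sub_apply, Complex.real_smul, smul_eq_mul]
      push_cast
      ring
    rw [e] at this
    exact this
  have hcont : Continuous (fun ζ : ℂ => y + ζ • (x - y)) := by fun_prop
  have hTo : IsOpen T := isOpen_ball.preimage hcont
  have h1 := (line_diff hf y (x - y) (T := T) (fun ζ hζ => hζ)).analyticOnNhd hTo
  have h2 := (line_diff hg y (x - y) (T := T) (fun ζ hζ => hζ)).analyticOnNhd hTo
  have h0 : (0 : ℂ) ∈ T := by simpa [T] using hy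
  have h1' : (1 : ℂ) ∈ T := by simpa [T] using hx
  have he : (fun ζ : ℂ => f (y + ζ • (x - y))) =ᶠ[𝓝 0] (fun ζ : ℂ => g (y + ζ • (x - y))) := by
    have : Tendsto (fun ζ : ℂ => y + ζ • (x - y)) (𝓝 0) (𝓝 y) := by
      simpa using hcont.tendsto 0
    exact this.eventually h
  simpa using h1.eqOn_of_preconnected_of_eventuallyEq h2 hTc.isPreconnected h0 he h1'

lemma exists_weights {n : ℕ} {Ω : Set (Fin n → ℂ)} (hΩ : IsOpen Ω) (h : ℕ → (Fin n → ℂ) → ℂ)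
    (hh : ∀ k, DifferentiableOn ℂ (h k) Ω) :
    ∃ ε : ℕ → ℝ, (∀ k, 0 < ε k) ∧ ∀ z ∈ Ω, ∃ r > 0, ball z r ⊆ Ω ∧ ∃ b : ℕ → ℝ, Summable b ∧
      ∀ k, ∀ y ∈ ball z r, ‖(ε k : ℂ) * h k y‖ ≤ b k := by
  have : LocallyCompactSpace Ω := hΩ.locallyCompactSpace
  let K : CompactExhaustion Ω := CompactExhaustion.choice Ω
  have hB : ∀ k m, ∃ B : ℝ, 0 ≤ B ∧ ∀ y ∈ K m, ‖h k y‖ ≤ B := by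
    intro k m
    have hc : ContinuousOn (fun y : Ω => h k y) (K m) :=
      ((hh k).continuousOn.comp_continuous continuous_subtype_val (fun y => y.2)).continuousOn
    obtain ⟨B, hB⟩ := (K.isCompact m).exists_bound_of_continuousOn hc
    exact ⟨max B 0, le_max_right _ _, fun y hy => (hB y hy).trans (le_max_left _ _)⟩
  choose B hB0 hB using hB
  refine ⟨fun k => (1 / 2) ^ k / (1 + B k k), fun k => ?_, fun z hz => ?_⟩
  · have := hB0 k k
    positivity
  obtain ⟨m, hm⟩ := K.exists_mem ⟨z, hz⟩
  have hm' := K.subset_interior_succ m hm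
  have ho : IsOpen (Subtype.val '' interior (K (m + 1)) : Set (Fin n → ℂ)) :=
    hΩ.isOpenMap_subtype_val _ isOpen_interior
  obtain ⟨r, hr, hrs⟩ := Metric.isOpen_iff.1 ho z ⟨_, hm', rfl⟩
  refine ⟨r, hr, fun y hy => ?_, fun k => (1 / 2) ^ k +
    if k < m + 1 then (1 / 2) ^ k / (1 + B k k) * B k (m + 1) else 0, ?_, ?_⟩
  · obtain ⟨y', -, rfl⟩ := hrs hy
    exact y'.2
  · refine (summable_geometric_of_lt_one (by norm_num) (by norm_num)).add ?_
    refine summable_of_ne_finset_zero (s := Finset.range (m + 1)) fun k hk => ?_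
    rw [if_neg (by simpa using hk)]
  · intro k y hy
    obtain ⟨y', hy', rfl⟩ := hrs hy
    have hy'' : y' ∈ K (m + 1) := interior_subset hy'
    have h0 := hB0 k k
    have hpos : (0 : ℝ) ≤ (1 / 2) ^ k / (1 + B k k) := by positivity
    rw [norm_mul, Complex.norm_real, Real.norm_of_nonneg hpos]
    dsimp only
    split_ifs with hk
    · have h1 := mul_le_mul_of_nonneg_left (hB k (m + 1) y' hy'') hpos
      have h2 : (0 : ℝ) ≤ (1 / 2) ^ k := by positivity
      linarith
    · have hy3 : y' ∈ K k := K.subset (not_lt.1 hk) hy''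
      have h1 := mul_le_mul_of_nonneg_left (hB k k y' hy3) hpos
      refine h1.trans ?_
      rw [add_zero, div_mul_eq_mul_div, div_le_iff₀ (by positivity)]
      have h2 : (0 : ℝ) ≤ (1 / 2) ^ k := by positivity
      nlinarith

lemma condensation {n : ℕ} {Ω : Set (Fin n → ℂ)} (hΩ : IsOpen Ω) (h : ℕ → (Fin n → ℂ) → ℂ)
    (hh : ∀ k, DifferentiableOn ℂ (h k) Ω) {J : Type*} [Countable J] (pt : J → Fin n → ℂ)
    (R : J → ℝ) (hR : ∀ j, 0 < R j) (hpt : ∀ j, pt j ∈ Ω)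
    (hunb : ∀ j, ∃ k, ∀ M : ℝ, ∃ m w, ‖w‖ < 1 ∧ M < ‖tc (h k) (pt j) m w‖ * R j ^ m) :
    ∃ f, DifferentiableOn ℂ f Ω ∧
      ∀ j, ∀ M : ℝ, ∃ m w, ‖w‖ < 1 ∧ M < ‖tc f (pt j) m w‖ * R j ^ m := by
  obtain ⟨ε, hε, hloc⟩ := exists_weights hΩ h hh
  let X := BoundedContinuousFunction ℕ ℂ
  let T : X → (Fin n → ℂ) → ℂ := fun c y => ∑' k, c k * ((ε k : ℂ) * h k y)
  have hterm : ∀ (c : X) (k : ℕ) (y : Fin n → ℂ) (b : ℝ), ‖(ε k : ℂ) * h k y‖ ≤ b →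
      ‖c k * ((ε k : ℂ) * h k y)‖ ≤ ‖c‖ * b := by
    intro c k y b hb
    rw [norm_mul]
    have := c.norm_coe_le_norm k
    gcongr
  have hsumm : ∀ (c : X), ∀ y ∈ Ω, Summable (fun k => c k * ((ε k : ℂ) * h k y)) := by
    intro c y hy
    obtain ⟨r, hr, -, b, hb, hbd⟩ := hloc y hy
    exact Summable.of_norm_bounded (hb.mul_left ‖c‖)
      fun k => hterm c k y _ (hbd k y (mem_ball_self hr))
  have hTd : ∀ c, DifferentiableOn ℂ (T c) Ω := by
    intro c y hy
    obtain ⟨r, hr, hrs, b, hb, hbd⟩ := hloc y hy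
    refine (tsum_diffAt (hb.mul_left ‖c‖) hr (fun k => ?_)
      (fun k x hx => hterm c k x _ (hbd k x hx))).differentiableWithinAt
    exact (((hh k).mono hrs).const_mul _).const_mul _
  have hL : ∀ p ∈ Ω, ∀ (m : ℕ) (w : Fin n → ℂ), ‖w‖ < 1 →
      ∃ L : X →L[ℂ] ℂ, ∀ c, L c = tc (T c) p m w := by
    intro p hp m w hw
    obtain ⟨r, hr, hrs, b, hb, hbd⟩ := hloc p hp
    let L0 : X →ₗ[ℂ] ℂ :=
      { toFun := fun c => tc (T c) p m w
        map_add' := by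
          intro c d
          rw [← tc_add (hΩ.mem_nhds hp) (hTd c) (hTd d)]
          apply tc_congr
          filter_upwards [hΩ.mem_nhds hp] with y hy
          simp only [T]
          rw [← (hsumm c y hy).tsum_add (hsumm d y hy)]
          refine tsum_congr fun k => ?_
          change (c k + d k) * _ = _
          ring
        map_smul' := by
          intro a c
          rw [RingHom.id_apply, smul_eq_mul, ← tc_smul]
          apply tc_congr
          filter_upwards [hΩ.mem_nhds hp] with y hy
          simp only [T]
          rw [← tsum_mul_left]
          refine tsum_congr fun k => ?_
          change (a * c k) * _ = _
          ring }
    refine ⟨L0.mkContinuous ((∑' k, b k) / r ^ m) fun c => ?_, fun c => rfl⟩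
    have hC : ∀ y ∈ ball p r, ‖T c y‖ ≤ ‖c‖ * ∑' k, b k := by
      intro y hy
      rw [← tsum_mul_left]
      exact tsum_of_norm_bounded (hb.mul_left ‖c‖).hasSum fun k => hterm c k y _ (hbd k y hy)
    have := tc_bound hr ((hTd c).mono hrs) hC m hw
    rw [div_mul_eq_mul_div, le_div_iff₀ (by positivity), mul_comm (∑' k, b k)]
    exact this
  by_contra hcon
  push Not at hcon
  let F : J × ℕ → Set X := fun q => {c | ∀ m w, ‖w‖ < 1 →
    ‖tc (T c) (pt q.1) m w‖ * R q.1 ^ m ≤ (q.2 : ℝ)}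
  have hFc : ∀ q, IsClosed (F q) := by
    intro q
    simp only [F, ofPred_forall]
    refine isClosed_iInter fun m => isClosed_iInter fun w => isClosed_iInter fun hw => ?_
    obtain ⟨L, hL⟩ := hL (pt q.1) (hpt _) m w hw
    simp only [← hL]
    exact isClosed_le (by fun_prop) continuous_const
  have hFu : ⋃ q, F q = univ := by
    refine eq_univ_of_forall fun c => ?_
    obtain ⟨j, M, hM⟩ := hcon (T c) (hTd c)
    obtain ⟨N, hN⟩ := exists_nat_ge M
    exact mem_iUnion.2 ⟨(j, N), fun m w hw => (hM m w hw).trans hN⟩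
  obtain ⟨⟨j, N⟩, c₀, hc₀⟩ := nonempty_interior_of_iUnion_of_closed hFc hFu
  obtain ⟨s, hs, hsub⟩ := Metric.isOpen_iff.1 isOpen_interior c₀ hc₀
  obtain ⟨k, hk⟩ := hunb j
  let e : X := BoundedContinuousFunction.ofNormedAddCommGroup (fun i => if i = k then (1 : ℂ) else 0)
    continuous_of_discreteTopology 1 (fun i => by split_ifs <;> simp)
  have hek : ∀ i, e i = if i = k then (1 : ℂ) else 0 := fun i => rfl
  have hen : ‖e‖ ≤ 1 := BoundedContinuousFunction.norm_ofNormedAddCommGroup_le _ zero_le_one _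
  have hTe : T e = fun y => (ε k : ℂ) * h k y := by
    funext y
    simp only [T]
    rw [tsum_eq_single k (fun i hi => by rw [hek, if_neg hi, zero_mul]), hek, if_pos rfl, one_mul]
  obtain ⟨m, w, hw, hbig⟩ := hk (2 * N / (s / 2 * ε k))
  obtain ⟨L, hL⟩ := hL (pt j) (hpt j) m w hw
  have h1 : c₀ ∈ F (j, N) := interior_subset hc₀
  have h2 : c₀ + ((s / 2 : ℝ) : ℂ) • e ∈ F (j, N) := by
    apply interior_subset
    apply hsub
    rw [mem_ball, dist_eq_norm, add_sub_cancel_left, norm_smul, Complex.norm_real,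
      Real.norm_of_nonneg (by positivity)]
    nlinarith
  have h1' := h1 m w hw
  have h2' := h2 m w hw
  simp only [← hL] at h1' h2'
  have h3 : ‖L (((s / 2 : ℝ) : ℂ) • e)‖ * R j ^ m ≤ 2 * N := by
    have e1 : L (((s / 2 : ℝ) : ℂ) • e) = L (c₀ + ((s / 2 : ℝ) : ℂ) • e) - L c₀ := by
      rw [map_add, add_sub_cancel_left]
    have hRm : 0 < R j ^ m := pow_pos (hR j) m
    rw [e1]
    have := norm_sub_le (L (c₀ + ((s / 2 : ℝ) : ℂ) • e)) (L c₀)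
    nlinarith
  rw [map_smul, hL, hTe, tc_smul, smul_eq_mul, norm_mul, norm_mul, Complex.norm_real,
    Complex.norm_real, Real.norm_of_nonneg (by positivity), Real.norm_of_nonneg (hε k).le] at h3
  have hε' := hε k
  rw [div_lt_iff₀ (by positivity)] at hbig
  nlinarith

/-- Any connected component `U` of the interior of an intersection of a family of domains of
holomorphy is a domain of holomorphy. -/
theorem component_of_interior_iInter_isDomainOfHolomorphy {n : ℕ} {ι : Type*}
    (U : ι → Set (Fin n → ℂ)) (hU : ∀ l, IsDomainOfHolomorphy (U l))
    (x : Fin n → ℂ) (hx : x ∈ interior (⋂ l, U l)) :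
    IsDomainOfHolomorphy (connectedComponentIn (interior (⋂ l, U l)) x) := by
  set Ω := connectedComponentIn (interior (⋂ l, U l)) x with hΩdef
  have hΩ : IsOpen Ω := isOpen_interior.connectedComponentIn
  have hΩsub : Ω ⊆ interior (⋂ l, U l) := connectedComponentIn_subset _ _
  have hΩU : ∀ l, Ω ⊆ U l := fun l =>
    hΩsub.trans (interior_subset.trans (iInter_subset _ l))
  refine ⟨hΩ, isConnected_connectedComponentIn_iff.2 hx, ?_⟩
  let P : ℕ → Fin n → ℂ := TopologicalSpace.denseSeq (Fin n → ℂ)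
  let J := {q : ℕ × ℚ // P q.1 ∈ Ω ∧ (0 : ℝ) < q.2 ∧ ¬ ball (P q.1) (q.2 : ℝ) ⊆ Ω}
  have hJ : ∀ j : J, ∃ f : (Fin n → ℂ) → ℂ, DifferentiableOn ℂ f Ω ∧
      ∀ M : ℝ, ∃ m w, ‖w‖ < 1 ∧ M < ‖tc f (P j.1.1) m w‖ * (j.1.2 : ℝ) ^ m := by
    rintro ⟨⟨i, q⟩, hp, hq, hns⟩
    dsimp only at hp hq hns ⊢
    obtain ⟨a, ha, haΩ⟩ := not_subset.1 hns
    obtain ⟨R', hR'1, hR'2⟩ := exists_between (mem_ball.1 ha)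
    have hR'0 : 0 < R' := dist_nonneg.trans_lt hR'1
    have hex : ∃ l, ∃ c ∈ ball (P i) R', c ∉ U l := by
      by_contra hcon
      push Not at hcon
      apply haΩ
      have hb : ball (P i) R' ⊆ interior (⋂ l, U l) :=
        interior_maximal (subset_iInter fun l c hc => hcon l c hc) isOpen_ball
      have := (convex_ball (P i) R').isPreconnected.subset_connectedComponentIn
        (mem_ball_self hR'0) hb
      rw [← connectedComponentIn_eq hp] at this
      exact this (mem_ball.2 hR'1)
    obtain ⟨l, c, hc, hcl⟩ := hex
    obtain ⟨hUo, -, f, hf, hfe⟩ := hU l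
    refine ⟨f, hf.mono (hΩU l), ?_⟩
    by_contra hcon
    push Not at hcon
    obtain ⟨M, hM⟩ := hcon
    obtain ⟨ρ, hρ, hρs⟩ := Metric.nhds_basis_closedBall.mem_iff.1 (hΩ.mem_nhds hp)
    obtain ⟨C, hC⟩ := (isCompact_closedBall (P i) ρ).exists_bound_of_continuousOn
      ((hf.mono (hΩU l)).continuousOn.mono hρs)
    have e : 2 * (ρ / 2) = ρ := by ring
    obtain ⟨g, hg, hgf⟩ := extend_of_bound (half_pos hρ)
      (by rw [e]; exact hf.mono ((ball_subset_closedBall.trans hρs).trans (hΩU l)))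
      (by rw [e]; exact fun y hy => hC y (ball_subset_closedBall hy)) hR'0 hR'2 hM
    obtain ⟨W, hWs, hWo, hW⟩ := _root_.mem_nhds_iff.1 (inter_mem hgf (inter_mem (hΩ.mem_nhds hp)
      (ball_mem_nhds (P i) hR'0)))
    exact hfe c hcl ⟨ball (P i) R', isOpen_ball,
      ⟨⟨_, mem_ball_self hR'0⟩, (convex_ball _ _).isPreconnected⟩, hc, g, hg, W, hWo, ⟨_, hW⟩,
      fun y hy => ⟨hΩU l (hWs hy).2.1, (hWs hy).2.2⟩, fun y hy => (hWs hy).1⟩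
  have hseq : ∃ h : ℕ → (Fin n → ℂ) → ℂ, (∀ k, DifferentiableOn ℂ (h k) Ω) ∧
      ∀ j : J, ∃ k, ∀ M : ℝ, ∃ m w, ‖w‖ < 1 ∧
        M < ‖tc (h k) (P j.1.1) m w‖ * (j.1.2 : ℝ) ^ m := by
    choose H hH1 hH2 using hJ
    rcases isEmpty_or_nonempty J with hem | hne
    · exact ⟨fun _ _ => 0, fun _ => differentiableOn_const _, fun j => hem.elim j⟩
    · obtain ⟨φ, hφ⟩ := exists_surjective_nat J
      refine ⟨fun k => H (φ k), fun k => hH1 _, fun j => ?_⟩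
      obtain ⟨k, rfl⟩ := hφ j
      exact ⟨k, hH2 _⟩
  obtain ⟨h, hh, hunb⟩ := hseq
  obtain ⟨f, hf, hfu⟩ := condensation hΩ h hh (fun j : J => P j.1.1) (fun j : J => (j.1.2 : ℝ))
    (fun j => j.2.2.1) (fun j => j.2.1) hunb
  refine ⟨f, hf, ?_⟩
  rintro a ha ⟨V, hVo, hVc, haV, g, hg, W, hWo, ⟨w₀, hw₀⟩, hWs, hfg⟩
  let A : Set (Fin n → ℂ) := {z | z ∈ Ω ∩ V ∧ f =ᶠ[𝓝 z] g}
  have hAo : IsOpen A := (hΩ.inter hVo).inter isOpen_setOfPred_eventually_nhds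
  have hw₀A : w₀ ∈ A := ⟨hWs hw₀, by filter_upwards [hWo.mem_nhds hw₀] with y hy using hfg hy⟩
  have hb : ∃ b ∈ closure A ∩ V, b ∉ A := by
    by_contra hcon
    push Not at hcon
    exact ha (hVc.isPreconnected.subset_of_closure_inter_subset hAo ⟨w₀, (hWs hw₀).2, hw₀A⟩
      (fun b hb => hcon b hb) haV).1.1
  obtain ⟨b, ⟨hbc, hbV⟩, hbA⟩ := hb
  have hbΩ : b ∉ Ω := by
    intro hbΩ
    obtain ⟨r, hr, hrs⟩ := Metric.isOpen_iff.1 (hΩ.inter hVo) b ⟨hbΩ, hbV⟩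
    obtain ⟨y, hy, hyA⟩ := mem_closure_iff.1 hbc _ isOpen_ball (mem_ball_self hr)
    have := ident (hf.mono fun z hz => (hrs hz).1) (hg.mono fun z hz => (hrs hz).2) hy hyA.2
    exact hbA ⟨⟨hbΩ, hbV⟩, by filter_upwards [ball_mem_nhds b hr] with z hz using this hz⟩
  obtain ⟨ρ, hρ, hρs⟩ := Metric.isOpen_iff.1 hVo b hbV
  obtain ⟨q, hq0, hq⟩ := exists_rat_btwn (show (0 : ℝ) < ρ / 3 by positivity)
  have hne : (A ∩ ball b (q : ℝ)).Nonempty := by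
    obtain ⟨y, hy, hyA⟩ := mem_closure_iff.1 hbc _ isOpen_ball (mem_ball_self hq0)
    exact ⟨y, hyA, hy⟩
  obtain ⟨p, hpm, i, rfl⟩ := (TopologicalSpace.denseRange_denseSeq (Fin n → ℂ)).inter_open_nonempty
    _ (hAo.inter isOpen_ball) hne
  obtain ⟨hpA, hpb⟩ := hpm
  have hcb : closedBall (P i) (q : ℝ) ⊆ V := by
    intro y hy
    apply hρs
    have h1 : dist y (P i) ≤ q := hy
    have h2 : dist (P i) b < q := hpb
    have := dist_triangle y (P i) b
    rw [mem_ball]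
    linarith
  obtain ⟨M, hM⟩ := (isCompact_closedBall (P i) (q : ℝ)).exists_bound_of_continuousOn
    (hg.continuousOn.mono hcb)
  obtain ⟨m, w, hw, hbig⟩ := hfu ⟨(i, q), hpA.1.1, hq0, fun hs => hbΩ (hs (mem_ball'.2 hpb))⟩ M
  dsimp only at hbig
  have e1 : tc f (P i) m w = tc g (P i) m w := tc_congr hpA.2 m
  rw [e1] at hbig
  have := tc_bound hq0 (hg.mono (ball_subset_closedBall.trans hcb))
    (fun y hy => hM y (ball_subset_closedBall hy)) m hw
  linarith
end

section
/- Let U ⊆ ℂⁿ be a domain of holomorphy and φ : U → ℂⁿ a biholomorphic mapping onto its (open) image. Then φ(U) is a domain of holomorphy. -/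
open Set Metric Filter Topology

section aux
variable {E F : Type*} [NormedAddCommGroup E] [NormedSpace ℂ E]
  [NormedAddCommGroup F] [NormedSpace ℂ F]

/-- Cauchy estimate. -/
lemma aux_cauchy {f : E → F} {c : E} {R M : ℝ} (hR : 0 < R)
    (hd : DifferentiableOn ℂ f (ball c R)) (hM : ∀ z ∈ ball c R, ‖f z‖ ≤ M) :
    ‖fderiv ℂ f c‖ ≤ 2 * M / R := by
  refine Complex.norm_fderiv_le_div_of_mapsTo_ball hd ?_ hR
  intro z hz
  rw [mem_closedBall, dist_eq_norm]
  have h1 := hM z hz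
  have h2 := hM c (mem_ball_self hR)
  have h3 := norm_sub_le (f z) (f c)
  linarith

/-- Uniform limits of holomorphic maps are holomorphic. -/
lemma aux_unif [CompleteSpace F] {q : ℕ → E → F} {g : E → F} {c : E} {R : ℝ} (hR : 0 < R)
    (hd : ∀ n, DifferentiableOn ℂ (q n) (ball c R))
    (hq : TendstoUniformlyOn q g atTop (ball c R)) : DifferentiableAt ℂ g c := by
  have hC : UniformCauchySeqOn (fun n => fderiv ℂ (q n)) atTop (ball c (R/2)) := by
    rw [Metric.uniformCauchySeqOn_iff]
    intro ε hε
    have hq' := Metric.uniformCauchySeqOn_iff.1 hq.uniformCauchySeqOn (ε * R / 8) (by positivity)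
    obtain ⟨N, hN⟩ := hq'
    refine ⟨N, fun m hm n hn x hx => ?_⟩
    have hsub : ball x (R/2) ⊆ ball c R := ball_subset_ball' (by
      rw [mem_ball] at hx; linarith)
    have hxc : x ∈ ball c R := hsub (mem_ball_self (by positivity))
    have hdx : ∀ n, DifferentiableAt ℂ (q n) x := fun n =>
      (hd n).differentiableAt (isOpen_ball.mem_nhds hxc)
    have := aux_cauchy (f := fun z => q m z - q n z) (c := x) (R := R/2) (M := ε * R / 8)
      (by positivity) (((hd m).mono hsub).sub ((hd n).mono hsub)) (fun z hz => by
        rw [← dist_eq_norm]; exact (hN m hm n hn z (hsub hz)).le)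
    rw [fderiv_fun_sub (hdx m) (hdx n)] at this
    rw [dist_eq_norm]
    refine this.trans_lt ?_
    rw [div_lt_iff₀ (by positivity)]
    nlinarith [mul_pos hε hR]
  have hlim : ∀ x ∈ ball c (R/2), ∃ L, Tendsto (fun n => fderiv ℂ (q n) x) atTop (𝓝 L) := by
    intro x hx
    exact cauchySeq_tendsto_of_complete (hC.cauchySeq hx)
  choose! g' hg' using hlim
  have hsub : ball c (R/2) ⊆ ball c R := ball_subset_ball (by linarith)
  refine (hasFDerivAt_of_tendstoUniformlyOn (f := q) (x := c) isOpen_ball (hC.tendstoUniformlyOn_of_tendsto hg')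
    (fun n x hx => ?_) (fun x hx => ?_) (mem_ball_self (by positivity))).differentiableAt
  · exact ((hd n).differentiableAt (isOpen_ball.mem_nhds (hsub hx))).hasFDerivAt
  · exact hq.tendsto_at (hsub hx)

lemma aux_fderiv_apply [CompleteSpace F] {f : E → F} {s : Set E} (hs : IsOpen s)
    (hf : DifferentiableOn ℂ f s) (v : E) : DifferentiableOn ℂ (fun z => fderiv ℂ f z v) s := by
  let _ : NormedSpace ℝ E := NormedSpace.restrictScalars ℝ ℂ E
  intro x hx
  apply DifferentiableAt.differentiableWithinAt
  obtain ⟨R, M, hR, hM0, hRs, hM⟩ : ∃ R M : ℝ, 0 < R ∧ 0 ≤ M ∧ ball x (4 * R) ⊆ s ∧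
      ∀ z ∈ ball x (4 * R), ‖f z‖ ≤ M := by
    have hc : ContinuousAt f x := (hf.differentiableAt (hs.mem_nhds hx)).continuousAt
    have h1 : ∀ᶠ z in 𝓝 x, ‖f z‖ < ‖f x‖ + 1 :=
      hc.norm.eventually_lt continuousAt_const (by simp)
    obtain ⟨r, hr, h⟩ := Metric.eventually_nhds_iff_ball.1 (h1.and (hs.mem_nhds hx))
    have e : 4 * (r / 4) = r := by ring
    exact ⟨r/4, ‖f x‖ + 1, by positivity, by positivity, by rw [e]; exact fun z hz => (h z hz).2,
      by rw [e]; exact fun z hz => (h z hz).1.le⟩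
  have hd4 : DifferentiableOn ℂ f (ball x (4 * R)) := hf.mono hRs
  have hda : ∀ z ∈ ball x (4 * R), DifferentiableAt ℂ f z := fun z hz =>
    hd4.differentiableAt (isOpen_ball.mem_nhds hz)
  set L := 2 * M / R with hL
  have hL0 : 0 ≤ L := by positivity
  have h34 : ball x (3 * R) ⊆ ball x (4 * R) := ball_subset_ball (by linarith)
  have hL3 : ∀ z ∈ ball x (3 * R), ‖fderiv ℂ f z‖ ≤ L := fun z hz => by
    have hsub : ball z R ⊆ ball x (4 * R) := ball_subset_ball' (by
      rw [mem_ball] at hz; linarith)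
    exact aux_cauchy hR (hd4.mono hsub) fun y hy => hM y (hsub hy)
  have hadd : ∀ z h : E, ∀ r : ℝ, z ∈ ball x r → ‖h‖ < R → z + h ∈ ball x (r + R) := by
    intro z h r hz hh
    rw [mem_ball, dist_eq_norm] at *
    calc ‖z + h - x‖ = ‖(z - x) + h‖ := by congr 1; abel
      _ ≤ ‖z - x‖ + ‖h‖ := norm_add_le _ _
      _ < r + R := by linarith
  set K := 2 * L / R with hK
  have hK0 : 0 ≤ K := by positivity
  have hlip : ∀ z ∈ ball x R, ∀ h : E, ‖h‖ < R →
      ‖fderiv ℂ f (z + h) - fderiv ℂ f z‖ ≤ K * ‖h‖ := by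
    intro z hz h hh
    have hsub : ball z R ⊆ ball x (2 * R) := ball_subset_ball' (by
      rw [mem_ball] at hz; linarith)
    have hsub2 : ball x (2 * R) ⊆ ball x (4 * R) := ball_subset_ball (by linarith)
    have hsub3 : ball x (2 * R) ⊆ ball x (3 * R) := ball_subset_ball (by linarith)
    have hmem3 : ∀ y ∈ ball z R, y + h ∈ ball x (3 * R) := fun y hy => by
      have := hadd y h (2 * R) (hsub hy) hh
      convert this using 2; ring
    have hdz : ∀ y ∈ ball z R, DifferentiableAt ℂ (fun w => f (w + h)) y := fun y hy =>
      DifferentiableAt.fun_comp' (g := f) y (hda _ (h34 (hmem3 y hy))) (by fun_prop)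
    have hz0 : z ∈ ball z R := mem_ball_self hR
    have := aux_cauchy (f := fun w => f (w + h) - f w) (c := z) (R := R) (M := L * ‖h‖) hR
      (fun y hy => ((hdz y hy).sub (hda y (hsub2 (hsub hy)))).differentiableWithinAt)
      (fun y hy => by
        have := (convex_ball x (3 * R)).norm_image_sub_le_of_norm_fderiv_le (𝕜 := ℂ) (f := f)
          (fun w hw => hda w (h34 hw)) hL3 (hsub3 (hsub hy)) (hmem3 y hy)
        simpa using this)
    rw [fderiv_fun_sub (hdz z hz0) (hda z (hsub2 (hsub hz0))), fderiv_comp_add_right] at this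
    refine this.trans (le_of_eq ?_)
    rw [hK]; ring
  obtain ⟨N, hN⟩ := exists_nat_gt (‖v‖ / R)
  have hc : ∀ n : ℕ, (0:ℝ) < n + N + 1 := fun n => by positivity
  set t : ℕ → ℂ := fun n => ((n + N + 1 : ℝ) : ℂ) with ht
  have htn : ∀ n, ‖t n‖ = n + N + 1 := fun n => by
    rw [ht, Complex.norm_real, Real.norm_of_nonneg (hc n).le]
  have ht0 : ∀ n, t n ≠ 0 := fun n => by
    rw [← norm_pos_iff, htn]; exact hc n
  have hv : ∀ n, ‖(t n)⁻¹ • v‖ = ‖v‖ / (n + N + 1) := fun n => by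
    rw [norm_smul, norm_inv, htn]; ring
  have hvR : ∀ n, ‖(t n)⁻¹ • v‖ < R := fun n => by
    rw [hv, div_lt_iff₀ (hc n)]
    rw [div_lt_iff₀ hR] at hN
    nlinarith [mul_nonneg (Nat.cast_nonneg (α := ℝ) n) hR.le]
  have h14 : ball x R ⊆ ball x (4 * R) := ball_subset_ball (by linarith)
  refine aux_unif (q := fun n z => t n • (f (z + (t n)⁻¹ • v) - f z)) hR ?_ ?_
  · intro n z hz
    have h1 := hadd z _ R hz (hvR n)
    have h2 : z + (t n)⁻¹ • v ∈ ball x (4 * R) := ball_subset_ball (by linarith) h1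
    have h3 : DifferentiableAt ℂ (fun w => f (w + (t n)⁻¹ • v)) z :=
      DifferentiableAt.fun_comp' (g := f) z (hda _ h2) (by fun_prop)
    exact ((h3.sub
      (hda z (h14 hz))).const_smul (t n)).differentiableWithinAt
  · have hb : ∀ n : ℕ, ∀ z ∈ ball x R,
        ‖fderiv ℂ f z v - t n • (f (z + (t n)⁻¹ • v) - f z)‖ ≤ K * ‖v‖ ^ 2 / (n + N + 1) := by
      intro n z hz
      set h := (t n)⁻¹ • v with hh
      have hv' : v = t n • h := by rw [hh, smul_inv_smul₀ (ht0 n)]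
      have hm := (convex_segment z (z + h)).norm_image_sub_le_of_norm_fderiv_le' (𝕜 := ℂ) (f := f)
        (φ := fderiv ℂ f z) (C := K * ‖h‖) (x := z) (y := z + h) ?_ ?_
        (left_mem_segment _ _ _) (right_mem_segment _ _ _)
      · have e : fderiv ℂ f z v - t n • (f (z + h) - f z)
            = - (t n • (f (z + h) - f z - fderiv ℂ f z (z + h - z))) := by
          rw [hv', map_smul]; simp [smul_sub]
        rw [e, norm_neg, norm_smul]
        calc ‖t n‖ * _ ≤ ‖t n‖ * (K * ‖h‖ * ‖z + h - z‖) := by gcongr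
          _ = K * ‖v‖ ^ 2 / (n + N + 1) := by
            rw [add_sub_cancel_left, htn, hv]; have := (hc n).ne'; field_simp
      · intro w hw
        rw [segment_eq_image'] at hw
        obtain ⟨θ, hθ, rfl⟩ := hw
        have hn : ‖θ • (z + h - z)‖ ≤ ‖h‖ := by
          rw [norm_smul, add_sub_cancel_left, Real.norm_of_nonneg hθ.1]
          exact mul_le_of_le_one_left (norm_nonneg _) hθ.2
        exact hda _ (ball_subset_ball (by linarith) (hadd z _ R hz (hn.trans_lt (hvR n))))
      · intro w hw
        rw [segment_eq_image'] at hw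
        obtain ⟨θ, hθ, rfl⟩ := hw
        have hn : ‖θ • (z + h - z)‖ ≤ ‖h‖ := by
          rw [norm_smul, add_sub_cancel_left, Real.norm_of_nonneg hθ.1]
          exact mul_le_of_le_one_left (norm_nonneg _) hθ.2
        refine (hlip z hz _ (hn.trans_lt (hvR n))).trans ?_
        gcongr
    rw [Metric.tendstoUniformlyOn_iff]
    intro ε hε
    have hl : Tendsto (fun n : ℕ => K * ‖v‖ ^ 2 / ((n:ℝ) + N + 1)) atTop (𝓝 0) := by
      apply Tendsto.const_div_atTop
      exact tendsto_atTop_add_const_right _ _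
        (tendsto_atTop_add_const_right _ _ tendsto_natCast_atTop_atTop)
    filter_upwards [hl.eventually_lt_const hε] with n hn z hz
    rw [dist_eq_norm]
    exact (hb n z hz).trans_lt hn

lemma aux_fderiv [FiniteDimensional ℂ E] [CompleteSpace F] {f : E → F} {s : Set E} (hs : IsOpen s)
    (hf : DifferentiableOn ℂ f s) : DifferentiableOn ℂ (fderiv ℂ f) s := by
  have h := fun v => aux_fderiv_apply hs hf v
  let d := Module.finrank ℂ E
  have hd : d = Module.finrank ℂ (Fin d → ℂ) := (Module.finrank_fin_fun ℂ).symm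
  let e₁ := ContinuousLinearEquiv.ofFinrankEq hd
  let e₂ := (e₁.arrowCongr (1 : F ≃L[ℂ] F)).trans (ContinuousLinearEquiv.piRing (Fin d))
  rw [← Function.id_comp (fderiv ℂ f), ← e₂.symm_comp_self]
  exact e₂.symm.differentiable.comp_differentiableOn (differentiableOn_pi.mpr fun i => h _)

/-- Identity theorem. -/
lemma aux_identity_s11 [CompleteSpace F] {f g : E → F} {V : Set E} (hV : IsOpen V)
    (hVc : IsPreconnected V)
    (hf : DifferentiableOn ℂ f V) (hg : DifferentiableOn ℂ g V) {q : E} (hq : q ∈ V)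
    (hfg : f =ᶠ[𝓝 q] g) : EqOn f g V := by
  let _ : NormedSpace ℝ E := NormedSpace.restrictScalars ℝ ℂ E
  have key : V ⊆ {x | f =ᶠ[𝓝 x] g} := by
    refine hVc.subset_of_closure_inter_subset isOpen_setOfPred_eventually_nhds ⟨q, hq, hfg⟩ ?_
    rintro p ⟨hp, hpV⟩
    obtain ⟨r, hr, hrV⟩ := Metric.isOpen_iff.1 hV p hpV
    obtain ⟨y, hy, hyp⟩ := Metric.mem_closure_iff.1 hp r hr
    rw [dist_comm] at hyp
    refine Filter.mem_of_superset (ball_mem_nhds p hr) fun x hx => ?_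
    -- slice
    let l : ℂ → E := fun c => y + c • (x - y)
    have hl : Differentiable ℂ l := by fun_prop
    let S : Set ℂ := l ⁻¹' ball p r
    have hSo : IsOpen S := isOpen_ball.preimage hl.continuous
    have hSc : Convex ℝ S := by
      intro a ha b hb s t hs ht hst
      have h1 := convex_ball p r ha hb hs ht hst
      have e : l (s • a + t • b) = s • l a + t • l b := by
        simp only [l, smul_add, add_smul, smul_assoc]
        have : y = s • y + t • y := by rw [← add_smul, hst, one_smul]
        nth_rewrite 1 [this]
        abel
      show l _ ∈ ball p r
      rw [e]; exact h1
    have hfl : AnalyticOnNhd ℂ (f ∘ l) S :=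
      ((hf.mono hrV).comp hl.differentiableOn (fun c hc => hc)).analyticOnNhd hSo
    have hgl : AnalyticOnNhd ℂ (g ∘ l) S :=
      ((hg.mono hrV).comp hl.differentiableOn (fun c hc => hc)).analyticOnNhd hSo
    have h0 : (0:ℂ) ∈ S := by show l 0 ∈ ball p r; simpa [l] using hyp
    have h1 : (1:ℂ) ∈ S := by show l 1 ∈ ball p r; simpa [l] using hx
    have hev : f ∘ l =ᶠ[𝓝 0] g ∘ l := by
      have : Tendsto l (𝓝 0) (𝓝 y) := by
        have := hl.continuous.tendsto 0
        simpa [l] using this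
      exact this.eventually hy
    have := hfl.eqOn_of_preconnected_of_eventuallyEq hgl hSc.isPreconnected h0 hev h1
    simpa [l] using this
  intro x hx
  exact (key hx).self_of_nhds

/-- Boundary point of a component. -/
lemma aux_bdry {V S : Set E} (hV : IsOpen V) (hVc : IsPreconnected V) (hS : IsOpen S)
    {x : E} (hxV : x ∈ V) (hxS : x ∈ S) (hVS : ¬ V ⊆ S) :
    ∃ p ∈ V, p ∉ S ∧ p ∈ closure (connectedComponentIn (V ∩ S) x) := by
  let _ : NormedSpace ℝ E := NormedSpace.restrictScalars ℝ ℂ E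
  by_contra! hcon
  apply hVS
  have hx : x ∈ V ∩ S := ⟨hxV, hxS⟩
  have hO := (hV.inter hS).connectedComponentIn (x := x)
  refine Subset.trans (hVc.subset_of_closure_inter_subset hO
    ⟨x, hxV, mem_connectedComponentIn hx⟩ ?_)
    ((connectedComponentIn_subset _ _).trans inter_subset_right)
  rintro p ⟨hp, hpV⟩
  have hpS : p ∈ S := by
    by_contra h
    exact hcon p hpV h hp
  have hO' := (hV.inter hS).connectedComponentIn (x := p)
  have hpp : p ∈ connectedComponentIn (V ∩ S) p := mem_connectedComponentIn ⟨hpV, hpS⟩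
  obtain ⟨y, hy1, hy2⟩ := mem_closure_iff.1 hp _ hO' hpp
  rw [connectedComponentIn_eq hy2, ← connectedComponentIn_eq hy1]
  exact hpp

/-- A countable union of proper subspaces is not everything. -/
lemma aux_baire_s11 [FiniteDimensional ℂ E] {ι : Type*} [Countable ι] (p : ι → Submodule ℂ E)
    (hp : ∀ i, p i ≠ ⊤) : ∃ v, ∀ i, v ∉ p i := by
  by_contra! hcon
  have : CompleteSpace E := FiniteDimensional.complete ℂ E
  obtain ⟨i, hi⟩ := nonempty_interior_of_iUnion_of_closed (f := fun i => (p i : Set E))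
    (fun i => (p i).closed_of_finiteDimensional) (by
      ext v; simpa using hcon v)
  exact hp i ((p i).eq_top_of_nonempty_interior' hi)

/-- Reduction to countably many concentric balls. -/
lemma aux_reduce {U V W D : Set E} {h g : E → ℂ} (hU : IsOpen U)
    (hh : DifferentiableOn ℂ h U) (hV : IsOpen V) (hVc : IsPreconnected V) {a : E} (haV : a ∈ V)
    (haU : a ∉ U) (hg : DifferentiableOn ℂ g V) (hW : IsOpen W) (hWn : W.Nonempty)
    (hWU : W ⊆ U ∩ V) (hhg : EqOn h g W) (hD : Dense D) :
    ∃ q ∈ D, ∃ r : ℚ, q ∈ U ∧ 0 < (r:ℝ) ∧ ¬ ball q r ⊆ U ∧ DifferentiableOn ℂ g (ball q r) ∧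
      g =ᶠ[𝓝 q] h := by
  let _ : NormedSpace ℝ E := NormedSpace.restrictScalars ℝ ℂ E
  obtain ⟨x, hx⟩ := hWn
  obtain ⟨p, hpV, hpU, hp⟩ := aux_bdry hV hVc hU (hWU hx).2 (hWU hx).1 (fun hs => haU (hs haV))
  set C := connectedComponentIn (V ∩ U) x with hC
  have hCo : IsOpen C := (hV.inter hU).connectedComponentIn
  have hCs : C ⊆ V ∩ U := connectedComponentIn_subset _ _
  have hxC : x ∈ C := mem_connectedComponentIn ⟨(hWU hx).2, (hWU hx).1⟩
  have hEq : EqOn h g C := aux_identity_s11 hCo isPreconnected_connectedComponentIn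
    (hh.mono (hCs.trans inter_subset_right)) (hg.mono (hCs.trans inter_subset_left)) hxC
    (hhg.eventuallyEq_of_mem (hW.mem_nhds hx))
  obtain ⟨ε, hε, hεV⟩ := Metric.isOpen_iff.1 hV p hpV
  obtain ⟨y, hy1, hy2⟩ := mem_closure_iff.1 hp (ball p (ε/3)) isOpen_ball
    (mem_ball_self (by positivity))
  obtain ⟨q, hq, hqD⟩ := hD.exists_mem_open (isOpen_ball.inter hCo) ⟨y, hy1, hy2⟩
  obtain ⟨r, hr1, hr2⟩ := exists_rat_btwn (show ε/3 < ε/2 by linarith)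
  have hqp := mem_ball.1 hqD.1
  refine ⟨q, hq, r, (hCs hqD.2).2, by linarith, ?_, ?_, ?_⟩
  · intro hs
    exact hpU (hs (by rw [mem_ball, dist_comm]; linarith))
  · exact hg.mono ((ball_subset_ball' (by linarith)).trans hεV)
  · exact (hEq.symm).eventuallyEq_of_mem (hCo.mem_nhds hqD.2)

end aux

/-- A vector-valued map on which all functionals extend, extends itself. -/
lemma aux_vector {E F : Type*} [NormedAddCommGroup E] [NormedSpace ℂ E]
    [NormedAddCommGroup F] [NormedSpace ℂ F] [FiniteDimensional ℂ F] {H : E → F} {q : E} {B : Set E}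
    (h : ∀ l : F →L[ℂ] ℂ, ∃ g : E → ℂ, DifferentiableOn ℂ g B ∧ g =ᶠ[𝓝 q] fun z => l (H z)) :
    ∃ G : E → F, DifferentiableOn ℂ G B ∧ G =ᶠ[𝓝 q] H := by
  let b := Module.finBasis ℂ F
  choose g hg hgH using fun i => h (LinearMap.toContinuousLinearMap (b.coord i))
  refine ⟨fun z => ∑ i, g i z • b i, ?_, ?_⟩
  · exact DifferentiableOn.fun_sum fun i _ => (hg i).smul_const (b i)
  · filter_upwards [eventually_all.2 hgH] with z hz
    simp only [hz]
    simp

/-- The key point: `(ψ, f ∘ ψ, φ' ∘ ψ)` cannot extend to a ball leaving `φ '' U`. -/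
lemma aux_main {n : ℕ} {U : Set (Fin n → ℂ)} (hUo : IsOpen U) {f : (Fin n → ℂ) → ℂ}
    (hf : DifferentiableOn ℂ f U) (hext : ∀ a ∈ Uᶜ, ¬ ExtendsHolomorphicallyTo U f a)
    {φ ψ : (Fin n → ℂ) → (Fin n → ℂ)} (hφ : DifferentiableOn ℂ φ U) (hopen : IsOpen (φ '' U))
    (hψ : DifferentiableOn ℂ ψ (φ '' U)) (hinv : ∀ z ∈ U, ψ (φ z) = z)
    {q : Fin n → ℂ} {r : ℝ} (hq : q ∈ φ '' U) (hr : 0 < r) (hB : ¬ ball q r ⊆ φ '' U)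
    {P : (Fin n → ℂ) → (Fin n → ℂ)} {G : (Fin n → ℂ) → ℂ}
    {A : (Fin n → ℂ) → ((Fin n → ℂ) →L[ℂ] (Fin n → ℂ))}
    (hP : DifferentiableOn ℂ P (ball q r)) (hG : DifferentiableOn ℂ G (ball q r))
    (hA : DifferentiableOn ℂ A (ball q r)) (hPq : P =ᶠ[𝓝 q] ψ)
    (hGq : G =ᶠ[𝓝 q] fun z => f (ψ z)) (hAq : A =ᶠ[𝓝 q] fun z => fderiv ℂ φ (ψ z)) : False := by
  have hinv' : ∀ w ∈ φ '' U, φ (ψ w) = w := by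
    rintro _ ⟨z, hz, rfl⟩
    rw [hinv z hz]
  have hmaps : ∀ w ∈ φ '' U, ψ w ∈ U := by
    rintro _ ⟨z, hz, rfl⟩
    rwa [hinv z hz]
  have hU'q : ∀ᶠ w in 𝓝 q, w ∈ φ '' U := hopen.mem_nhds hq
  have hqB : q ∈ ball q r := mem_ball_self hr
  have hBc : IsPreconnected (ball q r) := (convex_ball q r).isPreconnected
  have hdψ : ∀ w ∈ φ '' U, DifferentiableAt ℂ ψ w := fun w hw =>
    hψ.differentiableAt (hopen.mem_nhds hw)
  have hdφ : ∀ z ∈ U, DifferentiableAt ℂ φ z := fun w hw =>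
    hφ.differentiableAt (hUo.mem_nhds hw)
  -- the derivative of `P` is invertible on the ball
  have hP' : DifferentiableOn ℂ (fderiv ℂ P) (ball q r) := aux_fderiv isOpen_ball hP
  have hPψ' : fderiv ℂ P =ᶠ[𝓝 q] fderiv ℂ ψ := hPq.fderiv
  have hAP : EqOn (fun w => (A w).comp (fderiv ℂ P w)) (fun _ => ContinuousLinearMap.id ℂ _)
      (ball q r) := by
    refine aux_identity_s11 isOpen_ball hBc (hA.clm_comp hP') (differentiableOn_const _) hqB ?_
    filter_upwards [hAq, hPψ', hU'q] with w h1 h2 hw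
    rw [h1, h2, ← fderiv_comp w (hdφ _ (hmaps w hw)) (hdψ w hw)]
    have : φ ∘ ψ =ᶠ[𝓝 w] id := by
      filter_upwards [hopen.mem_nhds hw] with y hy using hinv' y hy
    rw [this.fderiv_eq, fderiv_id]
  have hPA : EqOn (fun w => (fderiv ℂ P w).comp (A w)) (fun _ => ContinuousLinearMap.id ℂ _)
      (ball q r) := by
    refine aux_identity_s11 isOpen_ball hBc (hP'.clm_comp hA) (differentiableOn_const _) hqB ?_
    filter_upwards [hAq, hPψ', hU'q] with w h1 h2 hw
    have h3 : DifferentiableAt ℂ ψ (φ (ψ w)) := by rw [hinv' w hw]; exact hdψ w hw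
    have h4 := fderiv_comp (ψ w) h3 (hdφ _ (hmaps w hw))
    rw [hinv' w hw] at h4
    rw [h1, h2, ← h4]
    have : ψ ∘ φ =ᶠ[𝓝 (ψ w)] id := by
      filter_upwards [hUo.mem_nhds (hmaps w hw)] with y hy using hinv y hy
    rw [this.fderiv_eq, fderiv_id]
  -- the set where `P` lands in `U`
  let S : Set (Fin n → ℂ) := ball q r ∩ P ⁻¹' U
  have hSo : IsOpen S := hP.continuousOn.isOpen_inter_preimage isOpen_ball hUo
  have hPqU : P q ∈ U := by rw [hPq.self_of_nhds]; exact hmaps q hq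
  have hqS : q ∈ S := ⟨hqB, hPqU⟩
  by_cases hBS : ball q r ⊆ S
  · apply hB
    have hid : EqOn (φ ∘ P) id (ball q r) := by
      refine aux_identity_s11 isOpen_ball hBc (hφ.comp hP fun w hw => (hBS hw).2)
        differentiableOn_id hqB ?_
      filter_upwards [hPq, hU'q] with w h1 hw
      simp [h1, hinv' w hw]
    intro w hw
    exact ⟨P w, (hBS hw).2, hid hw⟩
  obtain ⟨p, hpB, hpS, hpC⟩ := aux_bdry isOpen_ball hBc hSo hqB hqS hBS
  set C := connectedComponentIn (ball q r ∩ S) q with hC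
  have hCo : IsOpen C := (isOpen_ball.inter hSo).connectedComponentIn
  have hCs : C ⊆ S := (connectedComponentIn_subset _ _).trans inter_subset_right
  have hCB : C ⊆ ball q r := hCs.trans inter_subset_left
  have hqC : q ∈ C := mem_connectedComponentIn ⟨hqB, hqS⟩
  have hGC : EqOn G (f ∘ P) C := by
    refine aux_identity_s11 hCo isPreconnected_connectedComponentIn (hG.mono hCB)
      (hf.comp (hP.mono hCB) fun w hw => (hCs hw).2) hqC ?_
    filter_upwards [hGq, hPq] with w h1 h2
    simp [h1, h2]
  have hPpU : P p ∈ Uᶜ := fun h => hpS ⟨hpB, h⟩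
  apply hext _ hPpU
  -- local inverse of `P` at `p`
  let e : (Fin n → ℂ) ≃L[ℂ] (Fin n → ℂ) := ContinuousLinearEquiv.equivOfInverse (fderiv ℂ P p) (A p)
    (fun x => by simpa using congrArg (fun T => T x) (hAP hpB))
    (fun x => by simpa using congrArg (fun T => T x) (hPA hpB))
  have hcd : ContDiffAt ℂ 1 P p := by
    have : ContDiffOn ℂ (0 + 1) P (ball q r) :=
      (contDiffOn_succ_iff_fderiv_of_isOpen isOpen_ball).2
        ⟨hP, by simp, contDiffOn_zero.2 hP'.continuousOn⟩
    rw [zero_add] at this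
    exact this.contDiffAt (isOpen_ball.mem_nhds hpB)
  have hde : HasFDerivAt P (e : (Fin n → ℂ) →L[ℂ] (Fin n → ℂ)) p :=
    (hP.differentiableAt (isOpen_ball.mem_nhds hpB)).hasFDerivAt
  have hst := hcd.hasStrictFDerivAt' hde one_ne_zero
  have hs := hcd.to_localInverse hde one_ne_zero
  have hsr : ∀ᶠ y in 𝓝 (P p), P (hcd.localInverse hde one_ne_zero y) = y :=
    hst.eventually_right_inverse
  have hsl : ∀ᶠ y in 𝓝 p, hcd.localInverse hde one_ne_zero (P y) = y :=
    hst.eventually_left_inverse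
  have hst : Tendsto (hcd.localInverse hde one_ne_zero) (𝓝 (P p)) (𝓝 p) :=
    hst.localInverse_tendsto
  generalize hcd.localInverse hde one_ne_zero = s at hs hsr hsl hst
  have hsd : ∀ᶠ y in 𝓝 (P p), DifferentiableAt ℂ s y :=
    (hs.eventually (by simp)).mono fun y hy => hy.differentiableAt one_ne_zero
  have hsB : ∀ᶠ y in 𝓝 (P p), s y ∈ ball q r := hst.eventually (isOpen_ball.mem_nhds hpB)
  obtain ⟨δ, hδ, hall⟩ := Metric.eventually_nhds_iff_ball.1 (hsr.and (hsd.and hsB))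
  have hsD : DifferentiableOn ℂ s (ball (P p) δ) := fun y hy =>
    (hall y hy).2.1.differentiableWithinAt
  refine ⟨ball (P p) δ, isOpen_ball,
    ⟨⟨P p, mem_ball_self hδ⟩, (convex_ball (P p) δ).isPreconnected⟩, mem_ball_self hδ,
    G ∘ s, hG.comp hsD fun y hy => (hall y hy).2.2, ball (P p) δ ∩ s ⁻¹' C,
    hsD.continuousOn.isOpen_inter_preimage isOpen_ball hCo, ?_, ?_, ?_⟩
  · have hPc : ContinuousAt P p := hcd.continuousAt
    have hev : ∀ᶠ y in 𝓝 p, s (P y) = y ∧ P y ∈ ball (P p) δ :=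
      hsl.and (hPc.eventually (ball_mem_nhds _ hδ))
    obtain ⟨y, hyC, hy1, hy2⟩ := ((mem_closure_iff_frequently.1 hpC).and_eventually hev).exists
    exact ⟨P y, hy2, by rw [mem_preimage, hy1]; exact hyC⟩
  · rintro y ⟨hy, hyC⟩
    refine ⟨?_, hy⟩
    have := (hCs hyC).2
    rwa [mem_preimage, (hall y hy).1] at this
  · rintro y ⟨hy, hyC⟩
    have := hGC hyC
    simp only [Function.comp_apply] at this ⊢
    rw [this, (hall y hy).1]

/-- The image of a domain of holomorphy under a biholomorphic map (an injective holomorphic map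
with open image and holomorphic inverse) is a domain of holomorphy. -/
theorem biholomorphic_image_isDomainOfHolomorphy {n : ℕ} (U : Set (Fin n → ℂ))
    (hU : IsDomainOfHolomorphy U)
    (φ : (Fin n → ℂ) → (Fin n → ℂ)) (hφ : DifferentiableOn ℂ φ U)
    (hinj : Set.InjOn φ U) (hopen : IsOpen (φ '' U))
    (ψ : (Fin n → ℂ) → (Fin n → ℂ)) (hψ : DifferentiableOn ℂ ψ (φ '' U))
    (hinv : ∀ z ∈ U, ψ (φ z) = z) :
    IsDomainOfHolomorphy (φ '' U) := by
  obtain ⟨hUo, hUc, f, hf, hext⟩ := hU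
  have hmaps : ∀ w ∈ φ '' U, ψ w ∈ U := by
    rintro _ ⟨z, hz, rfl⟩
    rwa [hinv z hz]
  let H : (Fin n → ℂ) → (Fin n → ℂ) × ℂ × ((Fin n → ℂ) →L[ℂ] (Fin n → ℂ)) :=
    fun w => (ψ w, f (ψ w), fderiv ℂ φ (ψ w))
  have hH : DifferentiableOn ℂ H (φ '' U) :=
    hψ.prodMk ((hf.comp hψ hmaps).prodMk ((aux_fderiv hUo hφ).comp hψ hmaps))
  obtain ⟨D, hDc, hDd⟩ := TopologicalSpace.exists_countable_dense (Fin n → ℂ)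
  let ι := {x : D × ℚ // (x.1 : Fin n → ℂ) ∈ φ '' U ∧ 0 < (x.2 : ℝ) ∧
    ¬ ball (x.1 : Fin n → ℂ) x.2 ⊆ φ '' U}
  have : Countable D := hDc.to_subtype
  have : Countable ι := inferInstance
  let p : ι → Submodule ℂ ((Fin n → ℂ) × ℂ × ((Fin n → ℂ) →L[ℂ] (Fin n → ℂ)) →L[ℂ] ℂ) := fun i =>
    { carrier := {l | ∃ g : (Fin n → ℂ) → ℂ,
        DifferentiableOn ℂ g (ball (i.1.1 : Fin n → ℂ) i.1.2) ∧
        g =ᶠ[𝓝 (i.1.1 : Fin n → ℂ)] fun z => l (H z)}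
      zero_mem' := ⟨fun _ => 0, differentiableOn_const _, by rfl⟩
      add_mem' := by
        rintro l m ⟨g, hg, hgl⟩ ⟨k, hk, hkm⟩
        refine ⟨fun z => g z + k z, hg.add hk, ?_⟩
        filter_upwards [hgl, hkm] with z h1 h2
        simp [h1, h2]
      smul_mem' := by
        rintro c l ⟨g, hg, hgl⟩
        refine ⟨fun z => c • g z, hg.const_smul c, ?_⟩
        filter_upwards [hgl] with z h1
        simp [h1] }
  obtain ⟨l, hl⟩ := aux_baire_s11
      (E := (Fin n → ℂ) × ℂ × ((Fin n → ℂ) →L[ℂ] (Fin n → ℂ)) →L[ℂ] ℂ) p (by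
    intro i hi
    obtain ⟨K, hK, hKH⟩ := aux_vector (H := H) (q := (i.1.1 : Fin n → ℂ))
      (B := ball (i.1.1 : Fin n → ℂ) i.1.2) (fun l => by
        have : l ∈ p i := by rw [hi]; trivial
        exact this)
    refine aux_main hUo hf hext hφ hopen hψ hinv i.2.1 i.2.2.1 i.2.2.2
      (P := fun z => (K z).1) (G := fun z => (K z).2.1) (A := fun z => (K z).2.2)
      hK.fst hK.snd.fst hK.snd.snd ?_ ?_ ?_
    · filter_upwards [hKH] with z hz
      rw [hz]
    · filter_upwards [hKH] with z hz
      rw [hz]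
    · filter_upwards [hKH] with z hz
      rw [hz])
  have hlH : DifferentiableOn ℂ (fun z => l (H z)) (φ '' U) :=
    l.differentiable.comp_differentiableOn hH
  refine ⟨hopen, hUc.image φ hφ.continuousOn, fun z => l (H z), hlH, ?_⟩
  rintro a ha ⟨V, hV, hVc, haV, g, hg, W, hW, hWn, hWU, hEq⟩
  obtain ⟨q, hqD, r, hqU, hr, hB, hgB, hgq⟩ := aux_reduce hopen hlH hV hVc.isPreconnected haV ha hg
    hW hWn hWU hEq hDd
  exact hl ⟨(⟨q, hqD⟩, r), hqU, hr, hB⟩ ⟨g, hgB, hgq⟩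
end
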